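/- Let p ≥ 1 be an integer and a > 2p a real number. Assume (ε_n) is a martingale difference sequence with E[ε_{n+1}² | F_n] = σ² a.s. for all n and sup_{n≥0} E[|ε_{n+1}|^a | F_n] < ∞ a.s. Assume the explosion coefficient f_n tends to zero a.s. and that there exists a positive random sequence (α_n) increasing to infinity and a symmetric positive definite d×d matrix L such that S_n/α_n → L a.s. With β_n = tr(L^{-1/2} S_n L^{-1/2}), γ_n = (β_n − β_{n-1})/β_n, and m_n = β_{n-1}^{-1} M_n^t L^{-1} M_n, one has almost surely lim_{n→∞} (1/log d_n) Σ_{k=1}^n γ_k m_k^p = ℓ(p)/d^{p+1}, where ℓ(p) = d σ^{2p} ∏_{j=1}^{p-1} (d + 2j). -/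

import Mathlib

open MeasureTheory ProbabilityTheory Filter Finset Matrix Topology

noncomputable section

/-- `S_n = S + ∑_{k=0}^n Φ_k Φ_kᵗ`. -/
def Smat {Ω : Type*} {d : ℕ} (S : Matrix (Fin d) (Fin d) ℝ)
    (Φ : ℕ → Ω → Fin d → ℝ) (n : ℕ) (ω : Ω) : Matrix (Fin d) (Fin d) ℝ :=
  S + ∑ k ∈ Finset.range (n + 1), vecMulVec (Φ k ω) (Φ k ω)

/-- The explosion coefficient `f_n = Φ_nᵗ S_n⁻¹ Φ_n`. -/
def expl {Ω : Type*} {d : ℕ} (S : Matrix (Fin d) (Fin d) ℝ)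
    (Φ : ℕ → Ω → Fin d → ℝ) (n : ℕ) (ω : Ω) : ℝ :=
  Φ n ω ⬝ᵥ ((Smat S Φ n ω)⁻¹ *ᵥ Φ n ω)

/-- The vector martingale transform `M_n = M_0 + ∑_{k=1}^n Φ_{k-1} ε_k`. -/
def Mart {Ω : Type*} {d : ℕ} (M0 : Ω → Fin d → ℝ) (Φ : ℕ → Ω → Fin d → ℝ)
    (ε : ℕ → Ω → ℝ) (n : ℕ) (ω : Ω) : Fin d → ℝ :=
  M0 ω + ∑ k ∈ Finset.range n, ε (k + 1) ω • Φ k ω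

/-- `ℓ(p) = d σ^{2p} ∏_{j=1}^{p-1} (d + 2j)`. -/
def elllim (d p : ℕ) (σ : ℝ) : ℝ :=
  (d : ℝ) * σ ^ (2 * p) * ∏ j ∈ Finset.Icc 1 (p - 1), ((d : ℝ) + 2 * (j : ℝ))

section

lemma aux_exp_quad (x Q : ℝ) (hx : |x| ≤ Q) : Real.exp x ≤ 1 + x + x ^ 2 * Real.exp Q := by
  have h := Complex.norm_exp_sub_sum_le_norm_mul_exp (x : ℂ) 2
  have e1 : Complex.exp (x:ℂ) - ∑ m ∈ range 2, (x:ℂ) ^ m / (m.factorial : ℂ)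
      = ((Real.exp x - (1 + x) : ℝ) : ℂ) := by
    simp [Finset.sum_range_succ]
  rw [e1, Complex.norm_real, Complex.norm_real, Real.norm_eq_abs, Real.norm_eq_abs, sq_abs] at h
  have h2 : Real.exp |x| ≤ Real.exp Q := Real.exp_le_exp.mpr hx
  have h3 := mul_le_mul_of_nonneg_left h2 (sq_nonneg x)
  have h4 := le_abs_self (Real.exp x - (1+x))
  linarith

lemma aux_one_add_rpow (q t : ℝ) (hq : 0 < q) (ht : |t| ≤ 1) :
    (1 + t) ^ q ≤ 1 + q * t + (q ^ 2 * Real.exp q) * t ^ 2 := by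
  have h0 : 0 ≤ 1 + t := by linarith [(abs_le.mp ht).1]
  have h1 : (1 + t) ^ q ≤ Real.exp (q * t) := by
    rw [mul_comm, Real.exp_mul]
    exact Real.rpow_le_rpow h0 (by linarith [Real.add_one_le_exp t]) hq.le
  have h2 := aux_exp_quad (q * t) q (by
    rw [abs_mul, abs_of_pos hq]; nlinarith)
  nlinarith

lemma aux_RT1 (q : ℝ) (hq : 0 < q) : ∃ C : ℝ, 0 ≤ C ∧ ∀ s B w : ℝ, 0 ≤ w → 4 * w < s →
    |B| ≤ s * w →
    (s ^ 2 + 2 * B + w ^ 2) ^ q ≤ (s ^ 2) ^ q + 2 * q * B * (s ^ 2) ^ (q - 1)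
      + C * ((s ^ 2) ^ (q - 1) * w ^ 2) := by
  refine ⟨q + (q ^ 2 * Real.exp q) * 6, by positivity, ?_⟩
  intro s B w hw hs hB
  have hs0 : 0 < s := by linarith
  set V := s ^ 2 with hV
  have hV0 : 0 < V := by positivity
  obtain ⟨hB1, hB2⟩ := abs_le.mp hB
  set t := (2 * B + w ^ 2) / V with ht
  have htV : V * t = 2 * B + w ^ 2 := by rw [ht]; field_simp
  have habs : |2 * B + w ^ 2| ≤ (9/4) * (s * w) := by
    rw [abs_le]; constructor <;> nlinarith
  have ht1 : |t| ≤ 1 := by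
    rw [ht, abs_div, abs_of_pos hV0, div_le_one hV0]
    nlinarith
  have ht2 : V * t ^ 2 ≤ 6 * w ^ 2 := by
    have : (V * t) ^ 2 ≤ ((9/4) * (s * w)) ^ 2 := by
      rw [htV]; exact sq_le_sq' (by linarith [(abs_le.mp habs).1]) (abs_le.mp habs).2
    have h2 : V * (V * t ^ 2) ≤ V * (6 * w ^ 2) := by
      have : ((9/4) * (s * w)) ^ 2 = (81/16) * (V * w ^ 2) := by rw [hV]; ring
      nlinarith [mul_nonneg hV0.le (sq_nonneg w)]
    exact le_of_mul_le_mul_left h2 hV0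
  have e1 : V + 2 * B + w ^ 2 = V * (1 + t) := by rw [mul_add, htV]; ring
  have h1t : 0 ≤ 1 + t := by linarith [(abs_le.mp ht1).1]
  rw [e1, Real.mul_rpow hV0.le h1t]
  have hb := aux_one_add_rpow q t hq ht1
  have eV : V ^ q = V ^ (q - 1) * V := by
    conv_rhs => rw [← Real.rpow_one V, ← Real.rpow_mul hV0.le, one_mul]
    rw [← Real.rpow_add hV0]; ring_nf
  have hVq : 0 ≤ V ^ (q-1) := by positivity
  have hVq0 : 0 ≤ V ^ q := by positivity
  have hqe : 0 ≤ q ^ 2 * Real.exp q := by positivity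
  calc V ^ q * (1 + t) ^ q ≤ V ^ q * (1 + q * t + (q ^ 2 * Real.exp q) * t ^ 2) :=
        mul_le_mul_of_nonneg_left hb hVq0
    _ = V ^ q + q * V ^ (q-1) * (V * t) + (q ^ 2 * Real.exp q) * V ^ (q-1) * (V * t ^ 2) := by
        rw [eV]; ring
    _ ≤ V ^ q + q * V ^ (q-1) * (V * t) + (q ^ 2 * Real.exp q) * V ^ (q-1) * (6 * w ^ 2) := by
        have := mul_le_mul_of_nonneg_left ht2 (mul_nonneg hqe hVq)
        linarith
    _ = _ := by rw [htV]; ring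

lemma aux_RT2 (q : ℝ) (hq : 1/2 < q) : ∃ C : ℝ, 0 ≤ C ∧ ∀ s B w : ℝ, 0 ≤ w → 0 ≤ s → s ≤ 4 * w →
    |B| ≤ s * w →
    (s ^ 2 + 2 * B + w ^ 2) ^ q ≤ (s ^ 2) ^ q + 2 * q * B * (s ^ 2) ^ (q - 1)
      + C * (w ^ 2) ^ q := by
  refine ⟨(25:ℝ) ^ q + 2 * q * 4 ^ (2 * q - 1), by positivity, ?_⟩
  intro s B w hw hs0 hs hB
  obtain ⟨hB1, hB2⟩ := abs_le.mp hB
  have hpos : 0 ≤ s ^ 2 + 2 * B + w ^ 2 := by nlinarith [sq_nonneg (s - w)]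
  have h1 : (s ^ 2 + 2 * B + w ^ 2) ^ q ≤ (25:ℝ) ^ q * (w ^ 2) ^ q := by
    rw [← Real.mul_rpow (by norm_num) (by positivity)]
    exact Real.rpow_le_rpow hpos (by nlinarith) (by linarith)
  have h2 : |B * (s ^ 2) ^ (q - 1)| ≤ 4 ^ (2 * q - 1) * (w ^ 2) ^ q := by
    rcases hs0.eq_or_lt with h | h
    · have : B = 0 := by rw [← h] at hB; simpa using hB
      rw [this]; simp; positivity
    · have hw0 : 0 < w := by linarith
      rw [abs_mul, abs_of_nonneg (a := (s^2) ^ (q-1)) (by positivity)]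
      have e1 : (s ^ 2) ^ (q - 1) = s ^ (2 * q - 2) := by
        rw [← Real.rpow_natCast, ← Real.rpow_mul hs0]; congr 1; push_cast; ring
      have e2 : (w ^ 2) ^ q = w ^ (2 * q - 1) * w := by
        rw [← Real.rpow_natCast, ← Real.rpow_mul hw]
        conv_rhs => rw [← Real.rpow_one w, ← Real.rpow_mul hw, one_mul]
        rw [← Real.rpow_add hw0]; congr 1; push_cast; ring
      have e3 : s ^ (2 * q - 1) = s * s ^ (2 * q - 2) := by
        conv_rhs => rw [← Real.rpow_one s, ← Real.rpow_mul hs0, one_mul]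
        rw [← Real.rpow_add h]; ring_nf
      have e4 : s ^ (2 * q - 1) ≤ 4 ^ (2*q-1) * w ^ (2*q-1) := by
        rw [← Real.mul_rpow (by norm_num) hw]
        exact Real.rpow_le_rpow hs0 hs (by linarith)
      rw [e1, e2]
      have : 0 ≤ s ^ (2 * q - 2) := by positivity
      calc |B| * s ^ (2*q-2) ≤ (s * w) * s ^ (2*q-2) := mul_le_mul_of_nonneg_right hB this
        _ = s ^ (2*q-1) * w := by rw [e3]; ring
        _ ≤ (4 ^ (2*q-1) * w ^ (2*q-1)) * w := mul_le_mul_of_nonneg_right e4 hw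
        _ = _ := by ring
  have h3 := (abs_le.mp h2).1
  have h4 : 0 ≤ (s ^ 2) ^ q := by positivity
  have h5 := mul_le_mul_of_nonneg_left h3 (show 0 ≤ 2 * q by linarith)
  nlinarith

/-- `2q ≥ 2` version. -/
lemma aux_RTbig (q : ℝ) (hq : 1 ≤ q) : ∃ C : ℝ, 0 ≤ C ∧ ∀ s B w : ℝ, 0 ≤ w → 0 ≤ s →
    |B| ≤ s * w →
    (s ^ 2 + 2 * B + w ^ 2) ^ q ≤ (s ^ 2) ^ q + 2 * q * B * (s ^ 2) ^ (q - 1)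
      + C * ((s ^ 2) ^ (q - 1) * w ^ 2 + (w ^ 2) ^ q) := by
  obtain ⟨C1, h1, H1⟩ := aux_RT1 q (by linarith)
  obtain ⟨C2, h2, H2⟩ := aux_RT2 q (by linarith)
  refine ⟨C1 + C2, by positivity, fun s B w hw hs hB => ?_⟩
  have p1 : 0 ≤ (s ^ 2) ^ (q - 1) * w ^ 2 := by positivity
  have p2 : 0 ≤ (w ^ 2) ^ q := by positivity
  rcases lt_or_ge (4 * w) s with h | h
  · have := H1 s B w hw h hB
    nlinarith [mul_nonneg h2 p1, mul_nonneg h1 p2, mul_nonneg h2 p2]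
  · have := H2 s B w hw hs h hB
    nlinarith [mul_nonneg h2 p1, mul_nonneg h1 p2, mul_nonneg h1 p1]

/-- von Bahr--Esseen type inequality. -/
lemma aux_vBE (r : ℝ) (hr : 1 < r) (hr2 : r ≤ 2) : ∃ C : ℝ, 0 ≤ C ∧ ∀ x y : ℝ,
    |x + y| ^ r ≤ |x| ^ r + r * (x * (x ^ 2) ^ (r / 2 - 1)) * y + C * |y| ^ r := by
  obtain ⟨C1, h1, H1⟩ := aux_RT1 (r/2) (by linarith)
  obtain ⟨C2, h2, H2⟩ := aux_RT2 (r/2) (by linarith)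
  refine ⟨C1 + C2, by positivity, fun x y => ?_⟩
  have e (z : ℝ) : |z| ^ r = (z ^ 2) ^ (r / 2) := by
    rw [← sq_abs, ← Real.rpow_natCast, ← Real.rpow_mul (abs_nonneg z)]; congr 1; push_cast; ring
  have hB : |x * y| ≤ |x| * |y| := (abs_mul x y).le
  have hy : 0 ≤ (y ^ 2) ^ (r / 2) := by positivity
  rw [e, e, e]
  have e2 : (x + y) ^ 2 = |x| ^ 2 + 2 * (x * y) + |y| ^ 2 := by rw [sq_abs, sq_abs]; ring
  rw [e2]
  rcases lt_or_ge (4 * |y|) |x| with h | h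
  · have := H1 |x| (x*y) |y| (abs_nonneg y) h hB
    have hx0 : 0 < |x| := by linarith [abs_nonneg y]
    have key : (|x| ^ 2) ^ (r/2 - 1) * |y| ^ 2 ≤ (y ^ 2) ^ (r / 2) := by
      rcases (abs_nonneg y).eq_or_lt with h0 | h0
      · rw [← h0]; simp [hy]
      · have : (|x| ^ 2) ^ (r/2 - 1) ≤ (|y| ^ 2) ^ (r/2 - 1) := by
          apply Real.rpow_le_rpow_of_nonpos (by positivity) _ (by linarith)
          exact pow_le_pow_left₀ h0.le (by linarith) 2
        have e3 : (|y| ^ 2) ^ (r / 2) = (|y| ^ 2) ^ (r/2 - 1) * |y| ^ 2 := by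
          conv_rhs => rw [← Real.rpow_one (|y|^2), ← Real.rpow_mul (by positivity), one_mul]
          rw [← Real.rpow_add (by positivity)]; ring_nf
        rw [← sq_abs y, e3]
        exact mul_le_mul_of_nonneg_right this (by positivity)
    have k2 := mul_le_mul_of_nonneg_left key h1
    rw [sq_abs] at *
    nlinarith [mul_nonneg h2 hy]
  · have := H2 |x| (x*y) |y| (abs_nonneg y) (abs_nonneg x) h hB
    rw [sq_abs] at *
    rw [sq_abs] at *
    nlinarith [mul_nonneg h1 hy]

lemma aux_young (q δ x : ℝ) (hq : 1 < q) (hδ : 0 < δ) (hx : 0 ≤ x) :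
    x ^ (q - 1) ≤ δ * x ^ q + (1 / δ) ^ (q - 1) := by
  rcases lt_or_ge x (1/δ) with h | h
  · have h1 : x ^ (q-1) ≤ (1/δ) ^ (q-1) := Real.rpow_le_rpow hx h.le (by linarith)
    have : 0 ≤ δ * x ^ q := by positivity
    linarith
  · have hx0 : 0 < x := lt_of_lt_of_le (by positivity) h
    have e : x ^ q = x ^ (q-1) * x := by
      conv_rhs => rw [← Real.rpow_one x, ← Real.rpow_mul hx, one_mul]
      rw [← Real.rpow_add hx0]; ring_nf
    have h1 : 1 ≤ δ * x := by rw [div_le_iff₀ hδ] at h; linarith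
    have h2 : 0 ≤ x ^ (q-1) := by positivity
    have h3 : 0 ≤ (1 / δ) ^ (q - 1) := by positivity
    rw [e]; nlinarith

lemma aux_rpow_le_one_add (x u v : ℝ) (hx : 0 ≤ x) (hu : 0 ≤ u) (huv : u ≤ v) :
    x ^ u ≤ 1 + x ^ v := by
  rcases le_or_gt x 1 with h | h
  · have := Real.rpow_le_one hx h hu
    have : 0 ≤ x ^ v := by positivity
    linarith
  · have := Real.rpow_le_rpow_of_exponent_le h.le huv
    linarith

lemma aux_pow_le_one_add (x : ℝ) (u v : ℕ) (hx : 0 ≤ x) (huv : u ≤ v) :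
    x ^ u ≤ 1 + x ^ v := by
  rcases le_or_gt x 1 with h | h
  · have := pow_le_one₀ hx h (n := u)
    have : 0 ≤ x ^ v := by positivity
    linarith
  · have := pow_le_pow_right₀ h.le huv
    linarith

lemma aux_rpow_add_le (r x y : ℝ) (hr : 0 ≤ r) (hx : 0 ≤ x) (hy : 0 ≤ y) :
    (x + y) ^ r ≤ 2 ^ r * (x ^ r + y ^ r) := by
  have h : x + y ≤ 2 * max x y := by
    have := le_max_left x y; have := le_max_right x y; linarith
  have h0 : 0 ≤ max x y := le_trans hx (le_max_left _ _)
  calc (x+y) ^ r ≤ (2 * max x y) ^ r := Real.rpow_le_rpow (by positivity) h hr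
    _ = 2 ^ r * (max x y) ^ r := Real.mul_rpow (by norm_num) h0
    _ ≤ _ := by
      apply mul_le_mul_of_nonneg_left _ (by positivity)
      have := Real.rpow_nonneg hx r
      have := Real.rpow_nonneg hy r
      rcases max_cases x y with ⟨h, _⟩ | ⟨h, _⟩ <;> rw [h] <;> linarith

lemma aux_poly3 (n : ℕ) : ∃ C : ℝ, 0 ≤ C ∧ ∀ s B w : ℝ, 0 ≤ s → 0 ≤ w → |B| ≤ s * w →
    |(s ^ 2 + 2 * B + w ^ 2) ^ (n + 2) - (s ^ 2) ^ (n + 2) - 2 * (n + 2) * B * (s ^ 2) ^ (n + 1)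
      - (n + 2) * (w ^ 2 * (s ^ 2) ^ (n + 1) + 2 * (n + 1) * B ^ 2 * (s ^ 2) ^ n)|
      ≤ C * (w ^ 3 * (s + w) ^ (2 * n + 1)) := by
  induction n with
  | zero =>
    refine ⟨4, by norm_num, fun s B w hs hw hB => ?_⟩
    have e : (s ^ 2 + 2 * B + w ^ 2) ^ (0 + 2) - (s ^ 2) ^ (0 + 2)
      - 2 * (((0:ℕ):ℝ) + 2) * B * (s ^ 2) ^ (0 + 1)
      - (((0:ℕ):ℝ) + 2) * (w ^ 2 * (s ^ 2) ^ (0 + 1) + 2 * (((0:ℕ):ℝ) + 1) * B ^ 2 * (s ^ 2) ^ 0)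
      = w ^ 4 + 4 * B * w ^ 2 := by push_cast; ring
    rw [e]
    calc |w ^ 4 + 4 * B * w ^ 2| ≤ |w ^ 4| + |4 * B * w ^ 2| := abs_add_le _ _
      _ = w ^ 4 + 4 * |B| * w ^ 2 := by
        rw [abs_of_nonneg (by positivity : 0 ≤ w ^ 4), abs_mul, abs_mul,
          abs_of_nonneg (by positivity : 0 ≤ w ^ 2)]; norm_num
      _ ≤ w ^ 4 + 4 * (s * w) * w ^ 2 := by gcongr
      _ ≤ _ := by
        have : 0 ≤ w ^ 4 := by positivity
        ring_nf; nlinarith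
  | succ n ih =>
    obtain ⟨C, hC, H⟩ := ih
    refine ⟨C + 2 * (n + 2) + 3 * (n + 2) * (2 * n + 3), by positivity, fun s B w hs hw hB => ?_⟩
    have h := H s B w hs hw hB
    set R := (s ^ 2 + 2 * B + w ^ 2) ^ (n + 2) - (s ^ 2) ^ (n + 2)
      - 2 * (n + 2) * B * (s ^ 2) ^ (n + 1)
      - (n + 2) * (w ^ 2 * (s ^ 2) ^ (n + 1) + 2 * (n + 1) * B ^ 2 * (s ^ 2) ^ n) with hR
    have e : (s ^ 2 + 2 * B + w ^ 2) ^ (n + 1 + 2) - (s ^ 2) ^ (n + 1 + 2)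
      - 2 * (((n+1:ℕ):ℝ) + 2) * B * (s ^ 2) ^ (n + 1 + 1)
      - (((n+1:ℕ):ℝ) + 2) * (w ^ 2 * (s ^ 2) ^ (n + 1 + 1)
        + 2 * (((n+1:ℕ):ℝ) + 1) * B ^ 2 * (s ^ 2) ^ (n + 1))
      = (s ^ 2 + 2 * B + w ^ 2) * R + 2 * (n + 2) * B * (s ^ 2) ^ (n + 1) * w ^ 2
        + (n + 2) * (w ^ 2 * (s ^ 2) ^ (n + 1) + 2 * (n + 1) * B ^ 2 * (s ^ 2) ^ n)
          * (2 * B + w ^ 2) := by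
      rw [hR]; push_cast; ring
    rw [e]
    set y := s + w with hy
    have hsy : s ≤ y := by linarith
    have hwy : w ≤ y := by linarith
    have hy0 : 0 ≤ y := by linarith
    obtain ⟨hB1, hB2⟩ := abs_le.mp hB
    have t1 : |s ^ 2 + 2 * B + w ^ 2| ≤ y ^ 2 := by
      rw [abs_le, hy]; constructor <;> nlinarith [sq_nonneg (s-w)]
    have t2 : |2 * B + w ^ 2| ≤ 3 * (w * y) := by
      rw [abs_le, hy]; constructor <;> nlinarith [mul_nonneg hs hw, sq_nonneg w]
    have hsn (k : ℕ) : (s ^ 2) ^ k ≤ y ^ (2 * k) := by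
      rw [← pow_mul]; exact pow_le_pow_left₀ hs hsy _
    have hBy : |B| ≤ w * y := hB.trans (by nlinarith)
    have a1 : |(s ^ 2 + 2 * B + w ^ 2) * R| ≤ C * (w ^ 3 * y ^ (2 * n + 3)) := by
      rw [abs_mul]
      calc _ ≤ y ^ 2 * (C * (w ^ 3 * y ^ (2 * n + 1))) := by gcongr
        _ = _ := by ring
    have a2 : |2 * (n + 2) * B * (s ^ 2) ^ (n + 1) * w ^ 2|
        ≤ 2 * (n + 2) * (w ^ 3 * y ^ (2 * n + 3)) := by
      rw [abs_mul, abs_mul, abs_mul, abs_of_nonneg (by positivity : (0:ℝ) ≤ 2 * (n+2)),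
        abs_of_nonneg (by positivity : 0 ≤ (s ^ 2) ^ (n+1)),
        abs_of_nonneg (by positivity : 0 ≤ w ^ 2)]
      calc _ ≤ 2 * (n+2) * (w * y) * y ^ (2 * (n+1)) * w ^ 2 := by
            gcongr; exact hsn _
        _ = _ := by ring
    have a3 : |(n + 2) * (w ^ 2 * (s ^ 2) ^ (n + 1) + 2 * (n + 1) * B ^ 2 * (s ^ 2) ^ n)
          * (2 * B + w ^ 2)| ≤ 3 * (n + 2) * (2 * n + 3) * (w ^ 3 * y ^ (2 * n + 3)) := by
      rw [abs_mul, abs_of_nonneg (by positivity : (0:ℝ) ≤ (n + 2) * (w ^ 2 * (s ^ 2) ^ (n + 1)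
        + 2 * (n + 1) * B ^ 2 * (s ^ 2) ^ n))]
      have hB2' : B ^ 2 ≤ (w * y) ^ 2 := by rw [← sq_abs]; gcongr
      calc _ ≤ (n + 2) * (w ^ 2 * y ^ (2 * (n + 1)) + 2 * (n + 1) * (w * y) ^ 2 * y ^ (2 * n))
            * (3 * (w * y)) := by
            gcongr
            · exact hsn _
            · exact hsn _
        _ = _ := by ring
    calc _ ≤ _ := (abs_add_le _ _).trans (add_le_add_left (abs_add_le _ _) _)
      _ ≤ C * (w ^ 3 * y ^ (2 * n + 3)) + 2 * (n + 2) * (w ^ 3 * y ^ (2 * n + 3))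
          + 3 * (n + 2) * (2 * n + 3) * (w ^ 3 * y ^ (2 * n + 3)) := by
          gcongr
      _ = _ := by ring

set_option maxHeartbeats 1000000 in
lemma aux_polyG (n : ℕ) : ∃ C : ℝ, 0 ≤ C ∧ ∀ s B w e Q0 Q1 Q2 : ℝ, 0 ≤ s → 0 ≤ w → 0 ≤ e →
    |B| ≤ s * w → |Q0| ≤ e * s ^ 2 → |Q1| ≤ 2 * e * (s * w) → |Q2| ≤ e * w ^ 2 →
    |(s ^ 2 + 2 * B + w ^ 2) ^ n * (Q0 + Q1 + Q2) - (s ^ 2) ^ n * Q0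
      - ((s ^ 2) ^ n * Q1 + 2 * n * B * (s ^ 2) ^ (n - 1) * Q0)|
      ≤ C * e * (w ^ 2 * (s + w) ^ (2 * n)) := by
  induction n with
  | zero =>
    refine ⟨1, by norm_num, fun s B w e Q0 Q1 Q2 hs hw he hB h0 h1 h2 => ?_⟩
    simp; ring_nf; ring_nf at h2; exact h2
  | succ n ih =>
    obtain ⟨C, hC, H⟩ := ih
    refine ⟨C + (3 * (2 + 2 * n) + 1), by positivity, fun s B w e Q0 Q1 Q2 hs hw he hB h0 h1 h2 => ?_⟩
    have h := H s B w e Q0 Q1 Q2 hs hw he hB h0 h1 h2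
    set D := ((s ^ 2) ^ n * Q1 + 2 * n * B * (s ^ 2) ^ (n - 1) * Q0) with hD
    set R := (s ^ 2 + 2 * B + w ^ 2) ^ n * (Q0 + Q1 + Q2) - (s ^ 2) ^ n * Q0 - D with hR
    have hnn : (n:ℝ) * ((s ^ 2) ^ (n - 1) * s ^ 2) = n * (s ^ 2) ^ n := by
      rcases n with _ | k
      · simp
      · simp [pow_succ]
    have e1 : (s ^ 2 + 2 * B + w ^ 2) ^ (n + 1) * (Q0 + Q1 + Q2) - (s ^ 2) ^ (n + 1) * Q0
      - ((s ^ 2) ^ (n + 1) * Q1 + 2 * ((n + 1 : ℕ) : ℝ) * B * (s ^ 2) ^ (n + 1 - 1) * Q0)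
      = (s ^ 2 + 2 * B + w ^ 2) * R + (2 * B + w ^ 2) * D + w ^ 2 * ((s ^ 2) ^ n * Q0) := by
      have : (s ^ 2 + 2 * B + w ^ 2) * R = (s ^ 2 + 2 * B + w ^ 2) ^ (n + 1) * (Q0 + Q1 + Q2)
        - (s ^ 2 + 2 * B + w ^ 2) * ((s ^ 2) ^ n * Q0) - (s ^ 2 + 2 * B + w ^ 2) * D := by
        rw [hR]; ring
      rw [this]
      have hs2D : s ^ 2 * D = (s ^ 2) ^ (n+1) * Q1 + 2 * B * (n * (s ^ 2) ^ n) * Q0 := by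
        rw [← hnn, hD]; ring
      have : (s ^ 2 + 2 * B + w ^ 2) * D = s ^ 2 * D + (2 * B + w ^ 2) * D := by ring
      rw [this, hs2D]
      push_cast
      ring
    rw [e1]
    set y := s + w with hy
    have hsy : s ≤ y := by linarith
    have hwy : w ≤ y := by linarith
    have hy0 : 0 ≤ y := by linarith
    obtain ⟨hB1, hB2⟩ := abs_le.mp hB
    have t1 : |s ^ 2 + 2 * B + w ^ 2| ≤ y ^ 2 := by
      rw [abs_le, hy]; constructor <;> nlinarith [sq_nonneg (s-w)]
    have t2 : |2 * B + w ^ 2| ≤ 3 * (w * y) := by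
      rw [abs_le, hy]; constructor <;> nlinarith [mul_nonneg hs hw, sq_nonneg w]
    have hsn (k : ℕ) : (s ^ 2) ^ k ≤ y ^ (2 * k) := by
      rw [← pow_mul]; exact pow_le_pow_left₀ hs hsy _
    have hBy : |B| ≤ w * y := hB.trans (by nlinarith)
    have hQ1 : |Q1| ≤ 2 * e * (w * y) := by
      have hsw : s * w ≤ w * y := by nlinarith
      exact h1.trans (mul_le_mul_of_nonneg_left hsw (by positivity))
    have hQ0 : |Q0| ≤ e * y ^ 2 := h0.trans (by gcongr)
    have bD : |D| ≤ (2 + 2 * n) * e * (w * y ^ (2 * n + 1)) := by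
      have b1 : |(s ^ 2) ^ n * Q1| ≤ y ^ (2 * n) * (2 * e * (w * y)) := by
        rw [abs_mul, abs_of_nonneg (by positivity : 0 ≤ (s ^ 2) ^ n)]
        gcongr; exact hsn _
      have b2 : |2 * n * B * (s ^ 2) ^ (n - 1) * Q0| ≤ 2 * n * e * (w * y ^ (2 * n + 1)) := by
        rcases n with _ | k
        · simp
        · rw [abs_mul, abs_mul, abs_mul, abs_of_nonneg (by positivity : (0:ℝ) ≤ 2 * (k+1:ℕ)),
            abs_of_nonneg (by positivity : 0 ≤ (s ^ 2) ^ (k+1-1))]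
          calc _ ≤ 2 * ((k+1:ℕ):ℝ) * (w * y) * y ^ (2 * k) * (e * y ^ 2) := by
                gcongr; exact hsn _
            _ = _ := by ring
      rw [hD]
      calc _ ≤ _ := abs_add_le _ _
        _ ≤ _ := add_le_add b1 b2
        _ = _ := by ring
    have a1 : |(s ^ 2 + 2 * B + w ^ 2) * R| ≤ y ^ 2 * (C * e * (w ^ 2 * y ^ (2 * n))) := by
      rw [abs_mul]; gcongr
    have a2 : |(2 * B + w ^ 2) * D| ≤ 3 * (w * y) * ((2 + 2 * n) * e * (w * y ^ (2 * n + 1))) := by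
      rw [abs_mul]; gcongr
    have a3 : |w ^ 2 * ((s ^ 2) ^ n * Q0)| ≤ w ^ 2 * (y ^ (2 * n) * (e * y ^ 2)) := by
      rw [abs_mul, abs_mul, abs_of_nonneg (by positivity : 0 ≤ w ^ 2),
        abs_of_nonneg (by positivity : 0 ≤ (s ^ 2) ^ n)]
      gcongr; exact hsn _
    calc _ ≤ _ := (abs_add_le _ _).trans (add_le_add_left (abs_add_le _ _) _)
      _ ≤ y ^ 2 * (C * e * (w ^ 2 * y ^ (2 * n)))
        + 3 * (w * y) * ((2 + 2 * n) * e * (w * y ^ (2 * n + 1)))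
        + w ^ 2 * (y ^ (2 * n) * (e * y ^ 2)) := by gcongr
      _ = _ := by ring

end

section

/-- Sum of the weights, plus one. -/
def Aseq (γ : ℕ → ℝ) (n : ℕ) : ℝ := 1 + ∑ k ∈ range n, γ k

lemma Aseq_succ (γ : ℕ → ℝ) (n : ℕ) : Aseq γ (n+1) = Aseq γ n + γ n := by
  simp [Aseq, sum_range_succ]; ring

lemma Aseq_ge (γ : ℕ → ℝ) (h : ∀ k, 0 ≤ γ k) (n : ℕ) : 1 ≤ Aseq γ n := by
  unfold Aseq; linarith [sum_nonneg (fun k (_ : k ∈ range n) => h k)]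

lemma Aseq_mono (γ : ℕ → ℝ) (h : ∀ k, 0 ≤ γ k) : Monotone (Aseq γ) :=
  monotone_nat_of_le_succ (fun n => by rw [Aseq_succ]; linarith [h n])

open Asymptotics in
lemma aux_inc (A : ℕ → ℝ) (hm : Monotone A) (hA : Tendsto A atTop atTop) (θ w : ℕ → ℝ)
    (hθ : Tendsto θ atTop (𝓝 0)) (hw : ∀ k, 0 ≤ w k)
    (hO : (fun n => ∑ k ∈ range n, w k) =O[atTop] A) :
    (fun n => ∑ k ∈ range n, θ k * w k) =o[atTop] A := by
  have hg : ∀ k, 0 ≤ w k + (A (k+1) - A k) := fun k => by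
    have := hm (Nat.le_succ k); have := hw k; simp at *; linarith
  have hs : ∀ n, ∑ k ∈ range n, (w k + (A (k+1) - A k)) = ∑ k ∈ range n, w k + (A n - A 0) := by
    intro n; rw [sum_add_distrib, sum_range_sub]
  have hlo : (fun k => θ k * w k) =o[atTop] (fun k => w k + (A (k+1) - A k)) := by
    have h1 : (fun k => θ k * w k) =o[atTop] (fun k => (1:ℝ) * w k) := by
      apply IsLittleO.mul_isBigO ((isLittleO_one_iff ℝ).mpr hθ) (isBigO_refl _ _)
    refine h1.trans_isBigO (IsBigO.of_bound 1 (Eventually.of_forall fun k => ?_))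
    have := hm (Nat.le_succ k); have := hw k
    rw [Real.norm_of_nonneg (by simpa using hw k), Real.norm_of_nonneg (hg k)]
    simp at *; linarith
  have h2 := hlo.sum_range hg (by
    simp_rw [hs]
    apply tendsto_atTop_mono (f := fun n => A n - A 0)
    · intro n; have := sum_nonneg (fun k (_ : k ∈ range n) => hw k); linarith
    · exact tendsto_atTop_add_const_right _ _ hA)
  refine h2.trans_isBigO ?_
  simp_rw [hs]
  refine hO.add ((isBigO_refl A _).sub ?_)
  refine (IsLittleO.isBigO ?_)
  rw [isLittleO_const_left]
  right
  exact tendsto_norm_atTop_atTop.comp hA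

open Asymptotics in
lemma const_isLittleO (A : ℕ → ℝ) (hA : Tendsto A atTop atTop) (c : ℝ) :
    (fun _ : ℕ => c) =o[atTop] A := by
  rw [isLittleO_const_left]
  right
  exact tendsto_norm_atTop_atTop.comp hA

open Asymptotics in
lemma aux_kron (A : ℕ → ℝ) (hm : Monotone A) (hpos : ∀ n, 0 < A n) (hA : Tendsto A atTop atTop)
    (a : ℕ → ℝ) (h : ∃ l, Tendsto (fun n => ∑ k ∈ range n, a k / A (k+1)) atTop (𝓝 l)) :
    (fun n => ∑ k ∈ range n, a k) =o[atTop] A := by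
  obtain ⟨l, hl⟩ := h
  set s : ℕ → ℝ := fun n => ∑ k ∈ range n, a k / A (k+1) - l with hs
  have hs0 : Tendsto s atTop (𝓝 0) := by
    have := hl.sub_const l; simpa [hs] using this
  have e : ∀ n, ∑ k ∈ range n, a k = A n * s n - A 0 * s 0
      - ∑ k ∈ range n, s k * (A (k+1) - A k) := by
    intro n
    induction n with
    | zero => simp
    | succ n ih =>
      have : a n = A (n+1) * (s (n+1) - s n) := by
        have := (hpos (n+1)).ne'
        simp only [hs, sum_range_succ]; field_simp; ring
      rw [sum_range_succ, ih, sum_range_succ, this]; ring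
  have h1 : (fun n => A n * s n) =o[atTop] A := by
    have := (isBigO_refl A atTop).mul_isLittleO ((isLittleO_one_iff ℝ).mpr hs0)
    simpa using this
  have h2 := const_isLittleO A hA (A 0 * s 0)
  have h3 := aux_inc A hm hA s (fun k => A (k+1) - A k) hs0
    (fun k => sub_nonneg.mpr (hm (Nat.le_succ k))) (by
      simp_rw [sum_range_sub]
      exact (isBigO_refl A _).sub (const_isLittleO A hA _).isBigO)
  refine ((h1.sub h2).sub h3).congr_left (fun n => (e n).symm)

lemma aux_sumA (γ : ℕ → ℝ) (h : ∀ k, 0 ≤ γ k) (r : ℝ) (hr : 1 < r) (n : ℕ) :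
    ∑ k ∈ range n, γ k / (Aseq γ (k+1)) ^ r ≤ 1 / (r - 1) := by
  have key : ∀ k, γ k / (Aseq γ (k+1)) ^ r ≤
      (1/(r-1)) * ((Aseq γ k) ^ (1 - r) - (Aseq γ (k+1)) ^ (1 - r)) := by
    intro k
    have h1 := Aseq_ge γ h k
    have h2 := Aseq_ge γ h (k+1)
    set X := Aseq γ k with hX
    set Y := Aseq γ (k+1) with hY
    have hg : γ k = Y - X := by rw [hX, hY, Aseq_succ]; ring
    have hY0 : 0 < Y := by linarith
    have hX0 : 0 < X := by linarith
    have h3 : 1 + (1 - r) * (X / Y - 1) ≤ (X / Y) ^ (1 - r) := by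
      rw [Real.rpow_def_of_pos (by positivity)]
      have := Real.add_one_le_exp (Real.log (X/Y) * (1 - r))
      have h4 := Real.log_le_sub_one_of_pos (show 0 < X / Y by positivity)
      nlinarith
    rw [Real.div_rpow hX0.le hY0.le, le_div_iff₀ (by positivity)] at h3
    have e : Y ^ (1 - r) = Y / Y ^ r := by
      rw [Real.rpow_sub hY0, Real.rpow_one]
    have hYr : 0 < Y ^ r := by positivity
    have e2 : (1 + (1 - r) * (X / Y - 1)) * Y ^ (1 - r) = Y ^ (1-r) + (r - 1) * (γ k / Y ^ r) := by
      rw [e, hg]; field_simp; ring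
    rw [e2] at h3
    rw [div_mul_eq_mul_div, le_div_iff₀ (by linarith)]
    linarith
  calc _ ≤ ∑ k ∈ range n, (1/(r-1)) * ((Aseq γ k) ^ (1 - r) - (Aseq γ (k+1)) ^ (1 - r)) :=
        sum_le_sum (fun k _ => key k)
    _ = (1/(r-1)) * ((Aseq γ 0) ^ (1 - r) - (Aseq γ n) ^ (1 - r)) := by
        rw [← mul_sum, sum_range_sub']
    _ ≤ (1/(r-1)) * 1 := by
        apply mul_le_mul_of_nonneg_left _ (by apply div_nonneg <;> linarith)
        have : Aseq γ 0 = 1 := by simp [Aseq]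
        rw [this, Real.one_rpow]
        have := Aseq_ge γ h n
        have : 0 ≤ Aseq γ n ^ (1 - r) := by positivity
        linarith
    _ = _ := by ring

end

section

lemma sm_abs_rpow {Ω : Type*} {m : MeasurableSpace Ω} {f : Ω → ℝ} (hf : StronglyMeasurable f) (r : ℝ) :
    StronglyMeasurable (fun ω => |f ω| ^ r) := by
  have := hf.measurable
  exact (Measurable.pow_const (by simpa using this.norm) r).stronglyMeasurable

lemma sm_max {Ω : Type*} {m : MeasurableSpace Ω} {f g : Ω → ℝ} (hf : StronglyMeasurable f)
    (hg : StronglyMeasurable g) : StronglyMeasurable (fun ω => max (f ω) (g ω)) :=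
  (hf.measurable.max hg.measurable).stronglyMeasurable

lemma ms_le {Ω : Type*} {m : MeasurableSpace Ω} {f : Ω → ℝ} (hf : StronglyMeasurable f) (K : ℝ) :
    MeasurableSet {ω | f ω ≤ K} := measurableSet_le hf.measurable measurable_const

section tools
variable {Ω : Type*} {m m0 : MeasurableSpace Ω} {μ : Measure Ω} [IsProbabilityMeasure μ]

lemma tool_int (hm : m ≤ m0) (φ ζ : Ω → ℝ) (K : ℝ) (hφ : StronglyMeasurable[m] φ) (hφ0 : ∀ ω, 0 ≤ φ ω)
    (hφi : Integrable φ μ) (hζ : Integrable ζ μ) (hζ0 : ∀ ω, 0 ≤ ζ ω)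
    (hb : ∀ᵐ ω ∂μ, φ ω * (μ[ζ|m]) ω ≤ K * φ ω) : Integrable (fun ω => φ ω * ζ ω) μ := by
  have hφm : StronglyMeasurable φ := hφ.mono hm
  refine ⟨(hφm.aestronglyMeasurable.mul hζ.aestronglyMeasurable), ?_⟩
  have hcond0 : 0 ≤ᵐ[μ] μ[ζ|m] := condExp_nonneg (Eventually.of_forall hζ0)
  have hint : Integrable (fun ω => K * φ ω) μ := hφi.const_mul K
  have hk : ∀ k : ℕ, ∫⁻ ω, ENNReal.ofReal (min (φ ω) k * ζ ω) ∂μ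
      ≤ ENNReal.ofReal (∫ ω, K * φ ω ∂μ) := by
    intro k
    have hmk : StronglyMeasurable[m] (fun ω => min (φ ω) (k:ℝ)) :=
      (hφ.measurable.min measurable_const).stronglyMeasurable
    have hbk : ∀ ω, ‖min (φ ω) (k:ℝ)‖ ≤ k := fun ω => by
      rw [Real.norm_of_nonneg (le_min (hφ0 ω) (Nat.cast_nonneg k))]; exact min_le_right _ _
    have hi : Integrable (fun ω => min (φ ω) (k:ℝ) * ζ ω) μ :=
      hζ.bdd_mul (hmk.mono hm).aestronglyMeasurable (Eventually.of_forall hbk)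
    have hpo : μ[fun ω => min (φ ω) (k:ℝ) * ζ ω|m] =ᵐ[μ] fun ω => min (φ ω) (k:ℝ) * (μ[ζ|m]) ω :=
      condExp_mul_of_stronglyMeasurable_left hmk hi hζ
    rw [← ofReal_integral_eq_lintegral_ofReal hi (Eventually.of_forall fun ω =>
      mul_nonneg (le_min (hφ0 ω) (Nat.cast_nonneg k)) (hζ0 ω))]
    apply ENNReal.ofReal_le_ofReal
    rw [← integral_condExp hm]
    apply integral_mono_ae integrable_condExp hint
    filter_upwards [hpo, hb, hcond0] with ω h1 h2 h3
    rw [h1]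
    exact le_trans (mul_le_mul_of_nonneg_right (min_le_left _ _) h3) h2
  have hlim : Tendsto (fun k : ℕ => ∫⁻ ω, ENNReal.ofReal (min (φ ω) k * ζ ω) ∂μ) atTop
      (𝓝 (∫⁻ ω, ENNReal.ofReal (φ ω * ζ ω) ∂μ)) := by
    apply lintegral_tendsto_of_tendsto_of_monotone
    · intro k
      exact (((hφm.measurable.min measurable_const).aemeasurable.mul hζ.aemeasurable)).ennreal_ofReal
    · refine Eventually.of_forall fun ω => fun i j hij => ENNReal.ofReal_le_ofReal ?_
      exact mul_le_mul_of_nonneg_right (min_le_min_left _ (by exact_mod_cast hij)) (hζ0 ω)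
    · refine Eventually.of_forall fun ω => ?_
      apply tendsto_const_nhds.congr'
      obtain ⟨N, hN⟩ := exists_nat_ge (φ ω)
      filter_upwards [eventually_ge_atTop N] with k hk
      rw [min_eq_left]
      exact hN.trans (by exact_mod_cast hk)
  have h := le_of_tendsto' hlim hk
  rw [hasFiniteIntegral_iff_norm]
  refine lt_of_le_of_lt (b := ENNReal.ofReal (∫ ω, K * φ ω ∂μ)) ?_ ENNReal.ofReal_lt_top
  · convert h using 4 with ω
    rw [Real.norm_of_nonneg (mul_nonneg (hφ0 ω) (hζ0 ω))]

end tools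

lemma flag_meas {Ω : Type*} {m0 : MeasurableSpace Ω} (F : Filtration ℕ m0) (Z : ℕ → Ω → ℝ)
    (hZ : ∀ n, StronglyMeasurable[F n] (Z n)) (K : ℝ) (n : ℕ) :
    MeasurableSet[F n] {ω | ∀ j ≤ n, Z j ω ≤ K} := by
  have : {ω | ∀ j ≤ n, Z j ω ≤ K} = ⋂ j ∈ Set.Iic n, {ω | Z j ω ≤ K} := by
    ext ω; simp
  rw [this]
  refine MeasurableSet.biInter (Set.to_countable _) (fun j hj => ?_)
  exact F.mono hj _ (ms_le (hZ j) K)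

variable {Ω : Type*} {m0 : MeasurableSpace Ω} {μ : Measure Ω} [IsProbabilityMeasure μ]

lemma mart_conv_K (F : Filtration ℕ m0) (r : ℝ) (hr : 1 < r) (hr2 : r ≤ 2)
    (ξ ζ h u : ℕ → Ω → ℝ) (C0 : ℝ) (hC0 : 0 ≤ C0)
    (hξm : ∀ n, StronglyMeasurable[F (n+1)] (ξ n)) (hξi : ∀ n, Integrable (ξ n) μ)
    (hξ0 : ∀ n, μ[ξ n|F n] =ᵐ[μ] 0)
    (hζi : ∀ n, Integrable (ζ n) μ) (hζ0 : ∀ n ω, 0 ≤ ζ n ω)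
    (hb : ∀ n ω, |ξ n ω| ^ r ≤ C0 * ζ n ω + h n ω)
    (hum : ∀ n, StronglyMeasurable[F n] (u n))
    (K : ℝ) (hK : 0 ≤ K) (G : ℕ → Set Ω) (hG : ∀ n, MeasurableSet[F n] (G n))
    (hGb : ∀ n, ∀ ω ∈ G n, (μ[ζ n|F n]) ω ≤ K ∧ h n ω ≤ K ∧ ∑ k ∈ range (n+1), |u k ω| ^ r ≤ K) :
    ∀ᵐ ω ∂μ, (∀ n, ω ∈ G n) →
      ∃ l, Tendsto (fun n => ∑ k ∈ range n, u k ω * ξ k ω) atTop (𝓝 l) := by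
  have hr0 : 0 < r := by linarith
  set v : ℕ → Ω → ℝ := fun n => (G n).indicator (u n) with hv
  have hvm : ∀ n, StronglyMeasurable[F n] (v n) := fun n => (hum n).indicator (hG n)
  have hvr0 : ∀ n ω, 0 ≤ |v n ω| ^ r := fun n ω => by positivity
  have hvu : ∀ n ω, |v n ω| ^ r ≤ |u n ω| ^ r := by
    intro n ω
    by_cases hω : ω ∈ G n
    · simp [hv, hω]
    · simp only [hv, Set.indicator_of_notMem hω, abs_zero, Real.zero_rpow hr0.ne']; positivity
  have hvsum : ∀ n ω, ∑ k ∈ range n, |v k ω| ^ r ≤ K := by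
    intro n ω
    induction n with
    | zero => simpa using hK
    | succ n ih =>
      by_cases hω : ω ∈ G n
      · exact (sum_le_sum fun k _ => hvu k ω).trans (hGb n ω hω).2.2
      · rw [sum_range_succ]
        have : v n ω = 0 := by simp [hv, hω]
        rw [this, abs_zero, Real.zero_rpow hr0.ne', add_zero]; exact ih
  have hv1 : ∀ n ω, |v n ω| ^ r ≤ K := by
    intro n ω
    have h1 := hvsum (n+1) ω
    rw [sum_range_succ] at h1
    have := sum_nonneg (fun k (_ : k ∈ range n) => hvr0 k ω)
    linarith
  have hvb : ∀ n ω, |v n ω| ≤ 1 + K := by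
    intro n ω
    have := aux_rpow_le_one_add |v n ω| 1 r (abs_nonneg _) (by norm_num) hr.le
    rw [Real.rpow_one] at this
    linarith [hv1 n ω]
  set S : ℕ → Ω → ℝ := fun n ω => ∑ k ∈ range n, v k ω * ξ k ω with hS
  have hSs : ∀ n, S (n+1) = S n + fun ω => v n ω * ξ n ω := by
    intro n; ext ω; simp [hS, sum_range_succ]
  have hwi : ∀ n, Integrable (fun ω => v n ω * ξ n ω) μ := fun n =>
    (hξi n).bdd_mul ((hvm n).mono (F.le n)).aestronglyMeasurable
      (Eventually.of_forall (fun ω => by rw [Real.norm_eq_abs]; exact hvb n ω))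
  have hSi : ∀ n, Integrable (S n) μ := fun n => integrable_finsetSum _ fun k _ => hwi k
  have hSm : ∀ n, StronglyMeasurable[F n] (S n) := by
    intro n
    have : S n = ∑ k ∈ range n, (fun ω => v k ω * ξ k ω) := by
      ext ω; simp [hS]
    rw [this]
    refine Finset.stronglyMeasurable_sum _ (fun k hk => ?_)
    have hk' := mem_range.mp hk
    exact ((hvm k).mono (F.mono hk'.le)).mul ((hξm k).mono (F.mono hk'))
  have hmart : Martingale S F μ := by
    refine martingale_of_condExp_sub_eq_zero_nat hSm hSi (fun n => ?_)
    have e : S (n+1) - S n = fun ω => v n ω * ξ n ω := by rw [hSs]; simp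
    rw [e]
    have : μ[fun ω => v n ω * ξ n ω|F n] =ᵐ[μ] fun ω => v n ω * (μ[ξ n|F n]) ω :=
      condExp_mul_of_stronglyMeasurable_left (hvm n) (hwi n) (hξi n)
    filter_upwards [this, hξ0 n] with ω h1 h2
    rw [h1, h2]; simp
  obtain ⟨C, hC, HC⟩ := aux_vBE r hr hr2
  have hvri : ∀ n, Integrable (fun ω => |v n ω| ^ r) μ := fun n => by
    refine Integrable.of_bound (C := K) ?_ (Eventually.of_forall fun ω => ?_)
    · exact (((hvm n).mono (F.le n)).measurable.abs.pow_const r).aestronglyMeasurable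
    · rw [Real.norm_of_nonneg (hvr0 n ω)]; exact hv1 n ω
  -- bound for the r-th power of the increments
  have hwr : ∀ n ω, |v n ω * ξ n ω| ^ r ≤ C0 * (|v n ω| ^ r * ζ n ω) + K * |v n ω| ^ r := by
    intro n ω
    rw [abs_mul, Real.mul_rpow (abs_nonneg _) (abs_nonneg _)]
    by_cases hω : ω ∈ G n
    · have h1 := mul_le_mul_of_nonneg_left (hb n ω) (hvr0 n ω)
      have h2 := mul_le_mul_of_nonneg_left (hGb n ω hω).2.1 (hvr0 n ω)
      nlinarith
    · have : v n ω = 0 := by simp [hv, hω]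
      simp [this, Real.zero_rpow hr0.ne']
  have hvrm : ∀ n, StronglyMeasurable[F n] (fun ω => |v n ω| ^ r) := fun n =>
    sm_abs_rpow (hvm n) r
  have hvζ : ∀ n, Integrable (fun ω => |v n ω| ^ r * ζ n ω) μ := fun n =>
    (hζi n).bdd_mul ((hvrm n).mono (F.le n)).aestronglyMeasurable
      (Eventually.of_forall (fun ω => by rw [Real.norm_of_nonneg (hvr0 n ω)]; exact hv1 n ω))
  have hvζle : ∀ n, ∫ ω, |v n ω| ^ r * ζ n ω ∂μ ≤ K * ∫ ω, |v n ω| ^ r ∂μ := by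
    intro n
    have hpo : μ[fun ω => |v n ω| ^ r * ζ n ω|F n] =ᵐ[μ] fun ω => |v n ω| ^ r * (μ[ζ n|F n]) ω :=
      condExp_mul_of_stronglyMeasurable_left (hvrm n) (hvζ n) (hζi n)
    rw [← integral_condExp (F.le n), ← integral_const_mul]
    apply integral_mono_ae integrable_condExp ((hvri n).const_mul K)
    filter_upwards [hpo] with ω h1
    rw [h1]
    by_cases hω : ω ∈ G n
    · have := mul_le_mul_of_nonneg_left (hGb n ω hω).1 (hvr0 n ω); linarith
    · have : v n ω = 0 := by simp [hv, hω]
      simp [this, Real.zero_rpow hr0.ne']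
  have hwri : ∀ n, Integrable (fun ω => |v n ω * ξ n ω| ^ r) μ := fun n => by
    refine Integrable.mono' (((hvζ n).const_mul C0).add ((hvri n).const_mul K)) ?_
      (Eventually.of_forall fun ω => ?_)
    · have := ((hwi n).aestronglyMeasurable.aemeasurable.abs.pow_const r).aestronglyMeasurable
      simpa using this
    · rw [Real.norm_of_nonneg (by positivity)]; exact hwr n ω
  have main : ∀ n, Integrable (fun ω => |S n ω| ^ r) μ ∧
      ∫ ω, |S n ω| ^ r ∂μ ≤ C * (C0 * K + K) * ∑ k ∈ range n, ∫ ω, |v k ω| ^ r ∂μ := by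
    intro n
    induction n with
    | zero => simp [hS, Real.zero_rpow hr0.ne']
    | succ n ih =>
      obtain ⟨ihi, ihle⟩ := ih
      have hSn1 : ∀ ω, S (n+1) ω = S n ω + v n ω * ξ n ω := fun ω => by rw [hSs]; rfl
      have hsi : Integrable (fun ω => |S (n+1) ω| ^ r) μ := by
        refine Integrable.mono' ((ihi.add (hwri n)).const_mul (2 ^ r)) ?_
          (Eventually.of_forall fun ω => ?_)
        · exact (((hSm (n+1)).mono (F.le _)).measurable.abs.pow_const r).aestronglyMeasurable
        · rw [Real.norm_of_nonneg (by positivity), hSn1]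
          exact (Real.rpow_le_rpow (abs_nonneg _) (abs_add_le _ _) hr0.le).trans
            (aux_rpow_add_le r _ _ hr0.le (abs_nonneg _) (abs_nonneg _))
      refine ⟨hsi, ?_⟩
      set D : Ω → ℝ := fun ω => r * (S n ω * (S n ω ^ 2) ^ (r / 2 - 1)) * v n ω with hD
      have hDm : StronglyMeasurable[F n] D := by
        have h1 := (hSm n).measurable
        have h2 := (hvm n).measurable
        exact (((h1.mul ((h1.pow_const 2).pow_const _)).const_mul r).mul h2).stronglyMeasurable
      have hDb : ∀ ω, |D ω * ξ n ω| ≤ r * (|S n ω| ^ r + |v n ω * ξ n ω| ^ r) := by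
        intro ω
        have e : D ω * ξ n ω = r * ((S n ω * (S n ω ^ 2) ^ (r / 2 - 1)) * (v n ω * ξ n ω)) := by
          rw [hD]; ring
        rw [e, abs_mul, abs_of_pos hr0]
        apply mul_le_mul_of_nonneg_left _ hr0.le
        rw [abs_mul]
        have e2 : |S n ω * (S n ω ^ 2) ^ (r / 2 - 1)| = |S n ω| ^ (r - 1) := by
          rw [abs_mul, abs_of_nonneg (a := (S n ω ^ 2) ^ (r / 2 - 1)) (by positivity), ← sq_abs,
            ← Real.rpow_natCast, ← Real.rpow_mul (abs_nonneg _)]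
          rcases (abs_nonneg (S n ω)).eq_or_lt with h0 | h0
          · rw [← h0, zero_mul, Real.zero_rpow (by linarith)]
          · nth_rewrite 1 [← Real.rpow_one |S n ω|]
            rw [← Real.rpow_add h0]; congr 1; push_cast; ring
        rw [e2]
        set x := |S n ω|
        set y := |v n ω * ξ n ω|
        have hx : 0 ≤ x := abs_nonneg _
        have hy : 0 ≤ y := abs_nonneg _
        have pw : ∀ t : ℝ, 0 ≤ t → t ^ (r-1) * t = t ^ r := by
          intro t ht
          rcases ht.eq_or_lt with h0 | h0
          · rw [← h0, mul_zero, Real.zero_rpow hr0.ne']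
          · nth_rewrite 2 [← Real.rpow_one t]
            rw [← Real.rpow_add h0]; congr 1; ring
        have hxr : 0 ≤ x ^ r := by positivity
        have hyr : 0 ≤ y ^ r := by positivity
        rcases le_total x y with hxy | hxy
        · have := mul_le_mul_of_nonneg_right (Real.rpow_le_rpow hx hxy (by linarith : 0 ≤ r - 1)) hy
          rw [pw y hy] at this; linarith
        · have := mul_le_mul_of_nonneg_left hxy (by positivity : 0 ≤ x ^ (r-1))
          rw [pw x hx] at this; linarith
      have hDi : Integrable (fun ω => D ω * ξ n ω) μ := by
        refine Integrable.mono' ((ihi.add (hwri n)).const_mul r) ?_ (Eventually.of_forall fun ω => ?_)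
        · exact ((hDm.mono (F.le n)).aestronglyMeasurable).mul (hξi n).aestronglyMeasurable
        · rw [Real.norm_eq_abs]; exact hDb ω
      have hD0 : ∫ ω, D ω * ξ n ω ∂μ = 0 := by
        have hpo : μ[fun ω => D ω * ξ n ω|F n] =ᵐ[μ] fun ω => D ω * (μ[ξ n|F n]) ω :=
          condExp_mul_of_stronglyMeasurable_left hDm hDi (hξi n)
        rw [← integral_condExp (F.le n)]
        apply integral_eq_zero_of_ae
        filter_upwards [hpo, hξ0 n] with ω h1 h2
        rw [h1, h2]; simp
      have i1 : Integrable (fun ω => |S n ω| ^ r + D ω * ξ n ω) μ := ihi.add hDi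
      have i2 : Integrable (fun ω => C0 * (|v n ω| ^ r * ζ n ω) + K * |v n ω| ^ r) μ :=
        ((hvζ n).const_mul C0).add ((hvri n).const_mul K)
      calc ∫ ω, |S (n+1) ω| ^ r ∂μ ≤ ∫ ω, ((|S n ω| ^ r + D ω * ξ n ω)
            + C * (C0 * (|v n ω| ^ r * ζ n ω) + K * |v n ω| ^ r)) ∂μ := by
            apply integral_mono hsi (i1.add (i2.const_mul C))
            intro ω
            have h1 := HC (S n ω) (v n ω * ξ n ω)
            have h2 := mul_le_mul_of_nonneg_left (hwr n ω) hC
            simp only [Pi.add_apply, hSn1, hD]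
            nlinarith
        _ = ∫ ω, |S n ω| ^ r ∂μ + C * (C0 * ∫ ω, |v n ω| ^ r * ζ n ω ∂μ
              + K * ∫ ω, |v n ω| ^ r ∂μ) := by
            rw [integral_add i1 (i2.const_mul C), integral_add ihi hDi, hD0, integral_const_mul,
              integral_add ((hvζ n).const_mul C0) ((hvri n).const_mul K), integral_const_mul,
              integral_const_mul, add_zero]
        _ ≤ _ := by
            rw [sum_range_succ]
            have h1 := mul_le_mul_of_nonneg_left (mul_le_mul_of_nonneg_left (hvζle n) hC0) hC
            nlinarith
  have hbd : ∀ n, eLpNorm (S n) 1 μ ≤ (1 + C * (C0 * K + K) * K).toNNReal := by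
    intro n
    rw [eLpNorm_one_eq_lintegral_enorm, ← ofReal_integral_norm_eq_lintegral_enorm (hSi n)]
    change ENNReal.ofReal _ ≤ ENNReal.ofReal _
    apply ENNReal.ofReal_le_ofReal
    have h1 : ∫ ω, ‖S n ω‖ ∂μ ≤ ∫ ω, (1 + |S n ω| ^ r) ∂μ := by
      apply integral_mono (hSi n).norm ((integrable_const _).add (main n).1)
      intro ω
      have := aux_rpow_le_one_add |S n ω| 1 r (abs_nonneg _) (by norm_num) hr.le
      simpa using this
    have h2 : ∑ k ∈ range n, ∫ ω, |v k ω| ^ r ∂μ ≤ K := by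
      rw [← integral_finsetSum _ (fun k _ => hvri k)]
      calc _ ≤ ∫ ω, K ∂μ := by
            apply integral_mono (integrable_finsetSum _ fun k _ => hvri k) (integrable_const _)
            intro ω; exact hvsum n ω
        _ = K := by simp
    rw [integral_add (integrable_const _) (main n).1] at h1
    have h3 := (main n).2
    have h4 := mul_le_mul_of_nonneg_left h2 (by positivity : 0 ≤ C * (C0 * K + K))
    simp at h1
    simp only [Real.norm_eq_abs]
    linarith
  filter_upwards [hmart.submartingale.exists_ae_tendsto_of_bdd hbd] with ω hω hGω
  obtain ⟨l, hl⟩ := hω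
  refine ⟨l, hl.congr fun n => ?_⟩
  simp only [hS]
  refine sum_congr rfl fun k _ => ?_
  simp [hv, hGω k]

lemma mart_conv (F : Filtration ℕ m0) (r : ℝ) (hr : 1 < r) (hr2 : r ≤ 2)
    (ξ ζ h u : ℕ → Ω → ℝ) (C0 : ℝ) (hC0 : 0 ≤ C0)
    (hξm : ∀ n, StronglyMeasurable[F (n+1)] (ξ n)) (hξi : ∀ n, Integrable (ξ n) μ)
    (hξ0 : ∀ n, μ[ξ n|F n] =ᵐ[μ] 0)
    (hζi : ∀ n, Integrable (ζ n) μ) (hζ0 : ∀ n ω, 0 ≤ ζ n ω)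
    (hζC : ∀ᵐ ω ∂μ, ∃ C : ℝ, ∀ n, (μ[ζ n|F n]) ω ≤ C)
    (hb : ∀ n ω, |ξ n ω| ^ r ≤ C0 * ζ n ω + h n ω)
    (hhm : ∀ n, StronglyMeasurable[F n] (h n))
    (hhC : ∀ᵐ ω ∂μ, ∃ C : ℝ, ∀ n, h n ω ≤ C)
    (hum : ∀ n, StronglyMeasurable[F n] (u n))
    (hus : ∀ᵐ ω ∂μ, Summable fun n => |u n ω| ^ r) :
    ∀ᵐ ω ∂μ, ∃ l, Tendsto (fun n => ∑ k ∈ range n, u k ω * ξ k ω) atTop (𝓝 l) := by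
  set Z : ℕ → Ω → ℝ := fun n ω => max ((μ[ζ n|F n]) ω) (max (h n ω) (∑ k ∈ range (n+1), |u k ω| ^ r))
    with hZ
  have hZm : ∀ n, StronglyMeasurable[F n] (Z n) := by
    intro n
    refine sm_max stronglyMeasurable_condExp (sm_max (hhm n) ?_)
    have e : (fun ω => ∑ k ∈ range (n+1), |u k ω| ^ r) = ∑ k ∈ range (n+1), fun ω => |u k ω| ^ r := by
      ext ω; simp
    rw [e]
    refine Finset.stronglyMeasurable_sum _ (fun k hk => ?_)
    exact sm_abs_rpow ((hum k).mono (F.mono (Nat.lt_succ_iff.mp (mem_range.mp hk)))) r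
  have key : ∀ K : ℕ, ∀ᵐ ω ∂μ, (∀ n, ω ∈ {ω | ∀ j ≤ n, Z j ω ≤ (K:ℝ)}) →
      ∃ l, Tendsto (fun n => ∑ k ∈ range n, u k ω * ξ k ω) atTop (𝓝 l) := by
    intro K
    refine mart_conv_K F r hr hr2 ξ ζ h u C0 hC0 hξm hξi hξ0 hζi hζ0 hb hum K (Nat.cast_nonneg K)
      (fun n => {ω | ∀ j ≤ n, Z j ω ≤ (K:ℝ)}) (fun n => flag_meas F Z hZm K n) ?_
    intro n ω hω
    have := hω n le_rfl
    simp only [hZ, max_le_iff] at this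
    exact this
  filter_upwards [ae_all_iff.mpr key, hζC, hhC, hus] with ω h1 ⟨C1, h2⟩ ⟨C2, h3⟩ h4
  obtain ⟨K, hK⟩ := exists_nat_ge (max C1 (max C2 (∑' n, |u n ω| ^ r)))
  refine h1 K (fun n j _ => ?_)
  refine le_trans ?_ hK
  exact max_le_max (h2 j) (max_le_max (h3 j) (h4.sum_le_tsum _ fun k _ => by positivity))

end

section

variable {Ω : Type*} {m0 : MeasurableSpace Ω} {μ : Measure Ω} [IsProbabilityMeasure μ]

lemma rs_K (F : Filtration ℕ m0) (X B φ ψ c ξ ζ : ℕ → Ω → ℝ) (C0 K0 : ℝ) (hC0 : 0 ≤ C0)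
    (hXm : ∀ n, StronglyMeasurable[F n] (X n)) (hBm : ∀ n, StronglyMeasurable[F n] (B n))
    (hφm : ∀ n, StronglyMeasurable[F n] (φ n)) (hψm : ∀ n, StronglyMeasurable[F n] (ψ n))
    (hcm : ∀ n, StronglyMeasurable[F n] (c n))
    (hX0 : ∀ n ω, 0 ≤ X n ω) (hB0 : ∀ n ω, 0 ≤ B n ω) (hc0 : ∀ n ω, 0 ≤ c n ω)
    (hcK : ∀ n ω, ∑ k ∈ range n, c k ω ≤ K0)
    (hrec : ∀ n ω, X (n+1) ω ≤ X n ω - B n ω + φ n ω * ξ n ω + ψ n ω * ζ n ω)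
    (hφb : ∀ n ω, |φ n ω| ≤ C0 * (1 + X n ω)) (hψ0 : ∀ n ω, 0 ≤ ψ n ω)
    (hψb : ∀ n ω, ψ n ω ≤ C0 * (1 + X n ω))
    (hξm : ∀ n, StronglyMeasurable[F (n+1)] (ξ n)) (hξi : ∀ n, Integrable (ξ n) μ)
    (hξ0 : ∀ n, μ[ξ n|F n] =ᵐ[μ] 0)
    (hζi : ∀ n, Integrable (ζ n) μ) (hξζ : ∀ n ω, |ξ n ω| ≤ ζ n ω)
    (K C' : ℝ) (hK : 0 ≤ K) (hC' : 0 ≤ C') (hKψ : ∀ n ω, K * ψ n ω ≤ B n ω / 2 + C' * c n ω)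
    (G : ℕ → Set Ω) (hG : ∀ n, MeasurableSet[F n] (G n)) (hGa : ∀ n, G (n+1) ⊆ G n)
    (hGb : ∀ n, ∀ ω ∈ G n, (μ[ζ n|F n]) ω ≤ K ∧ X 0 ω ≤ K) :
    ∀ᵐ ω ∂μ, (∀ n, ω ∈ G n) →
      (∃ l, Tendsto (fun n => X n ω) atTop (𝓝 l)) ∧ Summable (fun n => B n ω) := by
  classical
  have hζ0 : ∀ n ω, 0 ≤ ζ n ω := fun n ω => (abs_nonneg _).trans (hξζ n ω)
  set I : ℕ → Ω → ℝ := fun n => (G n).indicator (fun _ => (1:ℝ)) with hI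
  have hIm : ∀ n, StronglyMeasurable[F n] (I n) := fun n =>
    stronglyMeasurable_const.indicator (hG n)
  have hI0 : ∀ n ω, 0 ≤ I n ω := fun n ω => Set.indicator_nonneg (fun _ _ => zero_le_one) _
  have hI1 : ∀ n ω, I n ω ≤ 1 := fun n ω => by
    by_cases h : ω ∈ G n <;> simp [hI, h]
  set Y : ℕ → Ω → ℝ := fun n ω => I 0 ω * X 0 ω + ∑ k ∈ range n, I k ω * (X (k+1) ω - X k ω) with hY
  have hYs : ∀ n ω, Y (n+1) ω = Y n ω + I n ω * (X (n+1) ω - X n ω) := by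
    intro n ω; simp only [hY, sum_range_succ]; ring
  have hYX : ∀ n ω, (∀ k < n, ω ∈ G k) → ω ∈ G 0 → Y n ω = X n ω := by
    intro n ω h h0
    induction n with
    | zero => simp [hY, hI, h0]
    | succ n ih =>
      rw [hYs, ih (fun k hk => h k (hk.trans n.lt_succ_self))]
      simp [hI, h n n.lt_succ_self]
  have hGle : ∀ n k ω, k ≤ n → ω ∈ G n → ω ∈ G k := by
    intro n k ω hk h
    exact antitone_nat_of_succ_le hGa hk h
  have hYXG : ∀ n ω, ω ∈ G n → Y n ω = X n ω := fun n ω h =>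
    hYX n ω (fun k hk => hGle n k ω hk.le h) (hGle n 0 ω (Nat.zero_le _) h)
  have hY0 : ∀ n ω, 0 ≤ Y n ω := by
    intro n ω
    induction n with
    | zero => simp only [hY, range_zero, sum_empty, add_zero]; exact mul_nonneg (hI0 _ _) (hX0 _ _)
    | succ n ih =>
      rw [hYs]
      by_cases h : ω ∈ G n
      · rw [hYXG n ω h]; simp only [hI, h, Set.indicator_of_mem]; linarith [hX0 (n+1) ω]
      · simpa [hI, h] using ih
  have hYm : ∀ n, StronglyMeasurable[F n] (Y n) := by
    intro n
    induction n with
    | zero =>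
      have : Y 0 = I 0 * X 0 := by ext ω; simp [hY]
      rw [this]; exact (hIm 0).mul (hXm 0)
    | succ n ih =>
      have : Y (n+1) = Y n + I n * (X (n+1) - X n) := by ext ω; simp [hYs]
      rw [this]
      have hle := F.mono n.le_succ
      exact (ih.mono hle).add (((hIm n).mono hle).mul ((hXm (n+1)).sub ((hXm n).mono hle)))
  -- integrability
  have hζint : ∀ n, Integrable (Y n) μ → Integrable (fun ω => (I n ω * (1 + Y n ω)) * ζ n ω) μ := by
    intro n hn
    refine tool_int (F.le n) _ _ K ?_ ?_ ?_ (hζi n) (hζ0 n) ?_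
    · exact (hIm n).mul (stronglyMeasurable_const.add (hYm n))
    · intro ω; exact mul_nonneg (hI0 _ _) (by linarith [hY0 n ω])
    · refine Integrable.bdd_mul ((integrable_const 1).add hn) (c := 1)
        ((hIm n).mono (F.le n)).aestronglyMeasurable ?_
      exact Eventually.of_forall fun ω => by rw [Real.norm_of_nonneg (hI0 n ω)]; exact hI1 n ω
    · refine Eventually.of_forall fun ω => ?_
      by_cases h : ω ∈ G n
      · have := (hGb n ω h).1
        have h2 := mul_le_mul_of_nonneg_left this (mul_nonneg (hI0 n ω) (by linarith [hY0 n ω] : 0 ≤ 1 + Y n ω))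
        linarith
      · simp [hI, h]
  have hφint : ∀ n, Integrable (Y n) μ → Integrable (fun ω => (I n ω * φ n ω) * ξ n ω) μ := by
    intro n hn
    refine Integrable.mono' ((hζint n hn).const_mul C0) ?_ (Eventually.of_forall fun ω => ?_)
    · exact ((((hIm n).mul (hφm n)).mono (F.le n)).aestronglyMeasurable).mul (hξi n).aestronglyMeasurable
    · rw [Real.norm_eq_abs, abs_mul, abs_mul, abs_of_nonneg (hI0 n ω)]
      by_cases h : ω ∈ G n
      · have h1 := hφb n ω
        rw [← hYXG n ω h] at h1
        have := mul_le_mul h1 (hξζ n ω) (abs_nonneg _) (by nlinarith [hY0 n ω])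
        simp only [hI, h, Set.indicator_of_mem]; linarith
      · simp [hI, h]
  have hψint : ∀ n, Integrable (Y n) μ → Integrable (fun ω => (I n ω * ψ n ω) * ζ n ω) μ := by
    intro n hn
    refine Integrable.mono' ((hζint n hn).const_mul C0) ?_ (Eventually.of_forall fun ω => ?_)
    · exact ((((hIm n).mul (hψm n)).mono (F.le n)).aestronglyMeasurable).mul (hζi n).aestronglyMeasurable
    · rw [Real.norm_eq_abs, abs_mul, abs_mul, abs_of_nonneg (hI0 n ω), abs_of_nonneg (hψ0 n ω), abs_of_nonneg (hζ0 n ω)]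
      by_cases h : ω ∈ G n
      · have h1 := hψb n ω
        rw [← hYXG n ω h] at h1
        have := mul_le_mul_of_nonneg_right h1 (hζ0 n ω)
        simp only [hI, h, Set.indicator_of_mem]; linarith
      · simp [hI, h]
  have hYrec : ∀ n ω, Y (n+1) ω ≤ Y n ω - I n ω * B n ω + (I n ω * φ n ω) * ξ n ω + (I n ω * ψ n ω) * ζ n ω := by
    intro n ω
    rw [hYs]
    nlinarith [mul_le_mul_of_nonneg_left (hrec n ω) (hI0 n ω)]
  have hYi : ∀ n, Integrable (Y n) μ := by
    intro n
    induction n with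
    | zero =>
      refine Integrable.of_bound (C := K) ((hYm 0).mono (F.le 0)).aestronglyMeasurable
        (Eventually.of_forall fun ω => ?_)
      rw [Real.norm_of_nonneg (hY0 0 ω)]
      by_cases h : ω ∈ G 0
      · rw [hYXG 0 ω h]; exact (hGb 0 ω h).2
      · simpa [hY, hI, h] using hK
    | succ n ih =>
      refine Integrable.mono' ((ih.add (hφint n ih)).add (hψint n ih))
        ((hYm (n+1)).mono (F.le _)).aestronglyMeasurable (Eventually.of_forall fun ω => ?_)
      rw [Real.norm_of_nonneg (hY0 (n+1) ω)]
      have := hYrec n ω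
      have h2 := mul_nonneg (hI0 n ω) (hB0 n ω)
      simp only [Pi.add_apply]
      linarith
  have hBi : ∀ n, Integrable (fun ω => I n ω * B n ω) μ := by
    intro n
    refine Integrable.mono' (((hYi n).add (hφint n (hYi n))).add (hψint n (hYi n)))
        (((hIm n).mul (hBm n)).mono (F.le _)).aestronglyMeasurable (Eventually.of_forall fun ω => ?_)
    have h2 := mul_nonneg (hI0 n ω) (hB0 n ω)
    rw [Real.norm_of_nonneg h2]
    have := hYrec n ω
    have := hY0 (n+1) ω
    simp only [Pi.add_apply]
    linarith
  have hK0 : 0 ≤ K0 := by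
    have : Nonempty Ω := nonempty_of_isProbabilityMeasure μ
    simpa using hcK 0 (Classical.arbitrary Ω)
  have hcle : ∀ n ω, c n ω ≤ K0 := by
    intro n ω
    have h1 := hcK (n+1) ω
    rw [sum_range_succ] at h1
    have := sum_nonneg (fun k (_ : k ∈ range n) => hc0 k ω)
    linarith
  have hci : ∀ n, Integrable (fun ω => I n ω * c n ω) μ := by
    intro n
    refine Integrable.of_bound (C := K0) (((hIm n).mul (hcm n)).mono (F.le _)).aestronglyMeasurable
        (Eventually.of_forall fun ω => ?_)
    rw [Real.norm_of_nonneg (mul_nonneg (hI0 n ω) (hc0 n ω))]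
    nlinarith [hI0 n ω, hI1 n ω, hc0 n ω, hcle n ω]
  set D : ℕ → Ω → ℝ := fun k ω => (1/2) * (I k ω * B k ω) - C' * (I k ω * c k ω) with hD
  have hDi : ∀ n, Integrable (D n) μ := fun n => ((hBi n).const_mul _).sub ((hci n).const_mul _)
  have hDm : ∀ n, StronglyMeasurable[F n] (D n) := fun n =>
    (stronglyMeasurable_const.mul ((hIm n).mul (hBm n))).sub
      (stronglyMeasurable_const.mul ((hIm n).mul (hcm n)))
  set Z : ℕ → Ω → ℝ := fun n => Y n + ∑ k ∈ range n, D k with hZ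
  have hZi : ∀ n, Integrable (Z n) μ := fun n => (hYi n).add (integrable_finsetSum' _ fun k _ => hDi k)
  have hZm : ∀ n, StronglyMeasurable[F n] (Z n) := fun n =>
    (hYm n).add (Finset.stronglyMeasurable_sum _ fun k hk => (hDm k).mono (F.mono (mem_range.mp hk).le))
  have hsup : Supermartingale Z F μ := by
    refine supermartingale_nat hZm hZi (fun n => ?_)
    have hYce : μ[Y (n+1)|F n] ≤ᵐ[μ] fun ω => Y n ω - D n ω := by
      have i0 : Integrable (fun ω => Y n ω - I n ω * B n ω) μ := (hYi n).sub (hBi n)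
      have h0 : μ[fun ω => Y n ω - I n ω * B n ω|F n] = fun ω => Y n ω - I n ω * B n ω :=
        condExp_of_stronglyMeasurable (F.le n) ((hYm n).sub ((hIm n).mul (hBm n))) i0
      have h1 : μ[fun ω => (I n ω * φ n ω) * ξ n ω|F n] =ᵐ[μ] fun ω => (I n ω * φ n ω) * (μ[ξ n|F n]) ω :=
        condExp_mul_of_stronglyMeasurable_left ((hIm n).mul (hφm n)) (hφint n (hYi n)) (hξi n)
      have h2 : μ[fun ω => (I n ω * ψ n ω) * ζ n ω|F n] =ᵐ[μ] fun ω => (I n ω * ψ n ω) * (μ[ζ n|F n]) ω :=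
        condExp_mul_of_stronglyMeasurable_left ((hIm n).mul (hψm n)) (hψint n (hYi n)) (hζi n)
      have h3 : μ[Y (n+1)|F n] ≤ᵐ[μ] μ[((fun ω => Y n ω - I n ω * B n ω) + (fun ω => (I n ω * φ n ω) * ξ n ω))
          + (fun ω => (I n ω * ψ n ω) * ζ n ω)|F n] := by
        refine condExp_mono (hYi (n+1)) ((i0.add (hφint n (hYi n))).add (hψint n (hYi n)))
          (Eventually.of_forall fun ω => ?_)
        exact hYrec n ω
      filter_upwards [h1, h2, h3, condExp_add (i0.add (hφint n (hYi n))) (hψint n (hYi n)) (F n),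
        condExp_add i0 (hφint n (hYi n)) (F n), hξ0 n] with ω e1 e2 e3 e4 e5 e6
      rw [e4, Pi.add_apply, e5, Pi.add_apply, e1, e2, e6, h0] at e3
      refine e3.trans ?_
      simp only [hD, Pi.zero_apply]
      by_cases h : ω ∈ G n
      · have := mul_le_mul_of_nonneg_left (hGb n ω h).1 (hψ0 n ω)
        have := hKψ n ω
        simp only [hI, h, Set.indicator_of_mem]; linarith
      · simp [hI, h]
    have e : Z (n+1) = Y (n+1) + ∑ k ∈ range (n+1), D k := rfl
    have i2 : Integrable (∑ k ∈ range (n+1), D k) μ := integrable_finsetSum' _ fun k _ => hDi k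
    have h4 : μ[∑ k ∈ range (n+1), D k|F n] = ∑ k ∈ range (n+1), D k :=
      condExp_of_stronglyMeasurable (F.le n) (Finset.stronglyMeasurable_sum _ fun k hk =>
        (hDm k).mono (F.mono (Nat.lt_succ_iff.mp (mem_range.mp hk)))) i2
    rw [e]
    filter_upwards [hYce, condExp_add (hYi (n+1)) i2 (F n)] with ω a1 a2
    rw [a2, Pi.add_apply, h4]
    simp only [hZ, Pi.add_apply, Finset.sum_apply, sum_range_succ]
    linarith
  have hIc : ∀ n ω, ∑ k ∈ range n, I k ω * c k ω ≤ K0 := fun n ω =>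
    (sum_le_sum fun k _ => by nlinarith [hI1 k ω, hc0 k ω]).trans (hcK n ω)
  have hZlow : ∀ n ω, 0 ≤ Z n ω + C' * K0 := by
    intro n ω
    simp only [hZ, Pi.add_apply, Finset.sum_apply, hD, sum_sub_distrib, ← mul_sum]
    have h1 := sum_nonneg (fun k (_ : k ∈ range n) => mul_nonneg (hI0 k ω) (hB0 k ω))
    have h2 := mul_le_mul_of_nonneg_left (hIc n ω) hC'
    linarith [hY0 n ω]
  have hbd : ∀ n, eLpNorm ((-Z) n) 1 μ ≤ (K + 2 * (C' * K0)).toNNReal := by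
    intro n
    have hb0 : 0 ≤ C' * K0 := mul_nonneg hC' hK0
    rw [Pi.neg_apply, eLpNorm_neg, eLpNorm_one_eq_lintegral_enorm, ← ofReal_integral_norm_eq_lintegral_enorm (hZi n)]
    change ENNReal.ofReal _ ≤ ENNReal.ofReal _
    apply ENNReal.ofReal_le_ofReal
    have h1 : ∫ ω, ‖Z n ω‖ ∂μ ≤ ∫ ω, (Z n ω + 2 * (C' * K0)) ∂μ := by
      apply integral_mono (hZi n).norm ((hZi n).add (integrable_const _))
      intro ω
      have := hZlow n ω
      simp only [Real.norm_eq_abs, Pi.add_apply]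
      rw [abs_le]; constructor <;> linarith
    rw [integral_add (hZi n) (integrable_const _)] at h1
    have h2 : ∫ ω, Z n ω ∂μ ≤ ∫ ω, Z 0 ω ∂μ := by
      have := hsup.setIntegral_le (Nat.zero_le n) (s := Set.univ) (@MeasurableSet.univ _ (F 0))
      simpa using this
    have h3 : ∫ ω, Z 0 ω ∂μ ≤ ∫ ω, K ∂μ := by
      apply integral_mono (hZi 0) (integrable_const _)
      intro ω
      simp only [hZ, range_zero, sum_empty, add_zero]
      by_cases h : ω ∈ G 0
      · rw [hYXG 0 ω h]; exact (hGb 0 ω h).2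
      · simpa [hY, hI, h] using hK
    simp at h1 h3
    simp only [Real.norm_eq_abs]
    linarith
  filter_upwards [hsup.neg.exists_ae_tendsto_of_bdd hbd] with ω hω hGω
  obtain ⟨l, hl⟩ := hω
  have hl2 : Tendsto (fun n => Z n ω) atTop (𝓝 (-l)) := by simpa using hl.neg
  have hZe : ∀ n, Z n ω = X n ω + (1/2) * ∑ k ∈ range n, B k ω - C' * ∑ k ∈ range n, c k ω := by
    intro n
    simp only [hZ, Pi.add_apply, Finset.sum_apply, hD, sum_sub_distrib, ← mul_sum]
    rw [hYXG n ω (hGω n)]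
    have : ∀ k, I k ω = 1 := fun k => by simp [hI, hGω k]
    simp only [this, one_mul]; ring
  have hcs : Summable (fun n => c n ω) := summable_of_sum_range_le (hc0 · ω) (hcK · ω)
  have hl3 : Tendsto (fun n => X n ω + (1/2) * ∑ k ∈ range n, B k ω) atTop (𝓝 (-l + C' * ∑' n, c n ω)) := by
    refine (hl2.add (hcs.hasSum.tendsto_sum_nat.const_mul C')).congr fun n => ?_
    rw [hZe]; ring
  obtain ⟨W, hW⟩ := hl3.bddAbove_range
  have hBs : Summable (fun n => B n ω) := by
    refine summable_of_sum_range_le (c := 2 * W) (hB0 · ω) fun n => ?_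
    have := hW ⟨n, rfl⟩
    simp only at this
    linarith [hX0 n ω]
  refine ⟨⟨-l + C' * ∑' n, c n ω - (1/2) * ∑' n, B n ω, ?_⟩, hBs⟩
  refine (hl3.sub (hBs.hasSum.tendsto_sum_nat.const_mul (1/2))).congr fun n => ?_
  ring

lemma rs_conv (F : Filtration ℕ m0) (X B φ ψ c ξ ζ : ℕ → Ω → ℝ) (C0 K0 : ℝ) (hC0 : 0 ≤ C0)
    (hXm : ∀ n, StronglyMeasurable[F n] (X n)) (hBm : ∀ n, StronglyMeasurable[F n] (B n))
    (hφm : ∀ n, StronglyMeasurable[F n] (φ n)) (hψm : ∀ n, StronglyMeasurable[F n] (ψ n))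
    (hcm : ∀ n, StronglyMeasurable[F n] (c n))
    (hX0 : ∀ n ω, 0 ≤ X n ω) (hB0 : ∀ n ω, 0 ≤ B n ω) (hc0 : ∀ n ω, 0 ≤ c n ω)
    (hcK : ∀ n ω, ∑ k ∈ range n, c k ω ≤ K0)
    (hrec : ∀ n ω, X (n+1) ω ≤ X n ω - B n ω + φ n ω * ξ n ω + ψ n ω * ζ n ω)
    (hφb : ∀ n ω, |φ n ω| ≤ C0 * (1 + X n ω)) (hψ0 : ∀ n ω, 0 ≤ ψ n ω)
    (hψb : ∀ n ω, ψ n ω ≤ C0 * (1 + X n ω))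
    (hξm : ∀ n, StronglyMeasurable[F (n+1)] (ξ n)) (hξi : ∀ n, Integrable (ξ n) μ)
    (hξ0 : ∀ n, μ[ξ n|F n] =ᵐ[μ] 0)
    (hζi : ∀ n, Integrable (ζ n) μ) (hξζ : ∀ n ω, |ξ n ω| ≤ ζ n ω)
    (hζC : ∀ᵐ ω ∂μ, ∃ C : ℝ, ∀ n, (μ[ζ n|F n]) ω ≤ C)
    (hKψ : ∀ K : ℝ, 0 ≤ K → ∃ C' : ℝ, 0 ≤ C' ∧ ∀ n ω, K * ψ n ω ≤ B n ω / 2 + C' * c n ω) :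
    ∀ᵐ ω ∂μ, (∃ l, Tendsto (fun n => X n ω) atTop (𝓝 l)) ∧ Summable (fun n => B n ω) := by
  set Z : ℕ → Ω → ℝ := fun n ω => max ((μ[ζ n|F n]) ω) (X 0 ω) with hZ
  have hZm : ∀ n, StronglyMeasurable[F n] (Z n) := fun n =>
    sm_max stronglyMeasurable_condExp ((hXm 0).mono (F.mono (Nat.zero_le n)))
  have key : ∀ K : ℕ, ∀ᵐ ω ∂μ, (∀ n, ω ∈ {ω | ∀ j ≤ n, Z j ω ≤ (K:ℝ)}) →
      (∃ l, Tendsto (fun n => X n ω) atTop (𝓝 l)) ∧ Summable (fun n => B n ω) := by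
    intro K
    obtain ⟨C', hC', h⟩ := hKψ K (Nat.cast_nonneg K)
    refine rs_K F X B φ ψ c ξ ζ C0 K0 hC0 hXm hBm hφm hψm hcm hX0 hB0 hc0 hcK hrec hφb hψ0 hψb hξm hξi
      hξ0 hζi hξζ K C' (Nat.cast_nonneg K) hC' h
      (fun n => {ω | ∀ j ≤ n, Z j ω ≤ (K:ℝ)}) (fun n => flag_meas F Z hZm K n) ?_ ?_
    · intro n ω hω j hj
      exact hω j (hj.trans n.le_succ)
    · intro n ω hω
      have := hω n le_rfl
      simp only [hZ, max_le_iff] at this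
      exact this
  filter_upwards [ae_all_iff.mpr key, hζC] with ω h1 ⟨C1, h2⟩
  obtain ⟨K, hK⟩ := exists_nat_ge (max C1 (X 0 ω))
  exact h1 K (fun n j _ => le_trans (max_le_max (h2 j) le_rfl) hK)

end

section

structure Core {Ω : Type*} {m0 : MeasurableSpace Ω} (μ : Measure Ω) (F : Filtration ℕ m0)
    (ε : ℕ → Ω → ℝ) (σ a D : ℝ) (γ V b m q Q0 Q1 Q2 e : ℕ → Ω → ℝ) : Prop where
  hεm : ∀ n, StronglyMeasurable[F n] (ε n)
  hεi : ∀ n, Integrable (ε n) μ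
  hmds : ∀ n, μ[ε (n + 1)|F n] =ᵐ[μ] 0
  hvar : ∀ n, μ[fun ω => ε (n + 1) ω ^ 2|F n] =ᵐ[μ] fun _ => σ ^ 2
  hmomint : ∀ n, Integrable (fun ω => |ε (n + 1) ω| ^ a) μ
  hmom : ∀ᵐ ω ∂μ, ∃ C : ℝ, ∀ n, (μ[fun ω => |ε (n + 1) ω| ^ a|F n]) ω ≤ C
  hγm : ∀ n, StronglyMeasurable[F n] (γ n)
  hVm : ∀ n, StronglyMeasurable[F n] (V n)
  hbm : ∀ n, StronglyMeasurable[F n] (b n)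
  hmm : ∀ n, StronglyMeasurable[F n] (m n)
  hqm : ∀ n, StronglyMeasurable[F n] (q n)
  hQ0m : ∀ n, StronglyMeasurable[F n] (Q0 n)
  hQ1m : ∀ n, StronglyMeasurable[F n] (Q1 n)
  hem : ∀ n, StronglyMeasurable[F n] (e (n+1))
  hγ0 : ∀ n ω, 0 ≤ γ n ω
  hγ1 : ∀ n ω, γ n ω ≤ 1
  hm0 : ∀ n ω, 0 ≤ m n ω
  he0 : ∀ n ω, 0 ≤ e n ω
  hV : ∀ n ω, V n ω = (1 - γ n ω) * m n ω
  hb : ∀ n ω, b n ω ^ 2 ≤ V n ω * γ n ω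
  hrec : ∀ n ω, m (n+1) ω = V n ω + 2 * (ε (n+1) ω * b n ω) + ε (n+1) ω ^ 2 * γ n ω
  hqrec : ∀ n ω, q (n+1) ω = Q0 n ω + ε (n+1) ω * Q1 n ω + ε (n+1) ω ^ 2 * Q2 n ω
  hQ0 : ∀ n ω, |Q0 n ω| ≤ e (n+1) ω * V n ω
  hQ1 : ∀ n ω, |Q1 n ω| ≤ 2 * e (n+1) ω * (Real.sqrt (V n ω) * Real.sqrt (γ n ω))
  hQ2 : ∀ n ω, |Q2 n ω| ≤ e (n+1) ω * γ n ω
  hqb : ∀ n ω, |q n ω| ≤ e n ω * m n ω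
  hb2 : ∀ n ω, b n ω ^ 2 = γ n ω * V n ω / D + Q0 n ω - (1 - γ n ω) ^ 2 * q n ω
  hγt : ∀ᵐ ω ∂μ, Tendsto (fun n => γ n ω) atTop (𝓝 0)
  hAt : ∀ᵐ ω ∂μ, Tendsto (fun n => Aseq (fun k => γ k ω) n) atTop atTop
  het : ∀ᵐ ω ∂μ, Tendsto (fun n => e n ω) atTop (𝓝 0)

lemma sm_rpow {Ω : Type*} {m : MeasurableSpace Ω} {f : Ω → ℝ} (hf : StronglyMeasurable f) (r : ℝ) :
    StronglyMeasurable (fun ω => (f ω) ^ r) := (hf.measurable.pow_const r).stronglyMeasurable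

lemma sm_div {Ω : Type*} {m : MeasurableSpace Ω} {f g : Ω → ℝ} (hf : StronglyMeasurable f)
    (hg : StronglyMeasurable g) : StronglyMeasurable (fun ω => f ω / g ω) :=
  (hf.measurable.div hg.measurable).stronglyMeasurable

lemma sm_A {Ω : Type*} {m0 : MeasurableSpace Ω} (F : Filtration ℕ m0) (γ : ℕ → Ω → ℝ)
    (h : ∀ n, StronglyMeasurable[F n] (γ n)) (n : ℕ) :
    StronglyMeasurable[F n] (fun ω => Aseq (fun k => γ k ω) (n+1)) := by
  have e : (fun ω => Aseq (fun k => γ k ω) (n+1)) = (fun _ => (1:ℝ)) + ∑ k ∈ range (n+1), γ k := by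
    ext ω; simp [Aseq]
  rw [e]
  exact stronglyMeasurable_const.add (Finset.stronglyMeasurable_sum _ fun k hk =>
    (h k).mono (F.mono (Nat.lt_succ_iff.mp (mem_range.mp hk))))

lemma sm_A0 {Ω : Type*} {m0 : MeasurableSpace Ω} (F : Filtration ℕ m0) (γ : ℕ → Ω → ℝ)
    (h : ∀ n, StronglyMeasurable[F n] (γ n)) (n : ℕ) :
    StronglyMeasurable[F n] (fun ω => Aseq (fun k => γ k ω) n) := by
  have e : (fun ω => Aseq (fun k => γ k ω) n) = (fun _ => (1:ℝ)) + ∑ k ∈ range n, γ k := by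
    ext ω; simp [Aseq]
  rw [e]
  exact stronglyMeasurable_const.add (Finset.stronglyMeasurable_sum _ fun k hk =>
    (h k).mono (F.mono (mem_range.mp hk).le))

namespace Core
variable {Ω : Type*} {m0 : MeasurableSpace Ω} {μ : Measure Ω} [IsProbabilityMeasure μ]
  {F : Filtration ℕ m0} {ε : ℕ → Ω → ℝ} {σ a D : ℝ} {γ V b m q Q0 Q1 Q2 e : ℕ → Ω → ℝ}

lemma V0 (c : Core μ F ε σ a D γ V b m q Q0 Q1 Q2 e) (n : ℕ) (ω : Ω) : 0 ≤ V n ω := by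
  rw [c.hV]; exact mul_nonneg (by linarith [c.hγ1 n ω]) (c.hm0 n ω)

lemma Vm (c : Core μ F ε σ a D γ V b m q Q0 Q1 Q2 e) (n : ℕ) (ω : Ω) : V n ω ≤ m n ω := by
  rw [c.hV]; nlinarith [c.hγ0 n ω, c.hm0 n ω]

lemma ζi (c : Core μ F ε σ a D γ V b m q Q0 Q1 Q2 e) (n : ℕ) :
    Integrable (fun ω => 1 + |ε (n + 1) ω| ^ a) μ := (integrable_const 1).add (c.hmomint n)

lemma ζC (c : Core μ F ε σ a D γ V b m q Q0 Q1 Q2 e) :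
    ∀ᵐ ω ∂μ, ∃ C : ℝ, ∀ n, (μ[fun ω => 1 + |ε (n + 1) ω| ^ a|F n]) ω ≤ C := by
  have h : ∀ n, μ[fun ω => 1 + |ε (n + 1) ω| ^ a|F n] =ᵐ[μ]
      fun ω => 1 + (μ[fun ω => |ε (n + 1) ω| ^ a|F n]) ω := by
    intro n
    have h1 := condExp_add (integrable_const (μ := μ) (1:ℝ)) (c.hmomint n) (F n)
    have h2 : μ[fun _ => (1:ℝ)|F n] = fun _ => 1 := condExp_const (F.le n) 1
    rw [h2] at h1
    exact h1
  filter_upwards [ae_all_iff.mpr h, c.hmom] with ω h1 ⟨C, h2⟩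
  exact ⟨1 + C, fun n => by rw [h1 n]; linarith [h2 n]⟩

lemma eps_le (x u : ℝ) (hu : 0 ≤ u) (hua : u ≤ a) : |x| ^ u ≤ 1 + |x| ^ a :=
  aux_rpow_le_one_add _ _ _ (abs_nonneg _) hu hua

lemma sq_le (x : ℝ) (hua : 2 ≤ a) : x ^ 2 ≤ 1 + |x| ^ a := by
  have := eps_le (a := a) x 2 (by norm_num) hua
  rwa [show (2:ℝ) = ((2:ℕ):ℝ) by norm_num, Real.rpow_natCast, sq_abs] at this

lemma step1 (c : Core μ F ε σ a D γ V b m q Q0 Q1 Q2 e) (t r : ℝ) (ht : 1 < t) (hr : 1 < r)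
    (hta : 2 * t ≤ a) :
    ∀ᵐ ω ∂μ, (∃ l, Tendsto (fun n => m n ω ^ t / (Aseq (fun k => γ k ω) n) ^ r) atTop (𝓝 l)) ∧
      Summable (fun n => γ n ω * m n ω ^ t / (Aseq (fun k => γ k ω) (n+1)) ^ r) := by
  obtain ⟨C, hC, HC⟩ := aux_RTbig t ht.le
  set A : ℕ → Ω → ℝ := fun n ω => Aseq (fun k => γ k ω) n with hA
  have hA1 : ∀ n ω, 1 ≤ A n ω := fun n ω => Aseq_ge _ (fun k => c.hγ0 k ω) n
  have hAs : ∀ n ω, A n ω ≤ A (n+1) ω := fun n ω => Aseq_mono _ (fun k => c.hγ0 k ω) n.le_succ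
  have hAr : ∀ n ω, 1 ≤ A n ω ^ r := fun n ω => Real.one_le_rpow (hA1 n ω) (by linarith)
  have hArs : ∀ n ω, A n ω ^ r ≤ A (n+1) ω ^ r := fun n ω =>
    Real.rpow_le_rpow (by linarith [hA1 n ω]) (hAs n ω) (by linarith)
  have hAm : ∀ n, StronglyMeasurable[F n] (fun ω => A (n+1) ω ^ r) := fun n =>
    sm_rpow (sm_A F γ c.hγm n) r
  have hmt0 : ∀ n ω, 0 ≤ m n ω ^ t := fun n ω => Real.rpow_nonneg (c.hm0 n ω) _
  have hVt : ∀ n ω, V n ω ^ t ≤ m n ω ^ t := fun n ω =>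
    Real.rpow_le_rpow (c.V0 n ω) (c.Vm n ω) (by linarith)
  have hVt1 : ∀ n ω, V n ω ^ (t-1) ≤ m n ω ^ (t-1) := fun n ω =>
    Real.rpow_le_rpow (c.V0 n ω) (c.Vm n ω) (by linarith)
  have hVt0 : ∀ n ω, 0 ≤ V n ω ^ (t-1) := fun n ω => Real.rpow_nonneg (c.V0 n ω) _
  have hVt2 : ∀ n ω, V n ω ^ (t-1) ≤ 1 + m n ω ^ t := fun n ω =>
    (hVt1 n ω).trans (aux_rpow_le_one_add _ _ _ (c.hm0 n ω) (by linarith) (by linarith))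
  have hX1 : ∀ n ω, (1 + m n ω ^ t) / A (n+1) ω ^ r ≤ 1 + m n ω ^ t / A n ω ^ r := by
    intro n ω
    rw [add_div]
    have h1 : 1 / A (n+1) ω ^ r ≤ 1 := by
      rw [div_le_one (by linarith [hAr (n+1) ω])]; exact hAr _ _
    have h2 : m n ω ^ t / A (n+1) ω ^ r ≤ m n ω ^ t / A n ω ^ r :=
      div_le_div_of_nonneg_left (hmt0 n ω) (by linarith [hAr n ω]) (hArs n ω)
    linarith
  have hdiv : ∀ n ω x y, x ≤ y → x / A (n+1) ω ^ r ≤ y / A (n+1) ω ^ r := fun n ω x y h =>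
    div_le_div_of_nonneg_right h (by linarith [hAr (n+1) ω])
  refine rs_conv F (fun n ω => m n ω ^ t / A n ω ^ r) (fun n ω => γ n ω * m n ω ^ t / A (n+1) ω ^ r)
    (fun n ω => 2 * t * b n ω * V n ω ^ (t-1) / A (n+1) ω ^ r)
    (fun n ω => C * (γ n ω * (V n ω ^ (t-1) + 1)) / A (n+1) ω ^ r)
    (fun n ω => γ n ω / A (n+1) ω ^ r) (fun n => ε (n+1)) (fun n ω => 1 + |ε (n + 1) ω| ^ a)
    (2 * t + 2 * C) (1 / (r-1)) (by linarith) ?_ ?_ ?_ ?_ ?_ ?_ ?_ ?_ ?_ ?_ ?_ ?_ ?_ (fun n => c.hεm (n+1))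
    (fun n => c.hεi (n+1)) c.hmds c.ζi ?_ c.ζC ?_
  · intro n
    exact sm_div (sm_rpow (c.hmm n) t) (sm_rpow (sm_A0 F γ c.hγm n) r)
  · intro n
    exact sm_div ((c.hγm n).mul (sm_rpow (c.hmm n) t)) (hAm n)
  · intro n
    exact sm_div ((stronglyMeasurable_const.mul (c.hbm n)).mul (sm_rpow (c.hVm n) _)) (hAm n)
  · intro n
    exact sm_div (stronglyMeasurable_const.mul ((c.hγm n).mul ((sm_rpow (c.hVm n) _).add
      stronglyMeasurable_const))) (hAm n)
  · intro n
    exact sm_div (c.hγm n) (hAm n)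
  · intro n ω
    exact div_nonneg (hmt0 n ω) (by linarith [hAr n ω])
  · intro n ω
    exact div_nonneg (mul_nonneg (c.hγ0 n ω) (hmt0 n ω)) (by linarith [hAr (n+1) ω])
  · intro n ω
    exact div_nonneg (c.hγ0 n ω) (by linarith [hAr (n+1) ω])
  · intro n ω
    exact aux_sumA _ (fun k => c.hγ0 k ω) r hr n
  · intro n ω
    have h0 := c.V0 n ω
    have hγ0 := c.hγ0 n ω
    have hγ1 := c.hγ1 n ω
    have hs : Real.sqrt (V n ω) ^ 2 = V n ω := Real.sq_sqrt h0
    have hw : (|ε (n+1) ω| * Real.sqrt (γ n ω)) ^ 2 = ε (n+1) ω ^ 2 * γ n ω := by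
      rw [mul_pow, sq_abs, Real.sq_sqrt (c.hγ0 n ω)]
    have hB : |ε (n+1) ω * b n ω| ≤ Real.sqrt (V n ω) * (|ε (n+1) ω| * Real.sqrt (γ n ω)) := by
      rw [abs_mul]
      have : |b n ω| ≤ Real.sqrt (V n ω) * Real.sqrt (γ n ω) := by
        rw [← Real.sqrt_mul h0]; exact Real.abs_le_sqrt (c.hb n ω)
      have := mul_le_mul_of_nonneg_left this (abs_nonneg (ε (n+1) ω))
      linarith
    have h1 := HC _ _ _ (by positivity) (Real.sqrt_nonneg _) hB
    rw [hs, hw, ← c.hrec] at h1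
    set z := 1 + |ε (n+1) ω| ^ a with hz
    have hz0 : 0 ≤ z := by positivity
    have h2 : V n ω ^ (t-1) * (ε (n+1) ω ^ 2 * γ n ω) + (ε (n+1) ω ^ 2 * γ n ω) ^ t
        ≤ γ n ω * (V n ω ^ (t-1) + 1) * z := by
      have e1 : ε (n+1) ω ^ 2 ≤ z := sq_le _ (by linarith)
      have e2 : (ε (n+1) ω ^ 2 * γ n ω) ^ t ≤ z * γ n ω := by
        rw [Real.mul_rpow (by positivity) (c.hγ0 n ω)]
        have e3 : (ε (n+1) ω ^ 2) ^ t ≤ z := by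
          rw [← sq_abs, ← Real.rpow_natCast, ← Real.rpow_mul (abs_nonneg _)]
          exact eps_le _ _ (by push_cast; linarith) (by push_cast; linarith)
        have e4 : γ n ω ^ t ≤ γ n ω := by
          have := Real.rpow_le_rpow_of_exponent_ge' hγ0 hγ1 (by norm_num) ht.le
          rwa [Real.rpow_one] at this
        exact mul_le_mul e3 e4 (by positivity) hz0
      have e5 := mul_le_mul_of_nonneg_left e1 (mul_nonneg (hVt0 n ω) hγ0)
      linarith
    have h3 : V n ω ^ t ≤ m n ω ^ t - γ n ω * m n ω ^ t := by
      rw [c.hV, Real.mul_rpow (by linarith) (c.hm0 n ω)]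
      have : (1 - γ n ω) ^ t ≤ 1 - γ n ω := by
        have := Real.rpow_le_rpow_of_exponent_ge' (by linarith : 0 ≤ 1 - γ n ω) (by linarith) (by norm_num) ht.le
        rwa [Real.rpow_one] at this
      nlinarith [hmt0 n ω]
    have h4 : m (n+1) ω ^ t ≤ m n ω ^ t - γ n ω * m n ω ^ t + 2 * t * b n ω * V n ω ^ (t-1) * ε (n+1) ω
        + C * (γ n ω * (V n ω ^ (t-1) + 1)) * z := by
      have := mul_le_mul_of_nonneg_left h2 hC
      linarith
    have h5 := hdiv n ω _ _ h4
    have h6 : m n ω ^ t / A (n+1) ω ^ r ≤ m n ω ^ t / A n ω ^ r :=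
      div_le_div_of_nonneg_left (hmt0 n ω) (by linarith [hAr n ω]) (hArs n ω)
    refine h5.trans ?_
    rw [add_div, add_div, sub_div, div_mul_eq_mul_div, div_mul_eq_mul_div]
    linarith
  · intro n ω
    have h0 := c.V0 n ω
    have hb1 : |b n ω| ≤ (V n ω + 1) / 2 := by
      have h1 := c.hb n ω
      have h2 : V n ω * γ n ω ≤ V n ω := by nlinarith [c.hγ1 n ω]
      have h3 := sq_abs (b n ω)
      nlinarith [sq_nonneg (|b n ω| - 1)]
    have hVV : V n ω * V n ω ^ (t-1) = V n ω ^ t := by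
      rcases h0.eq_or_lt with h | h
      · rw [← h, zero_mul, Real.zero_rpow (by linarith)]
      · nth_rewrite 1 [← Real.rpow_one (V n ω)]
        rw [← Real.rpow_add h]; congr 1; ring
    have h1 : |b n ω| * V n ω ^ (t-1) ≤ 1 + m n ω ^ t := by
      have := mul_le_mul_of_nonneg_right hb1 (hVt0 n ω)
      nlinarith [hVt2 n ω, hVt n ω]
    have h2 : |2 * t * b n ω * V n ω ^ (t-1) / A (n+1) ω ^ r| =
        2 * t * ((|b n ω| * V n ω ^ (t-1)) / A (n+1) ω ^ r) := by
      rw [abs_div, abs_of_pos (by linarith [hAr (n+1) ω] : 0 < A (n+1) ω ^ r), abs_mul, abs_mul,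
        abs_of_nonneg (hVt0 n ω), abs_of_pos (by linarith : 0 < 2 * t)]
      ring
    rw [h2]
    have h3 := (hdiv n ω _ _ h1).trans (hX1 n ω)
    have h4 : 0 ≤ 1 + m n ω ^ t / A n ω ^ r := by
      have := div_nonneg (hmt0 n ω) (by linarith [hAr n ω] : 0 ≤ A n ω ^ r); linarith
    nlinarith [mul_nonneg hC h4]
  · intro n ω
    exact div_nonneg (mul_nonneg hC (mul_nonneg (c.hγ0 n ω) (by linarith [hVt0 n ω])))
      (by linarith [hAr (n+1) ω])
  · intro n ω
    have h1 : γ n ω * (V n ω ^ (t-1) + 1) ≤ 2 * (1 + m n ω ^ t) := by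
      nlinarith [hVt2 n ω, hVt0 n ω, c.hγ0 n ω, c.hγ1 n ω, hmt0 n ω]
    have h2 : C * (γ n ω * (V n ω ^ (t-1) + 1)) / A (n+1) ω ^ r ≤ C * (2 * (1 + m n ω ^ t)) / A (n+1) ω ^ r :=
      hdiv n ω _ _ (mul_le_mul_of_nonneg_left h1 hC)
    refine h2.trans ?_
    have h3 := hX1 n ω
    have h4 : 0 ≤ 1 + m n ω ^ t / A n ω ^ r := by
      have := div_nonneg (hmt0 n ω) (by linarith [hAr n ω] : 0 ≤ A n ω ^ r); linarith
    have h5 : C * (2 * (1 + m n ω ^ t)) / A (n+1) ω ^ r = 2 * C * ((1 + m n ω ^ t) / A (n+1) ω ^ r) := by ring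
    rw [h5]
    nlinarith [mul_le_mul_of_nonneg_left h3 hC]
  · intro n ω
    have := eps_le (a := a) (ε (n+1) ω) 1 (by norm_num) (by linarith)
    rwa [Real.rpow_one] at this
  · intro K hK
    set δ : ℝ := 1 / (2 * (K * C + 1)) with hδ
    have hKC : 0 ≤ K * C := mul_nonneg hK hC
    have hδ0 : 0 < δ := by positivity
    have hδ1 : K * C * δ ≤ 1 / 2 := by
      rw [hδ, mul_one_div, div_le_div_iff₀ (by positivity) (by norm_num)]; linarith
    refine ⟨K * C * ((1/δ) ^ (t-1) + 1), by positivity, fun n ω => ?_⟩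
    have h1 := (hVt1 n ω).trans (aux_young t δ _ ht hδ0 (c.hm0 n ω))
    have h2 : K * C * (γ n ω * (V n ω ^ (t-1) + 1)) ≤ γ n ω * m n ω ^ t / 2 + K * C * ((1/δ) ^ (t-1) + 1) * γ n ω := by
      have h3 := mul_le_mul_of_nonneg_left h1 (mul_nonneg hKC (c.hγ0 n ω))
      have h4 := mul_le_mul_of_nonneg_right hδ1 (mul_nonneg (c.hγ0 n ω) (hmt0 n ω))
      nlinarith
    have h5 := hdiv n ω _ _ h2
    calc _ = K * C * (γ n ω * (V n ω ^ (t-1) + 1)) / A (n+1) ω ^ r := by ring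
      _ ≤ _ := h5
      _ = _ := by ring

end Core

end

section

lemma det1 (γ y : ℕ → ℝ) (hγ0 : ∀ k, 0 ≤ γ k) (hγ1 : ∀ k, γ k ≤ 1) (hy : ∀ k, 0 ≤ y k)
    (hA : Tendsto (Aseq γ) atTop atTop) (r : ℝ) (hr : 1 < r) (hr2 : r ≤ 2)
    (hl : ∃ l, Tendsto (fun n => (y n / Aseq γ n) ^ r) atTop (𝓝 l))
    (hs : Summable (fun n => γ n * (y n / Aseq γ (n+1)) ^ r)) :
    Tendsto (fun n => y n / Aseq γ n) atTop (𝓝 0) ∧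
      Summable (fun n => γ n * ((1 + y n) / Aseq γ (n+1)) ^ r) ∧
      Summable (fun n => γ n * ((1 + y n) / Aseq γ (n+1)) ^ (2:ℝ)) := by
  obtain ⟨l, hl⟩ := hl
  have hA1 := Aseq_ge γ hγ0
  have hAp : ∀ n, 0 < Aseq γ n := fun n => by linarith [hA1 n]
  have hyA : ∀ n, 0 ≤ y n / Aseq γ n := fun n => div_nonneg (hy n) (hAp n).le
  have hyA' : ∀ n, 0 ≤ y n / Aseq γ (n+1) := fun n => div_nonneg (hy n) (hAp (n+1)).le
  have hle : ∀ n, y n / Aseq γ (n+1) ≤ y n / Aseq γ n := fun n =>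
    div_le_div_of_nonneg_left (hy n) (hAp n) (Aseq_mono γ hγ0 n.le_succ)
  have hl0 : l = 0 := by
    by_contra hne
    have h0 : 0 ≤ l := ge_of_tendsto' hl fun n => Real.rpow_nonneg (hyA n) _
    have hpos : 0 < l := lt_of_le_of_ne h0 (Ne.symm hne)
    have hκ : 0 < l / 2 / 2 ^ r := by positivity
    have hs2 : Summable fun n => γ n * (l / 2 / 2 ^ r) := by
      refine Summable.of_norm_bounded_eventually_nat hs ?_
      filter_upwards [hl.eventually (lt_mem_nhds (half_lt_self hpos))] with n hn
      rw [Real.norm_of_nonneg (mul_nonneg (hγ0 n) hκ.le)]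
      refine mul_le_mul_of_nonneg_left ?_ (hγ0 n)
      have h2 : y n / Aseq γ n / 2 ≤ y n / Aseq γ (n+1) := by
        rw [div_div]
        refine div_le_div_of_nonneg_left (hy n) (hAp _) ?_
        rw [Aseq_succ]; linarith [hγ1 n, hA1 n]
      have h3 := Real.rpow_le_rpow (by linarith [hyA n]) h2 (by linarith : 0 ≤ r)
      rw [Real.div_rpow (hyA n) (by norm_num)] at h3
      refine le_trans ?_ h3
      exact div_le_div_of_nonneg_right hn.le (by positivity)
    have hs3 : Summable γ := by
      have := hs2.mul_right (l / 2 / 2 ^ r)⁻¹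
      refine this.congr fun n => ?_
      field_simp
    obtain ⟨n, hn⟩ := (hA.eventually (eventually_gt_atTop (1 + ∑' k, γ k))).exists
    have := hs3.sum_le_tsum (range n) (fun k _ => hγ0 k)
    simp only [Aseq] at hn
    linarith
  subst hl0
  have hlim : Tendsto (fun n => y n / Aseq γ n) atTop (𝓝 0) := by
    have := hl.rpow_const (p := 1 / r) (Or.inr (by positivity))
    rw [Real.zero_rpow (by positivity)] at this
    refine this.congr fun n => ?_
    rw [← Real.rpow_mul (hyA n), mul_one_div, div_self (by linarith), Real.rpow_one]
  have hs2 : Summable (fun n => γ n * (y n / Aseq γ (n+1)) ^ (2:ℝ)) := by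
    refine Summable.of_norm_bounded_eventually_nat hs ?_
    filter_upwards [hlim.eventually (gt_mem_nhds one_pos)] with n hn
    rw [Real.norm_of_nonneg (mul_nonneg (hγ0 n) (Real.rpow_nonneg (hyA' n) _))]
    refine mul_le_mul_of_nonneg_left ?_ (hγ0 n)
    exact Real.rpow_le_rpow_of_exponent_ge' (hyA' n) ((hle n).trans hn.le) (by linarith) hr2
  have fin : ∀ t : ℝ, 1 < t → Summable (fun n => γ n * (y n / Aseq γ (n+1)) ^ t) →
      Summable (fun n => γ n * ((1 + y n) / Aseq γ (n+1)) ^ t) := by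
    intro t ht h
    have hsA : Summable (fun n => γ n / Aseq γ (n+1) ^ t) :=
      summable_of_sum_range_le (fun n => div_nonneg (hγ0 n) (Real.rpow_nonneg (hAp _).le _))
        (aux_sumA γ hγ0 t ht)
    refine Summable.of_nonneg_of_le (fun n => mul_nonneg (hγ0 n) (Real.rpow_nonneg
      (div_nonneg (by linarith [hy n]) (hAp _).le) _)) (fun n => ?_) ((hsA.add h).mul_left (2 ^ t))
    have h1 := aux_rpow_add_le t (1 / Aseq γ (n+1)) (y n / Aseq γ (n+1)) (by linarith)
      (by have := hAp (n+1); positivity) (hyA' n)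
    rw [← add_div, Real.div_rpow zero_le_one (hAp _).le, Real.one_rpow] at h1
    have h2 := mul_le_mul_of_nonneg_left h1 (hγ0 n)
    refine h2.trans (le_of_eq ?_)
    ring
  exact ⟨hlim, fin r hr hs, fin 2 (by norm_num) hs2⟩

namespace Core
variable {Ω : Type*} {m0 : MeasurableSpace Ω} {μ : Measure Ω} [IsProbabilityMeasure μ]
  {F : Filtration ℕ m0} {ε : ℕ → Ω → ℝ} {σ a D : ℝ} {γ V b m q Q0 Q1 Q2 e : ℕ → Ω → ℝ}

def rexp (a : ℝ) (p : ℕ) : ℝ := min 2 (a / (2 * p))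

lemma rexp_gt (p : ℕ) (hp : 1 ≤ p) (ha : 2 * p < a) : 1 < rexp a p := by
  have : (1:ℝ) ≤ p := by exact_mod_cast hp
  refine lt_min (by norm_num) ?_
  rw [lt_div_iff₀ (by linarith)]; linarith

lemma rexp_le (p : ℕ) : rexp a p ≤ 2 := min_le_left _ _

lemma rexp_mul (p : ℕ) (hp : 1 ≤ p) : 2 * (p * rexp a p) ≤ a := by
  have : (1:ℝ) ≤ p := by exact_mod_cast hp
  have h : rexp a p ≤ a / (2 * p) := min_le_right _ _
  rw [le_div_iff₀ (by linarith)] at h; linarith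

lemma step1b (c : Core μ F ε σ a D γ V b m q Q0 Q1 Q2 e) (p : ℕ) (hp : 1 ≤ p) (ha : 2 * p < a) :
    ∀ᵐ ω ∂μ, Tendsto (fun n => m n ω ^ p / Aseq (fun k => γ k ω) n) atTop (𝓝 0) ∧
      Summable (fun n => γ n ω * ((1 + m n ω ^ p) / Aseq (fun k => γ k ω) (n+1)) ^ rexp a p) ∧
      Summable (fun n => γ n ω * ((1 + m n ω ^ p) / Aseq (fun k => γ k ω) (n+1)) ^ (2:ℝ)) := by
  have hr := rexp_gt p hp ha
  have hp1 : (1:ℝ) ≤ p := by exact_mod_cast hp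
  filter_upwards [c.hAt, c.step1 (p * rexp a p) (rexp a p) (by nlinarith) hr (rexp_mul p hp)] with ω hA h
  have hA1 := Aseq_ge (fun k => γ k ω) (fun k => c.hγ0 k ω)
  have e : ∀ n j, (m n ω ^ p / Aseq (fun k => γ k ω) j) ^ rexp a p
      = m n ω ^ (p * rexp a p) / Aseq (fun k => γ k ω) j ^ rexp a p := by
    intro n j
    rw [Real.div_rpow (pow_nonneg (c.hm0 n ω) _) (by linarith [hA1 j]), ← Real.rpow_natCast,
      ← Real.rpow_mul (c.hm0 n ω)]
  refine det1 (fun k => γ k ω) (fun n => m n ω ^ p) (fun k => c.hγ0 k ω) (fun k => c.hγ1 k ω)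
    (fun k => pow_nonneg (c.hm0 k ω) _) hA _ hr (rexp_le p) ?_ ?_
  · simp_rw [e]; exact h.1
  · simp_rw [e]
    refine h.2.congr fun n => ?_
    rw [mul_div_assoc]

lemma noise_o (c : Core μ F ε σ a D γ V b m q Q0 Q1 Q2 e) (p : ℕ) (t : ℝ) (ht : 1 < t) (ht2 : t ≤ 2)
    (hsum : ∀ᵐ ω ∂μ, Summable (fun n => γ n ω * ((1 + m n ω ^ p) / Aseq (fun k => γ k ω) (n+1)) ^ t))
    (ξ h φ : ℕ → Ω → ℝ) (C0 : ℝ) (hC0 : 0 ≤ C0)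
    (hξm : ∀ n, StronglyMeasurable[F (n+1)] (ξ n)) (hξi : ∀ n, Integrable (ξ n) μ)
    (hξ0 : ∀ n, μ[ξ n|F n] =ᵐ[μ] 0)
    (hbd : ∀ n ω, |ξ n ω| ^ t ≤ C0 * (1 + |ε (n+1) ω| ^ a) + h n ω)
    (hhm : ∀ n, StronglyMeasurable[F n] (h n))
    (hhC : ∀ᵐ ω ∂μ, ∃ C : ℝ, ∀ n, h n ω ≤ C)
    (hφm : ∀ n, StronglyMeasurable[F n] (φ n))
    (hφ : ∀ᵐ ω ∂μ, ∃ C : ℝ, ∀ n, |φ n ω| ^ t ≤ C * (γ n ω * (1 + m n ω ^ p) ^ t)) :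
    ∀ᵐ ω ∂μ, (fun n => ∑ k ∈ range n, φ k ω * ξ k ω) =o[atTop] (Aseq (fun k => γ k ω)) := by
  have key := mart_conv F t ht ht2 ξ (fun n ω => 1 + |ε (n+1) ω| ^ a) h
    (fun n ω => φ n ω / Aseq (fun k => γ k ω) (n+1)) C0 hC0 hξm hξi hξ0 c.ζi
    (fun n ω => by positivity) c.ζC hbd hhm hhC
    (fun n => sm_div (hφm n) (sm_A F γ c.hγm n)) ?_
  · filter_upwards [key, c.hAt] with ω h1 hA
    have hA1 := Aseq_ge (fun k => γ k ω) (fun k => c.hγ0 k ω)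
    refine aux_kron _ (Aseq_mono _ (fun k => c.hγ0 k ω)) (fun n => by linarith [hA1 n]) hA _ ?_
    obtain ⟨l, hl⟩ := h1
    refine ⟨l, hl.congr fun n => sum_congr rfl fun k _ => ?_⟩
    ring
  · filter_upwards [hsum, hφ] with ω h1 ⟨C, hC⟩
    have hA1 := Aseq_ge (fun k => γ k ω) (fun k => c.hγ0 k ω)
    refine Summable.of_nonneg_of_le (fun n => by positivity) (fun n => ?_) (h1.mul_left C)
    have hAp : 0 < Aseq (fun k => γ k ω) (n+1) := by linarith [hA1 (n+1)]
    rw [abs_div, abs_of_pos hAp, Real.div_rpow (abs_nonneg _) hAp.le,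
      Real.div_rpow (by have := pow_nonneg (c.hm0 n ω) p; linarith) hAp.le]
    have := div_le_div_of_nonneg_right (hC n) (Real.rpow_nonneg hAp.le t)
    refine this.trans (le_of_eq ?_)
    ring

lemma M1 (c : Core μ F ε σ a D γ V b m q Q0 Q1 Q2 e) (p : ℕ) (hp : 1 ≤ p) (ha : 2 * p < a)
    (φ : ℕ → Ω → ℝ) (hφm : ∀ n, StronglyMeasurable[F n] (φ n))
    (hφ : ∀ᵐ ω ∂μ, ∃ C : ℝ, ∀ n, φ n ω ^ 2 ≤ C * (γ n ω * (1 + m n ω ^ p) ^ 2)) :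
    ∀ᵐ ω ∂μ, (fun n => ∑ k ∈ range n, φ k ω * ε (k+1) ω) =o[atTop] (Aseq (fun k => γ k ω)) := by
  have hp1 : (1:ℝ) ≤ p := by exact_mod_cast hp
  refine c.noise_o p 2 (by norm_num) le_rfl ((c.step1b p hp ha).mono fun ω h => h.2.2)
    (fun n => ε (n+1)) (fun _ _ => 0) φ 1 zero_le_one (fun n => c.hεm (n+1)) (fun n => c.hεi (n+1))
    c.hmds ?_ (fun n => stronglyMeasurable_const) (Eventually.of_forall fun ω => ⟨0, fun n => le_rfl⟩)
    hφm ?_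
  · intro n ω
    have := eps_le (a := a) (ε (n+1) ω) 2 (by norm_num) (by linarith)
    linarith
  · filter_upwards [hφ] with ω ⟨C, hC⟩
    refine ⟨C, fun n => ?_⟩
    have := hC n
    simpa using this

lemma rpow_bd {t : ℝ} (ht : 1 < t) {x C g y : ℝ} (hg0 : 0 ≤ g) (hg1 : g ≤ 1) (hy : 0 ≤ y)
    (h : |x| ≤ C * (g * y)) : |x| ^ t ≤ |C| ^ t * (g * y ^ t) := by
  have h1 : |x| ≤ |C| * (g * y) := h.trans (mul_le_mul_of_nonneg_right (le_abs_self C) (by positivity))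
  have h2 := Real.rpow_le_rpow (abs_nonneg _) h1 (by linarith : 0 ≤ t)
  rw [Real.mul_rpow (abs_nonneg _) (by positivity), Real.mul_rpow hg0 hy] at h2
  refine h2.trans (mul_le_mul_of_nonneg_left (mul_le_mul_of_nonneg_right ?_ (by positivity)) (by positivity))
  have := Real.rpow_le_rpow_of_exponent_ge' hg0 hg1 (by norm_num) ht.le
  rwa [Real.rpow_one] at this

lemma M2 (c : Core μ F ε σ a D γ V b m q Q0 Q1 Q2 e) (p : ℕ) (hp : 1 ≤ p) (ha : 2 * p < a)
    (φ : ℕ → Ω → ℝ) (hφm : ∀ n, StronglyMeasurable[F n] (φ n))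
    (hφ : ∀ᵐ ω ∂μ, ∃ C : ℝ, ∀ n, |φ n ω| ≤ C * (γ n ω * (1 + m n ω ^ p))) :
    ∀ᵐ ω ∂μ, (fun n => ∑ k ∈ range n, φ k ω * (ε (k+1) ω ^ 2 - σ ^ 2)) =o[atTop]
      (Aseq (fun k => γ k ω)) := by
  have hp1 : (1:ℝ) ≤ p := by exact_mod_cast hp
  have hr := rexp_gt p hp ha
  have hi2 : ∀ n, Integrable (fun ω => ε (n+1) ω ^ 2) μ := by
    intro n
    refine Integrable.mono' (c.ζi n) ?_ (Eventually.of_forall fun ω => ?_)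
    · exact (((c.hεm (n+1)).pow 2).mono (F.le _)).aestronglyMeasurable
    · rw [Real.norm_of_nonneg (by positivity)]; exact sq_le _ (by linarith)
  refine c.noise_o p (rexp a p) hr (rexp_le p) ((c.step1b p hp ha).mono fun ω h => h.2.1)
    (fun n ω => ε (n+1) ω ^ 2 - σ ^ 2) (fun _ _ => 2 ^ rexp a p * (σ ^ 2) ^ rexp a p) φ (2 ^ rexp a p) (by positivity)
    (fun n => ((c.hεm (n+1)).pow 2).sub stronglyMeasurable_const)
    (fun n => (hi2 n).sub (integrable_const _))
    ?_ ?_ (fun n => stronglyMeasurable_const) (Eventually.of_forall fun ω => ⟨_, fun n => le_rfl⟩)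
    hφm ?_
  · intro n
    have h1 := condExp_sub (hi2 n) (integrable_const (μ := μ) (σ ^ 2)) (F n)
    have h2 : μ[fun _ => σ ^ 2|F n] = fun _ => σ ^ 2 := condExp_const (F.le n) _
    rw [h2] at h1
    filter_upwards [h1, c.hvar n] with ω e1 e2
    refine e1.trans ?_
    simp [e2]
  · intro n ω
    have h1 : |ε (n+1) ω ^ 2 - σ ^ 2| ≤ ε (n+1) ω ^ 2 + σ ^ 2 := by
      rw [abs_le]; constructor <;> nlinarith [sq_nonneg (ε (n+1) ω), sq_nonneg σ]
    have h2 := (Real.rpow_le_rpow (abs_nonneg _) h1 (by linarith : 0 ≤ rexp a p)).trans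
      (aux_rpow_add_le (rexp a p) _ _ (by linarith) (sq_nonneg _) (sq_nonneg _))
    have h3 : (ε (n+1) ω ^ 2) ^ rexp a p ≤ 1 + |ε (n+1) ω| ^ a := by
      rw [← sq_abs, ← Real.rpow_natCast, ← Real.rpow_mul (abs_nonneg _)]
      have := rexp_mul (a := a) p hp
      exact eps_le _ _ (by push_cast; linarith) (by push_cast; nlinarith)
    have h4 : (0:ℝ) ≤ 2 ^ rexp a p := by positivity
    nlinarith [mul_le_mul_of_nonneg_left h3 h4]
  · filter_upwards [hφ] with ω ⟨C, hC⟩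
    exact ⟨_, fun n => rpow_bd hr (c.hγ0 n ω) (c.hγ1 n ω)
      (by have := pow_nonneg (c.hm0 n ω) p; linarith) (hC n)⟩

lemma M3 (c : Core μ F ε σ a D γ V b m q Q0 Q1 Q2 e) (p j : ℕ) (hp : 1 ≤ p) (ha : 2 * p < a) (hj : j ≤ p)
    (θ ρ : ℕ → Ω → ℝ) (hθm : ∀ n, StronglyMeasurable[F n] (θ n)) (hθ0 : ∀ n ω, 0 ≤ θ n ω)
    (hθt : ∀ᵐ ω ∂μ, Tendsto (fun n => θ n ω) atTop (𝓝 0))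
    (hO : ∀ᵐ ω ∂μ, (fun n => ∑ k ∈ range n, γ k ω * (1 + m k ω ^ j)) =O[atTop] (Aseq (fun k => γ k ω)))
    (hρ : ∀ n ω, |ρ n ω| ≤ θ n ω * (γ n ω * (1 + m n ω ^ j)) * (1 + |ε (n+1) ω| ^ (2 * p))) :
    ∀ᵐ ω ∂μ, (fun n => ∑ k ∈ range n, ρ k ω) =o[atTop] (Aseq (fun k => γ k ω)) := by
  have hp1 : (1:ℝ) ≤ p := by exact_mod_cast hp
  have hr := rexp_gt p hp ha
  set r := rexp a p with hrdef
  set g : ℕ → Ω → ℝ := fun n => μ[fun ω => |ε (n+1) ω| ^ (2*p)|F n] with hg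
  have hcast : ∀ x : ℝ, |x| ^ (2*p) = |x| ^ ((2:ℝ)*p) := by
    intro x; rw [← Real.rpow_natCast]; push_cast; rfl
  have hle : ∀ n ω, |ε (n+1) ω| ^ (2*p) ≤ 1 + |ε (n+1) ω| ^ a := by
    intro n ω
    rw [hcast]; exact eps_le _ _ (by linarith) ha.le
  have hmeas : ∀ n, StronglyMeasurable[F (n+1)] (fun ω => |ε (n+1) ω| ^ (2*p)) := by
    intro n
    have := sm_abs_rpow (c.hεm (n+1)) (2*p)
    simp_rw [hcast]; exact this
  have hi2 : ∀ n, Integrable (fun ω => |ε (n+1) ω| ^ (2*p)) μ := by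
    intro n
    refine Integrable.mono' (c.ζi n) ((hmeas n).mono (F.le _)).aestronglyMeasurable (Eventually.of_forall fun ω => ?_)
    · rw [Real.norm_of_nonneg (by positivity)]; exact hle n ω
  have hg0 : ∀ᵐ ω ∂μ, ∀ n, 0 ≤ g n ω := by
    rw [ae_all_iff]; intro n
    exact condExp_nonneg (Eventually.of_forall fun ω => by positivity)
  have hgC : ∀ᵐ ω ∂μ, ∃ C : ℝ, ∀ n, g n ω ≤ C := by
    have : ∀ᵐ ω ∂μ, ∀ n, g n ω ≤ (μ[fun ω => 1 + |ε (n + 1) ω| ^ a|F n]) ω := by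
      rw [ae_all_iff]; intro n
      exact condExp_mono (hi2 n) (c.ζi n) (Eventually.of_forall fun ω => hle n ω)
    filter_upwards [this, c.ζC] with ω h1 ⟨C, h2⟩
    exact ⟨C, fun n => (h1 n).trans (h2 n)⟩
  have hgm : ∀ n, StronglyMeasurable[F n] (g n) := fun n => stronglyMeasurable_condExp
  have hno : ∀ᵐ ω ∂μ, (fun n => ∑ k ∈ range n, (θ k ω * (γ k ω * (1 + m k ω ^ j))) *
      (|ε (k+1) ω| ^ (2*p) - g k ω)) =o[atTop] (Aseq (fun k => γ k ω)) := by
    refine c.noise_o p r hr (rexp_le p) ((c.step1b p hp ha).mono fun ω h => h.2.1)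
      (fun n ω => |ε (n+1) ω| ^ (2*p) - g n ω) (fun n ω => 2 ^ r * |g n ω| ^ r) _ (2 ^ r) (by positivity)
      (fun n => (hmeas n).sub ((hgm n).mono (F.mono n.le_succ)))
      (fun n => (hi2 n).sub integrable_condExp)
      ?_ ?_ (fun n => stronglyMeasurable_const.mul (sm_abs_rpow (hgm n) r)) ?_
      (fun n => (hθm n).mul ((c.hγm n).mul (stronglyMeasurable_const.add ((c.hmm n).pow j)))) ?_
    · intro n
      have h1 := condExp_sub (hi2 n) (integrable_condExp (μ := μ) (m := F n) (f := fun ω => |ε (n+1) ω| ^ (2*p))) (F n)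
      have h2 : μ[g n|F n] = g n := condExp_of_stronglyMeasurable (F.le n) (hgm n) integrable_condExp
      filter_upwards [h1] with ω e1
      refine e1.trans ?_
      change g n ω - (μ[g n|F n]) ω = 0
      rw [h2, sub_self]
    · intro n ω
      have h1 : |(|ε (n+1) ω| ^ (2*p)) - g n ω| ≤ |ε (n+1) ω| ^ (2*p) + |g n ω| := by
        refine (abs_sub _ _).trans ?_
        rw [abs_of_nonneg (a := |ε (n+1) ω| ^ (2*p)) (by positivity)]
      have h2 := (Real.rpow_le_rpow (abs_nonneg _) h1 (by linarith : 0 ≤ r)).trans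
        (aux_rpow_add_le r _ _ (by linarith) (by positivity) (abs_nonneg _))
      have h3 : (|ε (n+1) ω| ^ (2*p)) ^ r ≤ 1 + |ε (n+1) ω| ^ a := by
        rw [hcast, ← Real.rpow_mul (abs_nonneg _)]
        have := rexp_mul (a := a) p hp
        exact eps_le _ _ (by positivity) (by rw [← hrdef] at this; linarith)
      have h4 : (0:ℝ) ≤ 2 ^ r := by positivity
      nlinarith [mul_le_mul_of_nonneg_left h3 h4]
    · filter_upwards [hg0, hgC] with ω h0 ⟨C, hC⟩
      refine ⟨2 ^ r * C ^ r, fun n => ?_⟩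
      rw [abs_of_nonneg (h0 n)]
      exact mul_le_mul_of_nonneg_left (Real.rpow_le_rpow (h0 n) (hC n) (by linarith)) (by positivity)
    · filter_upwards [hθt] with ω ht
      obtain ⟨W, hW⟩ := ht.bddAbove_range
      refine ⟨|2 * W| ^ r, fun n => rpow_bd hr (c.hγ0 n ω) (c.hγ1 n ω)
        (by have := pow_nonneg (c.hm0 n ω) p; linarith) ?_⟩
      have hm := pow_nonneg (c.hm0 n ω) j
      have hm' := pow_nonneg (c.hm0 n ω) p
      have hg := c.hγ0 n ω
      rw [abs_of_nonneg (mul_nonneg (hθ0 n ω) (by positivity))]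
      have h1 : θ n ω ≤ W := hW ⟨n, rfl⟩
      have h2 := aux_pow_le_one_add (m n ω) j p (c.hm0 n ω) hj
      have h3 : γ n ω * (1 + m n ω ^ j) ≤ 2 * (γ n ω * (1 + m n ω ^ p)) := by nlinarith
      have h4 := mul_le_mul h1 h3 (by positivity) ((hθ0 n ω).trans h1)
      linarith
  filter_upwards [hno, hg0, hgC, hO, hθt, c.hAt] with ω h1 h0 ⟨C, hC⟩ h2 ht hA
  have h3 : (fun n => ∑ k ∈ range n, (θ k ω * (1 + g k ω)) * (γ k ω * (1 + m k ω ^ j))) =o[atTop]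
      (Aseq (fun k => γ k ω)) := by
    refine aux_inc _ (Aseq_mono _ (fun k => c.hγ0 k ω)) hA _ _ ?_ (fun k => ?_) h2
    · refine squeeze_zero (fun n => mul_nonneg (hθ0 n ω) (by linarith [h0 n]))
        (fun n => mul_le_mul_of_nonneg_left (by linarith [hC n] : 1 + g n ω ≤ 1 + C) (hθ0 n ω)) ?_
      simpa using ht.mul_const (1 + C)
    · have := pow_nonneg (c.hm0 k ω) j
      exact mul_nonneg (c.hγ0 k ω) (by linarith)
  refine (Asymptotics.IsBigO.of_norm_le fun n => ?_).trans_isLittleO (h1.add h3)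
  rw [Real.norm_eq_abs, ← sum_add_distrib]
  refine (abs_sum_le_sum_abs _ _).trans (sum_le_sum fun k _ => (hρ k ω).trans (le_of_eq ?_))
  ring

end Core

end

section

lemma aux_add_pow_two (s w : ℝ) (hs : 0 ≤ s) (hw : 0 ≤ w) (N : ℕ) : (s + w) ^ N ≤ 2 ^ N * (s ^ N + w ^ N) := by
  refine (add_pow_le hs hw N).trans ?_
  refine mul_le_mul_of_nonneg_right ?_ (by positivity)
  exact pow_le_pow_right₀ (by norm_num) (Nat.sub_le _ _)

/-- error bound used for the corrector -/
lemma err1 (n : ℕ) (V M g x : ℝ) (hV : 0 ≤ V) (hVM : V ≤ M) (hg0 : 0 ≤ g) (hg1 : g ≤ 1) :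
    (|x| * Real.sqrt g) ^ 2 * (Real.sqrt V + |x| * Real.sqrt g) ^ (2 * n)
      ≤ 2 * 2 ^ (2 * n) * ((g * (1 + M ^ (n+1))) * (1 + |x| ^ (2 * (n+2)))) := by
  have hM : 0 ≤ M := hV.trans hVM
  have hx := abs_nonneg x
  have e1 : (|x| * Real.sqrt g) ^ 2 = |x| ^ 2 * g := by rw [mul_pow, Real.sq_sqrt hg0]
  have h1 := aux_add_pow_two (Real.sqrt V) (|x| * Real.sqrt g) (Real.sqrt_nonneg _) (by positivity) (2 * n)
  have e2 : Real.sqrt V ^ (2 * n) = V ^ n := by rw [pow_mul, Real.sq_sqrt hV]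
  have e3 : (|x| * Real.sqrt g) ^ (2 * n) ≤ |x| ^ (2 * n) := by
    refine pow_le_pow_left₀ (by positivity) ?_ _
    have : Real.sqrt g ≤ 1 := by rw [Real.sqrt_le_one]; exact hg1
    nlinarith
  rw [e2] at h1
  have e4 : V ^ n ≤ 1 + M ^ (n+1) := (pow_le_pow_left₀ hV hVM n).trans
    (aux_pow_le_one_add M n (n+1) hM (Nat.le_succ n))
  have e5 : (Real.sqrt V + |x| * Real.sqrt g) ^ (2 * n) ≤ 2 ^ (2 * n) * ((1 + M ^ (n+1)) + |x| ^ (2*n)) :=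
    h1.trans (mul_le_mul_of_nonneg_left (add_le_add e4 e3) (by positivity))
  rw [e1]
  have e6 := mul_le_mul_of_nonneg_left e5 (by positivity : 0 ≤ |x| ^ 2 * g)
  refine e6.trans ?_
  have a1 := aux_pow_le_one_add |x| 2 (2 * (n+2)) hx (by omega)
  have a2 := aux_pow_le_one_add |x| (2 + 2 * n) (2 * (n+2)) hx (by omega)
  have hMn : 0 ≤ M ^ (n+1) := by positivity
  have a3 : |x| ^ 2 * ((1 + M ^ (n+1)) + |x| ^ (2*n)) ≤ 2 * ((1 + M ^ (n+1)) * (1 + |x| ^ (2 * (n+2)))) := by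
    have b1 := mul_le_mul_of_nonneg_right a1 (by positivity : 0 ≤ 1 + M ^ (n+1))
    have b2 : |x| ^ 2 * |x| ^ (2*n) = |x| ^ (2 + 2*n) := by rw [pow_add]
    have b3 : 0 ≤ |x| ^ (2 * (n+2)) := by positivity
    nlinarith
  have := mul_le_mul_of_nonneg_left a3 (by positivity : 0 ≤ (2:ℝ) ^ (2 * n) * g)
  linarith

lemma err2 (n : ℕ) (V M g x : ℝ) (hV : 0 ≤ V) (hVM : V ≤ M) (hg0 : 0 ≤ g) (hg1 : g ≤ 1) :
    (|x| * Real.sqrt g) ^ 3 * (Real.sqrt V + |x| * Real.sqrt g) ^ (2 * n + 1)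
      ≤ (2 * 2 ^ (2 * n + 1) * Real.sqrt g) * (g * (1 + M ^ (n+1))) * (1 + |x| ^ (2 * (n+2))) := by
  have hM : 0 ≤ M := hV.trans hVM
  have hx := abs_nonneg x
  have hsg := Real.sqrt_nonneg g
  have e1 : (|x| * Real.sqrt g) ^ 3 = |x| ^ 3 * (g * Real.sqrt g) := by
    rw [mul_pow, pow_succ (Real.sqrt g), Real.sq_sqrt hg0]
  have h1 := aux_add_pow_two (Real.sqrt V) (|x| * Real.sqrt g) (Real.sqrt_nonneg _) (by positivity) (2 * n + 1)
  have e2 : Real.sqrt V ^ (2 * n + 1) ≤ 1 + M ^ (n+1) := by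
    refine (aux_pow_le_one_add (Real.sqrt V) (2*n+1) (2*(n+1)) (Real.sqrt_nonneg _) (by omega)).trans ?_
    rw [pow_mul, Real.sq_sqrt hV]
    linarith [pow_le_pow_left₀ hV hVM (n+1)]
  have e3 : (|x| * Real.sqrt g) ^ (2 * n + 1) ≤ |x| ^ (2 * n + 1) := by
    refine pow_le_pow_left₀ (by positivity) ?_ _
    have : Real.sqrt g ≤ 1 := by rw [Real.sqrt_le_one]; exact hg1
    nlinarith
  have e5 : (Real.sqrt V + |x| * Real.sqrt g) ^ (2 * n + 1) ≤ 2 ^ (2 * n + 1) * ((1 + M ^ (n+1)) + |x| ^ (2*n+1)) :=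
    h1.trans (mul_le_mul_of_nonneg_left (add_le_add e2 e3) (by positivity))
  rw [e1]
  have e6 := mul_le_mul_of_nonneg_left e5 (by positivity : 0 ≤ |x| ^ 3 * (g * Real.sqrt g))
  refine e6.trans ?_
  have a1 := aux_pow_le_one_add |x| 3 (2 * (n+2)) hx (by omega)
  have a2 := aux_pow_le_one_add |x| (3 + (2 * n + 1)) (2 * (n+2)) hx (by omega)
  have hMn : 0 ≤ M ^ (n+1) := by positivity
  have a3 : |x| ^ 3 * ((1 + M ^ (n+1)) + |x| ^ (2*n+1)) ≤ 2 * ((1 + M ^ (n+1)) * (1 + |x| ^ (2 * (n+2)))) := by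
    have b1 := mul_le_mul_of_nonneg_right a1 (by positivity : 0 ≤ 1 + M ^ (n+1))
    have b2 : |x| ^ 3 * |x| ^ (2*n+1) = |x| ^ (3 + (2*n+1)) := (pow_add _ _ _).symm
    have b3 : 0 ≤ |x| ^ (2 * (n+2)) := by positivity
    nlinarith
  have := mul_le_mul_of_nonneg_left a3 (by positivity : 0 ≤ (2:ℝ) ^ (2 * n + 1) * (g * Real.sqrt g))
  linarith

lemma one_sub_pow_bd (g : ℝ) (h0 : 0 ≤ g) (h1 : g ≤ 1) (p : ℕ) :
    |1 - (1-g)^p| ≤ p * g := by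
  have h2 : (1-g)^p ≤ 1 := pow_le_one₀ (by linarith) (by linarith)
  have h3 := one_add_mul_le_pow (by linarith : (-2:ℝ) ≤ -g) p
  rw [abs_of_nonneg (by linarith)]
  have e : (1 + -g)^p = (1-g)^p := by ring_nf
  rw [e] at h3; linarith

namespace Core
variable {Ω : Type*} {m0 : MeasurableSpace Ω} {μ : Measure Ω} [IsProbabilityMeasure μ]
  {F : Filtration ℕ m0} {ε : ℕ → Ω → ℝ} {σ a D : ℝ} {γ V b m q Q0 Q1 Q2 e : ℕ → Ω → ℝ}

lemma babs (c : Core μ F ε σ a D γ V b m q Q0 Q1 Q2 e) (n : ℕ) (ω : Ω) :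
    |b n ω| ≤ Real.sqrt (V n ω) * Real.sqrt (γ n ω) := by
  rw [← Real.sqrt_mul (c.V0 n ω)]; exact Real.abs_le_sqrt (c.hb n ω)

lemma epsb (c : Core μ F ε σ a D γ V b m q Q0 Q1 Q2 e) (n : ℕ) (ω : Ω) :
    |ε (n+1) ω * b n ω| ≤ Real.sqrt (V n ω) * (|ε (n+1) ω| * Real.sqrt (γ n ω)) := by
  rw [abs_mul]
  have := mul_le_mul_of_nonneg_left (c.babs n ω) (abs_nonneg (ε (n+1) ω))
  linarith

lemma hrec' (c : Core μ F ε σ a D γ V b m q Q0 Q1 Q2 e) (n : ℕ) (ω : Ω) :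
    Real.sqrt (V n ω) ^ 2 + 2 * (ε (n+1) ω * b n ω) + (|ε (n+1) ω| * Real.sqrt (γ n ω)) ^ 2 = m (n+1) ω := by
  rw [c.hrec, mul_pow, sq_abs, Real.sq_sqrt (c.hγ0 n ω), Real.sq_sqrt (c.V0 n ω)]

lemma Vpow_bd (c : Core μ F ε σ a D γ V b m q Q0 Q1 Q2 e) (i p : ℕ) (h : i ≤ 2 * p) (n : ℕ) (ω : Ω) :
    V n ω ^ i ≤ (1 + m n ω ^ p) ^ 2 := by
  have h1 := (pow_le_pow_left₀ (c.V0 n ω) (c.Vm n ω) i).trans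
    (aux_pow_le_one_add (m n ω) i (2 * p) (c.hm0 n ω) h)
  have h2 := pow_nonneg (c.hm0 n ω) p
  have e : m n ω ^ (2 * p) = (m n ω ^ p) ^ 2 := by rw [mul_comm, pow_mul]
  rw [e] at h1
  nlinarith

lemma corr (c : Core μ F ε σ a D γ V b m q Q0 Q1 Q2 e) (n : ℕ) (ha : 2 * ((n + 2 : ℕ) : ℝ) < a)
    (hO : ∀ᵐ ω ∂μ, (fun N => ∑ k ∈ range N, γ k ω * (1 + m k ω ^ (n+1))) =O[atTop] (Aseq (fun k => γ k ω))) :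
    ∀ᵐ ω ∂μ, (fun N => ∑ k ∈ range N, (b k ω ^ 2 * V k ω ^ n - γ k ω * V k ω ^ (n+1) / D))
      =o[atTop] (Aseq (fun k => γ k ω)) := by
  obtain ⟨C, hC, HC⟩ := aux_polyG n
  set Dd : ℕ → Ω → ℝ := fun k ω => V k ω ^ n * Q1 k ω + 2 * n * b k ω * V k ω ^ (n-1) * Q0 k ω with hDd
  set P : ℕ → Ω → ℝ := fun k ω => m k ω ^ n * q k ω with hP
  set R : ℕ → Ω → ℝ := fun k ω => P (k+1) ω - V k ω ^ n * Q0 k ω - ε (k+1) ω * Dd k ω with hR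
  have hRb : ∀ k ω, |R k ω| ≤ (2 * 2 ^ (2 * n) * C * e (k+1) ω) * (γ k ω * (1 + m k ω ^ (n+1))) *
      (1 + |ε (k+1) ω| ^ (2 * (n+2))) := by
    intro k ω
    have h1 := HC (Real.sqrt (V k ω)) (ε (k+1) ω * b k ω) (|ε (k+1) ω| * Real.sqrt (γ k ω)) (e (k+1) ω)
      (Q0 k ω) (ε (k+1) ω * Q1 k ω) (ε (k+1) ω ^ 2 * Q2 k ω) (Real.sqrt_nonneg _) (by positivity)
      (c.he0 _ _) (c.epsb k ω) (by rw [Real.sq_sqrt (c.V0 k ω)]; exact c.hQ0 k ω) ?_ ?_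
    · rw [c.hrec', ← c.hqrec, Real.sq_sqrt (c.V0 k ω)] at h1
      have e1 : R k ω = m (k + 1) ω ^ n * q (k + 1) ω - V k ω ^ n * Q0 k ω -
          (V k ω ^ n * (ε (k + 1) ω * Q1 k ω) + 2 * ↑n * (ε (k + 1) ω * b k ω) * V k ω ^ (n - 1) * Q0 k ω) := by
        simp only [hR, hP, hDd]; ring
      rw [e1]
      refine h1.trans ?_
      have h2 := err1 n (V k ω) (m k ω) (γ k ω) (ε (k+1) ω) (c.V0 k ω) (c.Vm k ω) (c.hγ0 k ω) (c.hγ1 k ω)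
      have h3 := mul_le_mul_of_nonneg_left h2 (mul_nonneg hC (c.he0 (k+1) ω))
      linarith
    · rw [abs_mul]
      have := mul_le_mul_of_nonneg_left (c.hQ1 k ω) (abs_nonneg (ε (k+1) ω))
      linarith
    · rw [abs_mul, mul_pow, Real.sq_sqrt (c.hγ0 k ω), abs_of_nonneg (sq_nonneg (ε (k+1) ω)), sq_abs]
      have := mul_le_mul_of_nonneg_left (c.hQ2 k ω) (sq_nonneg (ε (k+1) ω))
      linarith
  have hRo := c.M3 (n+2) (n+1) (by omega) ha (by omega) (fun k ω => 2 * 2 ^ (2 * n) * C * e (k+1) ω) R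
    (fun k => stronglyMeasurable_const.mul (c.hem k))
    (fun k ω => mul_nonneg (by positivity) (c.he0 _ _))
    (c.het.mono fun ω h => by
      have := ((tendsto_add_atTop_iff_nat 1).mpr h).const_mul (2 * 2 ^ (2 * n) * C)
      simpa using this) hO hRb
  have hDo := c.M1 (n+2) (by omega) ha Dd
    (fun k => (((c.hVm k).pow n).mul (c.hQ1m k)).add (((stronglyMeasurable_const.mul (c.hbm k)).mul
      ((c.hVm k).pow (n-1))).mul (c.hQ0m k))) ?_
  · filter_upwards [hRo, hDo, hO, c.het, c.hAt, c.step1b (n+2) (by omega) ha] with ω h1 h2 h3 h4 hA h5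
    have hpw : ∀ k, b k ω ^ 2 * V k ω ^ n - γ k ω * V k ω ^ (n+1) / D
        = (P (k+1) ω - P k ω) - Dd k ω * ε (k+1) ω - R k ω + (1 - (1 - γ k ω) ^ (n+2)) * P k ω := by
      intro k
      simp only [hR]
      rw [c.hb2 k ω]
      have e2 : (1 - γ k ω) ^ (n+2) * P k ω = (1 - γ k ω) ^ 2 * q k ω * V k ω ^ n := by
        simp only [hP]; rw [c.hV, mul_pow]; ring
      have e3 : (1 - (1 - γ k ω) ^ (n+2)) * P k ω = P k ω - (1 - γ k ω) ^ 2 * q k ω * V k ω ^ n := by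
        rw [← e2]; ring
      rw [e3]; ring
    clear_value R Dd
    simp_rw [hpw]
    have hPn : (fun N => P N ω) =o[atTop] (Aseq (fun k => γ k ω)) := by
      have hA1 := Aseq_ge (fun k => γ k ω) (fun k => c.hγ0 k ω)
      rw [Asymptotics.isLittleO_iff_tendsto (fun N h => by have := hA1 N; linarith)]
      have hz : Tendsto (fun N => e N ω * (1 + m N ω ^ (n+2) / Aseq (fun k => γ k ω) N)) atTop (𝓝 0) := by
        simpa using h4.mul (h5.1.const_add 1)
      refine squeeze_zero_norm (fun N => ?_) hz
      have hAp : 0 < Aseq (fun k => γ k ω) N := by linarith [hA1 N]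
      rw [Real.norm_eq_abs, abs_div, abs_of_pos hAp, div_le_iff₀ hAp]
      have e1 : e N ω * (1 + m N ω ^ (n+2) / Aseq (fun k => γ k ω) N) * Aseq (fun k => γ k ω) N
          = e N ω * (Aseq (fun k => γ k ω) N + m N ω ^ (n+2)) := by field_simp
      rw [e1]
      simp only [hP]
      rw [abs_mul, abs_of_nonneg (pow_nonneg (c.hm0 N ω) n)]
      have a1 := mul_le_mul_of_nonneg_left (c.hqb N ω) (pow_nonneg (c.hm0 N ω) n)
      have a2 := aux_pow_le_one_add (m N ω) (n+1) (n+2) (c.hm0 N ω) (by omega)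
      have a3 := mul_le_mul_of_nonneg_left (a2.trans (by linarith [hA1 N] :
        1 + m N ω ^ (n+2) ≤ Aseq (fun k => γ k ω) N + m N ω ^ (n+2))) (c.he0 N ω)
      have e3 : m N ω ^ n * (e N ω * m N ω) = e N ω * m N ω ^ (n+1) := by ring
      linarith
    have h6 : (fun N => ∑ k ∈ range N, ((n+2:ℕ) * e k ω) * (γ k ω * (1 + m k ω ^ (n+1)))) =o[atTop]
        (Aseq (fun k => γ k ω)) := by
      refine aux_inc _ (Aseq_mono _ (fun k => c.hγ0 k ω)) hA _ _ (by simpa using h4.const_mul ((n+2:ℕ):ℝ))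
        (fun k => mul_nonneg (c.hγ0 k ω) (by have := pow_nonneg (c.hm0 k ω) (n+1); linarith)) h3
    have h7 : (fun N => ∑ k ∈ range N, (1 - (1 - γ k ω) ^ (n+2)) * P k ω) =o[atTop]
        (Aseq (fun k => γ k ω)) := by
      refine (Asymptotics.IsBigO.of_norm_le fun N => ?_).trans_isLittleO h6
      rw [Real.norm_eq_abs]
      refine (abs_sum_le_sum_abs _ _).trans (sum_le_sum fun k _ => ?_)
      rw [abs_mul]
      have a1 := one_sub_pow_bd (γ k ω) (c.hγ0 k ω) (c.hγ1 k ω) (n+2)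
      have a2 : |P k ω| ≤ e k ω * (1 + m k ω ^ (n+1)) := by
        simp only [hP]
        rw [abs_mul, abs_of_nonneg (pow_nonneg (c.hm0 k ω) n)]
        have a1 := mul_le_mul_of_nonneg_left (c.hqb k ω) (pow_nonneg (c.hm0 k ω) n)
        have e3 : m k ω ^ n * (e k ω * m k ω) = e k ω * m k ω ^ (n+1) := by ring
        linarith [c.he0 k ω]
      have a3 := mul_le_mul a1 a2 (abs_nonneg _) (mul_nonneg (Nat.cast_nonneg _) (c.hγ0 k ω))
      linarith
    have h8 := (((hPn.sub (const_isLittleO _ hA (P 0 ω))).sub h2).sub h1).add h7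
    refine h8.congr_left fun N => ?_
    rw [sum_add_distrib, sum_sub_distrib, sum_sub_distrib, sum_range_sub (fun k => P k ω)]
  · filter_upwards [c.het] with ω h
    obtain ⟨W, hW⟩ := h.bddAbove_range
    refine ⟨(2 + 2 * n) ^ 2 * W ^ 2, fun k => ?_⟩
    have hV0 := c.V0 k ω
    have hg := c.hγ0 k ω
    have he := c.he0 (k+1) ω
    have heW : e (k+1) ω ≤ W := hW ⟨k+1, rfl⟩
    set sV := Real.sqrt (V k ω)
    set sg := Real.sqrt (γ k ω)
    have hsV : sV ^ 2 = V k ω := Real.sq_sqrt hV0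
    have hsg : sg ^ 2 = γ k ω := Real.sq_sqrt hg
    have hsV0 : 0 ≤ sV := Real.sqrt_nonneg _
    have hsg0 : 0 ≤ sg := Real.sqrt_nonneg _
    have hVn := pow_nonneg hV0 n
    have hD1 : |Dd k ω| ≤ (2 + 2 * n) * (e (k+1) ω * (sV * sg) * V k ω ^ n) := by
      simp only [hDd]
      refine (abs_add_le _ _).trans ?_
      have a1 : |V k ω ^ n * Q1 k ω| ≤ 2 * (e (k+1) ω * (sV * sg) * V k ω ^ n) := by
        rw [abs_mul, abs_of_nonneg hVn]
        have := mul_le_mul_of_nonneg_left (c.hQ1 k ω) hVn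
        linarith
      have a2 : |2 * n * b k ω * V k ω ^ (n-1) * Q0 k ω| ≤ 2 * n * (e (k+1) ω * (sV * sg) * V k ω ^ n) := by
        rcases Nat.eq_zero_or_pos n with h0 | h0
        · simp [h0]
        · have e1 : V k ω ^ n = V k ω ^ (n-1) * V k ω := by
            rw [← pow_succ]; congr 1; omega
          rw [abs_mul, abs_mul, abs_mul, abs_of_nonneg (pow_nonneg hV0 _), abs_of_nonneg (by positivity : 0 ≤ 2 * (n:ℝ)), e1]
          have := mul_le_mul (c.babs k ω) (c.hQ0 k ω) (abs_nonneg _) (by positivity)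
          have := mul_le_mul_of_nonneg_left this (by positivity : 0 ≤ 2 * n * V k ω ^ (n-1))
          linarith
      linarith
    have hD2 : Dd k ω ^ 2 ≤ ((2 + 2 * n) * (e (k+1) ω * (sV * sg) * V k ω ^ n)) ^ 2 := by
      rw [← sq_abs]; exact pow_le_pow_left₀ (abs_nonneg _) hD1 2
    have e2 : ((2 + 2 * n) * (e (k+1) ω * (sV * sg) * V k ω ^ n)) ^ 2
        = (2 + 2 * n) ^ 2 * e (k+1) ω ^ 2 * (γ k ω * V k ω ^ (2 * n + 1)) := by
      rw [← hsg, pow_succ (V k ω) (2*n), ← hsV]; ring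
    rw [e2] at hD2
    refine hD2.trans ?_
    have a1 := c.Vpow_bd (2*n+1) (n+2) (by omega) k ω
    have a2 : e (k+1) ω ^ 2 ≤ W ^ 2 := pow_le_pow_left₀ he heW 2
    have a3 := mul_le_mul_of_nonneg_left a1 hg
    exact mul_le_mul (mul_le_mul_of_nonneg_left a2 (by positivity)) a3 (by positivity) (by positivity)

end Core

end

section

def ccf (σ D : ℝ) : ℕ → ℝ
  | 0 => 1
  | (n+1) => σ ^ 2 * (1 + 2 * n / D) * ccf σ D n

lemma one_sub_pow_bd2 (g : ℝ) (h0 : 0 ≤ g) (h1 : g ≤ 1) (n : ℕ) :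
    |1 - (1-g)^(n+1) - ((n:ℝ)+1) * g| ≤ ((n:ℝ)+1)^2 * g * g := by
  induction n with
  | zero => simp; nlinarith
  | succ n ih =>
    have e : 1 - (1-g)^(n+1+1) - (((n+1:ℕ):ℝ)+1) * g
        = (1 - (1-g)^(n+1) - ((n:ℝ)+1) * g) - g * (1 - (1-g)^(n+1)) := by
      push_cast; ring
    rw [e]
    refine (abs_sub _ _).trans ?_
    have h2 := one_sub_pow_bd g h0 h1 (n+1)
    rw [abs_mul, abs_of_nonneg h0]
    have h3 := mul_le_mul_of_nonneg_left h2 h0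
    push_cast at h3 ⊢
    nlinarith [mul_nonneg h0 h0, mul_nonneg (mul_nonneg h0 h0) (Nat.cast_nonneg (α := ℝ) n)]

namespace Core
variable {Ω : Type*} {m0 : MeasurableSpace Ω} {μ : Measure Ω} [IsProbabilityMeasure μ]
  {F : Filtration ℕ m0} {ε : ℕ → Ω → ℝ} {σ a D : ℝ} {γ V b m q Q0 Q1 Q2 e : ℕ → Ω → ℝ}

/-- IH in strong form gives a big O bound. -/
lemma bigO_of (c : Core μ F ε σ a D γ V b m q Q0 Q1 Q2 e) (ω : Ω) (n : ℕ) (κ : ℝ)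
    (hA : Tendsto (fun n => Aseq (fun k => γ k ω) n) atTop atTop)
    (h : (fun N => ∑ k ∈ range N, γ k ω * m k ω ^ n - κ * Aseq (fun k => γ k ω) N)
      =o[atTop] (Aseq (fun k => γ k ω))) :
    (fun N => ∑ k ∈ range N, γ k ω * (1 + m k ω ^ n)) =O[atTop] (Aseq (fun k => γ k ω)) := by
  have h1 := h.isBigO.add ((Asymptotics.isBigO_refl (Aseq (fun k => γ k ω)) atTop).const_mul_left κ)
  have h2 := ((Asymptotics.isBigO_refl (Aseq (fun k => γ k ω)) atTop).sub
    (const_isLittleO _ hA 1).isBigO).add h1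
  refine h2.congr_left fun N => ?_
  simp only [mul_add, sum_add_distrib, mul_one, Aseq]; ring

/-- remainder expansion -/
lemma expand (c : Core μ F ε σ a D γ V b m q Q0 Q1 Q2 e) (n : ℕ) (ha : 2 * ((n + 1 : ℕ) : ℝ) < a)
    (hO : ∀ᵐ ω ∂μ, (fun N => ∑ k ∈ range N, γ k ω * (1 + m k ω ^ n)) =O[atTop] (Aseq (fun k => γ k ω))) :
    ∀ᵐ ω ∂μ, (fun N => ∑ k ∈ range N, (m (k+1) ω ^ (n+1) - V k ω ^ (n+1)
        - (2 * (n+1) * b k ω * V k ω ^ n) * ε (k+1) ω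
        - ((n+1) * (γ k ω * V k ω ^ n + 2 * n * b k ω ^ 2 * V k ω ^ (n-1))) * ε (k+1) ω ^ 2))
      =o[atTop] (Aseq (fun k => γ k ω)) := by
  rcases n with _ | n
  · refine Eventually.of_forall fun ω => ?_
    have : ∀ k, (m (k+1) ω ^ (0+1) - V k ω ^ (0+1)
        - (2 * (((0:ℕ):ℝ)+1) * b k ω * V k ω ^ 0) * ε (k+1) ω
        - ((((0:ℕ):ℝ)+1) * (γ k ω * V k ω ^ 0 + 2 * ((0:ℕ):ℝ) * b k ω ^ 2 * V k ω ^ (0-1))) * ε (k+1) ω ^ 2) = 0 := by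
      intro k; rw [c.hrec]; push_cast; ring
    simp only [this, sum_const_zero]
    exact Asymptotics.isLittleO_zero _ _
  · obtain ⟨C, hC, HC⟩ := aux_poly3 n
    refine c.M3 (n+2) (n+1) (by omega) ha (by omega)
      (fun k ω => C * (2 * 2 ^ (2 * n + 1) * Real.sqrt (γ k ω))) _
      (fun k => ?_) (fun k ω => by positivity) (c.hγt.mono fun ω h => ?_) hO (fun k ω => ?_)
    · exact stronglyMeasurable_const.mul (stronglyMeasurable_const.mul
        (c.hγm k).measurable.sqrt.stronglyMeasurable)
    · have := (((Real.continuous_sqrt.tendsto 0).comp h).const_mul (2 * 2 ^ (2*n+1))).const_mul C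
      simpa using this
    · have h1 := HC (Real.sqrt (V k ω)) (ε (k+1) ω * b k ω) (|ε (k+1) ω| * Real.sqrt (γ k ω))
        (Real.sqrt_nonneg _) (by positivity) (c.epsb k ω)
      rw [c.hrec', Real.sq_sqrt (c.V0 k ω), mul_pow, sq_abs, Real.sq_sqrt (c.hγ0 k ω)] at h1
      have h2 := err2 n (V k ω) (m k ω) (γ k ω) (ε (k+1) ω) (c.V0 k ω) (c.Vm k ω) (c.hγ0 k ω) (c.hγ1 k ω)
      have h3 := h1.trans (mul_le_mul_of_nonneg_left h2 hC)
      refine (le_of_eq ?_).trans (h3.trans (le_of_eq (by ring)))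
      congr 1
      simp only [Nat.add_sub_cancel]
      push_cast; ring

lemma main (c : Core μ F ε σ a D γ V b m q Q0 Q1 Q2 e) (hD : 1 ≤ D) : ∀ p : ℕ, (2 * (p:ℝ) < a) →
    ∀ᵐ ω ∂μ, (fun N => ∑ k ∈ range N, γ k ω * m k ω ^ p - ccf σ D p * Aseq (fun k => γ k ω) N)
      =o[atTop] (Aseq (fun k => γ k ω)) := by
  intro p
  induction p with
  | zero =>
    intro _
    filter_upwards [c.hAt] with ω hA
    refine (const_isLittleO _ hA (-1)).congr_left fun N => ?_
    simp [Aseq, ccf]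
  | succ n ih =>
    intro ha
    have ih := ih (by push_cast at ha; linarith)
    have hO : ∀ᵐ ω ∂μ, (fun N => ∑ k ∈ range N, γ k ω * (1 + m k ω ^ n)) =O[atTop] (Aseq (fun k => γ k ω)) := by
      filter_upwards [ih, c.hAt] with ω h hA
      exact c.bigO_of ω n _ hA h
    have hb2V : ∀ k ω, (n:ℝ) * b k ω ^ 2 * V k ω ^ (n-1) ≤ n * (γ k ω * V k ω ^ n) := by
      intro k ω
      rcases Nat.eq_zero_or_pos n with h0 | h0
      · simp [h0]
      · have e1 : V k ω ^ n = V k ω ^ (n-1) * V k ω := by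
          rw [← pow_succ]; congr 1; omega
        have h := mul_le_mul_of_nonneg_left (c.hb k ω) (mul_nonneg (Nat.cast_nonneg (α := ℝ) n) (pow_nonneg (c.V0 k ω) (n-1)))
        rw [e1]; linarith
    have hVn0 : ∀ k ω, 0 ≤ V k ω ^ n := fun k ω => pow_nonneg (c.V0 k ω) n
    have hV1n0 : ∀ k ω, 0 ≤ V k ω ^ (n-1) := fun k ω => pow_nonneg (c.V0 k ω) _
    have hmn0 : ∀ k ω, 0 ≤ m k ω ^ n := fun k ω => pow_nonneg (c.hm0 k ω) n
    have hE := c.expand n ha hO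
    have h1 := c.M1 (n+1) (by omega) ha (fun k ω => 2 * (n+1) * b k ω * V k ω ^ n)
      (fun k => (stronglyMeasurable_const.mul (c.hbm k)).mul ((c.hVm k).pow n))
      (Eventually.of_forall fun ω => ⟨4 * (n+1)^2, fun k => by
        have a1 := c.Vpow_bd (2*n+1) (n+1) (by omega) k ω
        have a2 := mul_le_mul_of_nonneg_left a1 (c.hγ0 k ω)
        have a3 := mul_le_mul_of_nonneg_right (c.hb k ω) (pow_nonneg (hVn0 k ω) 2)
        have e1 : V k ω * γ k ω * (V k ω ^ n) ^ 2 = γ k ω * V k ω ^ (2*n+1) := by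
          rw [pow_succ _ (2*n), pow_mul']; ring
        have e2 : (2 * ((n:ℝ)+1) * b k ω * V k ω ^ n) ^ 2 = 4 * (n+1)^2 * (b k ω ^ 2 * (V k ω ^ n) ^ 2) := by ring
        rw [e2]
        refine mul_le_mul_of_nonneg_left ?_ (by positivity)
        linarith⟩)
    have h2 := c.M2 (n+1) (by omega) ha
      (fun k ω => (n+1) * (γ k ω * V k ω ^ n + 2 * n * b k ω ^ 2 * V k ω ^ (n-1)))
      (fun k => stronglyMeasurable_const.mul (((c.hγm k).mul ((c.hVm k).pow n)).add
        ((stronglyMeasurable_const.mul ((c.hbm k).pow 2)).mul ((c.hVm k).pow (n-1)))))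
      (Eventually.of_forall fun ω => ⟨(n+1) * (1 + 2 * n), fun k => by
        have a0 : V k ω ^ n ≤ 1 + m k ω ^ (n+1) := (pow_le_pow_left₀ (c.V0 k ω) (c.Vm k ω) n).trans
          (aux_pow_le_one_add (m k ω) n (n+1) (c.hm0 k ω) (Nat.le_succ n))
        have a1 := mul_le_mul_of_nonneg_left a0 (c.hγ0 k ω)
        have g0 := mul_nonneg (c.hγ0 k ω) (hVn0 k ω)
        have b0 : 0 ≤ (n:ℝ) * b k ω ^ 2 * V k ω ^ (n-1) := mul_nonneg (by positivity) (hV1n0 k ω)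
        have := hb2V k ω
        have a2 := mul_le_mul_of_nonneg_left a1 (by positivity : 0 ≤ 1 + 2 * (n:ℝ))
        rw [abs_of_nonneg (mul_nonneg (by positivity) (by linarith)), mul_assoc ((n:ℝ)+1)]
        exact mul_le_mul_of_nonneg_left (by linarith) (by positivity : 0 ≤ (n:ℝ)+1)⟩)
    have h3 : ∀ᵐ ω ∂μ, (fun N => ∑ k ∈ range N, (n * (b k ω ^ 2 * V k ω ^ (n-1)) - n * (γ k ω * V k ω ^ n / D)))
      =o[atTop] (Aseq (fun k => γ k ω)) := by
      rcases n with _ | n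
      · refine Eventually.of_forall fun ω => ?_
        simp only [Nat.cast_zero, zero_mul, sub_zero, sum_const_zero]
        exact Asymptotics.isLittleO_zero _ _
      · filter_upwards [c.corr n ha hO] with ω h
        refine (h.const_mul_left ((n+1:ℕ):ℝ)).congr_left fun N => ?_
        rw [mul_sum]
        refine sum_congr rfl fun k _ => ?_
        simp only [Nat.add_sub_cancel]; ring
    filter_upwards [hE, h1, h2, h3, ih, hO, c.hAt, c.hγt, c.step1b (n+1) (by omega) ha] with ω hE h1 h2 h3 ih hO hA hγt h5
    set A := Aseq (fun k => γ k ω) with hAdef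
    have hA1 : ∀ N, 1 ≤ A N := Aseq_ge (fun k => γ k ω) (fun k => c.hγ0 k ω)
    have hAm : Monotone A := Aseq_mono _ (fun k => c.hγ0 k ω)
    -- `V^n` versus `m^n`
    have h4 : (fun N => ∑ k ∈ range N, (γ k ω * V k ω ^ n - γ k ω * m k ω ^ n)) =o[atTop] A := by
      have hz := aux_inc A hAm hA (fun k => (n:ℝ) * γ k ω) (fun k => γ k ω * (1 + m k ω ^ n))
        (by simpa using hγt.const_mul (n:ℝ))
        (fun k => mul_nonneg (c.hγ0 k ω) (by linarith [hmn0 k ω])) hO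
      refine (Asymptotics.IsBigO.of_norm_le fun N => ?_).trans_isLittleO hz
      rw [Real.norm_eq_abs]
      refine (abs_sum_le_sum_abs _ _).trans (sum_le_sum fun k _ => ?_)
      have e1 : γ k ω * V k ω ^ n - γ k ω * m k ω ^ n = -((1 - (1 - γ k ω) ^ n) * (γ k ω * m k ω ^ n)) := by
        rw [c.hV, mul_pow]; ring
      have g0 := mul_nonneg (c.hγ0 k ω) (hmn0 k ω)
      rw [e1, abs_neg, abs_mul, abs_of_nonneg g0]
      refine mul_le_mul (one_sub_pow_bd _ (c.hγ0 k ω) (c.hγ1 k ω) n) ?_ g0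
        (mul_nonneg (Nat.cast_nonneg _) (c.hγ0 k ω))
      exact mul_le_mul_of_nonneg_left (by linarith) (c.hγ0 k ω)
    have h6 : (fun N => m N ω ^ (n+1)) =o[atTop] A := by
      rw [Asymptotics.isLittleO_iff_tendsto (fun N h => by have := hA1 N; linarith)]
      exact h5.1
    set cn := ccf σ D n with hcn
    -- sum of `m^p - V^p`
    have h7 : (fun N => ∑ k ∈ range N, (m k ω ^ (n+1) - V k ω ^ (n+1)) - ((n:ℝ)+1) * (ccf σ D (n+1)) * A N)
        =o[atTop] A := by
      have hD0 : D ≠ 0 := by linarith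
      have hs := ((((hE.add h1).add h2).add (h3.const_mul_left (((n:ℝ)+1) * 2 * σ ^ 2))).add
        ((h4.add ih).const_mul_left (((n:ℝ)+1) * σ ^ 2 * (1 + 2 * n / D)))).sub
        (h6.sub (const_isLittleO A hA (m 0 ω ^ (n+1))))
      refine hs.congr_left fun N => ?_
      have e2 : ccf σ D (n+1) = σ ^ 2 * (1 + 2 * n / D) * cn := rfl
      rw [e2]
      have key : ∀ N, ∑ k ∈ range N, (m (k+1) ω ^ (n+1) - V k ω ^ (n+1)
          - (2 * (n+1) * b k ω * V k ω ^ n) * ε (k+1) ω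
          - ((n+1) * (γ k ω * V k ω ^ n + 2 * n * b k ω ^ 2 * V k ω ^ (n-1))) * ε (k+1) ω ^ 2)
          + ∑ k ∈ range N, 2 * (n+1) * b k ω * V k ω ^ n * ε (k+1) ω
          + ∑ k ∈ range N, (n+1) * (γ k ω * V k ω ^ n + 2 * n * b k ω ^ 2 * V k ω ^ (n-1)) * (ε (k+1) ω ^ 2 - σ ^ 2)
          + (((n:ℝ)+1) * 2 * σ ^ 2) * ∑ k ∈ range N, (n * (b k ω ^ 2 * V k ω ^ (n-1)) - n * (γ k ω * V k ω ^ n / D))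
          + (((n:ℝ)+1) * σ ^ 2 * (1 + 2 * n / D)) * (∑ k ∈ range N, (γ k ω * V k ω ^ n - γ k ω * m k ω ^ n)
            + ∑ k ∈ range N, γ k ω * m k ω ^ n) - (m N ω ^ (n+1) - m 0 ω ^ (n+1))
          = ∑ k ∈ range N, (m k ω ^ (n+1) - V k ω ^ (n+1)) := by
        intro N
        induction N with
        | zero => simp
        | succ N ihN =>
          simp only [sum_range_succ]
          rw [← ihN]; ring
      rw [← key N]; ring
    -- replace `m^p - V^p` by `(n+1) γ m^p`
    have hg1 : ∀ k, γ k ω * m k ω ^ (n+1) ≤ m k ω ^ (n+1) - V k ω ^ (n+1) := by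
      intro k
      rw [c.hV, mul_pow]
      have hm := pow_nonneg (c.hm0 k ω) (n+1)
      have h0 := c.hγ0 k ω
      have h1 := c.hγ1 k ω
      have : (1 - γ k ω) ^ (n+1) ≤ 1 - γ k ω := pow_le_of_le_one (by linarith) (by linarith) (by omega)
      nlinarith
    have hOp : (fun N => ∑ k ∈ range N, γ k ω * m k ω ^ (n+1)) =O[atTop] A := by
      have hb := h7.isBigO.add ((Asymptotics.isBigO_refl A atTop).const_mul_left (((n:ℝ)+1) * (ccf σ D (n+1))))
      refine Asymptotics.IsBigO.trans (Asymptotics.IsBigO.of_norm_le fun N => ?_) hb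
      rw [Real.norm_of_nonneg (sum_nonneg fun k _ => mul_nonneg (c.hγ0 k ω) (pow_nonneg (c.hm0 k ω) _)), sub_add_cancel]
      exact (sum_le_sum fun k _ => hg1 k)
    have h8 : (fun N => ∑ k ∈ range N, ((m k ω ^ (n+1) - V k ω ^ (n+1)) - ((n:ℝ)+1) * (γ k ω * m k ω ^ (n+1)))) =o[atTop] A := by
      have hz := aux_inc A hAm hA (fun k => ((n:ℝ)+1)^2 * γ k ω) (fun k => γ k ω * m k ω ^ (n+1))
        (by simpa using hγt.const_mul (((n:ℝ)+1)^2))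
        (fun k => mul_nonneg (c.hγ0 k ω) (pow_nonneg (c.hm0 k ω) _)) hOp
      refine (Asymptotics.IsBigO.of_norm_le fun N => ?_).trans_isLittleO hz
      rw [Real.norm_eq_abs]
      refine (abs_sum_le_sum_abs _ _).trans (sum_le_sum fun k _ => ?_)
      have hm := pow_nonneg (c.hm0 k ω) (n+1)
      have e1 : (m k ω ^ (n+1) - V k ω ^ (n+1)) - ((n:ℝ)+1) * (γ k ω * m k ω ^ (n+1))
          = (1 - (1 - γ k ω) ^ (n+1) - ((n:ℝ)+1) * γ k ω) * m k ω ^ (n+1) := by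
        rw [c.hV, mul_pow]; ring
      rw [e1, abs_mul, abs_of_nonneg hm, ← mul_assoc]
      refine mul_le_mul_of_nonneg_right ?_ hm
      exact one_sub_pow_bd2 _ (c.hγ0 k ω) (c.hγ1 k ω) n
    have h9 := ((h7.sub h8).const_mul_left (((n:ℝ)+1)⁻¹))
    refine h9.congr_left fun N => ?_
    simp only [sum_sub_distrib, ← mul_sum]
    field_simp
    ring

end Core

end

section

lemma dot_cs {d : ℕ} (u v : Fin d → ℝ) : (u ⬝ᵥ v) ^ 2 ≤ (u ⬝ᵥ u) * (v ⬝ᵥ v) := by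
  have := Finset.sum_mul_sq_le_sq_mul_sq univ u v
  simpa [dotProduct, pow_two] using this

lemma dot_self_nonneg' {d : ℕ} (u : Fin d → ℝ) : 0 ≤ u ⬝ᵥ u :=
  sum_nonneg fun i _ => mul_self_nonneg (u i)

lemma abs_le_sqrt_dot {d : ℕ} (u : Fin d → ℝ) (i : Fin d) : |u i| ≤ Real.sqrt (u ⬝ᵥ u) := by
  apply Real.abs_le_sqrt
  rw [pow_two]
  exact single_le_sum (f := fun i => u i * u i) (fun i _ => mul_self_nonneg (u i)) (mem_univ i)

def enorm1 {d : ℕ} (E : Matrix (Fin d) (Fin d) ℝ) : ℝ := ∑ i, ∑ j, |E i j|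

lemma quad_bd {d : ℕ} (E : Matrix (Fin d) (Fin d) ℝ) (u v : Fin d → ℝ) :
    |u ⬝ᵥ (E *ᵥ v)| ≤ enorm1 E * (Real.sqrt (u ⬝ᵥ u) * Real.sqrt (v ⬝ᵥ v)) := by
  simp only [enorm1, dotProduct, mulVec, mul_sum, sum_mul]
  refine (abs_sum_le_sum_abs _ _).trans (sum_le_sum fun i _ => ?_)
  refine (abs_sum_le_sum_abs _ _).trans (sum_le_sum fun j _ => ?_)
  rw [abs_mul, abs_mul]
  have h1 := abs_le_sqrt_dot u i
  have h2 := abs_le_sqrt_dot v j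
  have h3 := mul_le_mul h1 h2 (abs_nonneg _) (Real.sqrt_nonneg _)
  have h4 := mul_le_mul_of_nonneg_left h3 (abs_nonneg (E i j))
  simp only [dotProduct] at h4
  linarith

lemma enorm1_nonneg {d : ℕ} (E : Matrix (Fin d) (Fin d) ℝ) : 0 ≤ enorm1 E :=
  sum_nonneg fun i _ => sum_nonneg fun j _ => abs_nonneg _

def Tm {Ω : Type*} {d : ℕ} (T0 : Matrix (Fin d) (Fin d) ℝ) (x : ℕ → Ω → Fin d → ℝ) (n : ℕ) (ω : Ω) :
    Matrix (Fin d) (Fin d) ℝ := T0 + ∑ k ∈ range n, vecMulVec (x k ω) (x k ω)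

lemma Tm_succ {Ω : Type*} {d : ℕ} (T0 : Matrix (Fin d) (Fin d) ℝ) (x : ℕ → Ω → Fin d → ℝ) (n : ℕ) (ω : Ω) :
    Tm T0 x (n+1) ω = Tm T0 x n ω + vecMulVec (x n ω) (x n ω) := by
  simp [Tm, sum_range_succ, add_assoc]

def bt {Ω : Type*} {d : ℕ} (T0 : Matrix (Fin d) (Fin d) ℝ) (x : ℕ → Ω → Fin d → ℝ) (n : ℕ) (ω : Ω) : ℝ :=
  (Tm T0 x n ω).trace

lemma bt_succ {Ω : Type*} {d : ℕ} (T0 : Matrix (Fin d) (Fin d) ℝ) (x : ℕ → Ω → Fin d → ℝ) (n : ℕ) (ω : Ω) :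
    bt T0 x (n+1) ω = bt T0 x n ω + x n ω ⬝ᵥ x n ω := by
  simp [bt, Tm_succ, trace_vecMulVec]

lemma bt_pos {Ω : Type*} {d : ℕ} (T0 : Matrix (Fin d) (Fin d) ℝ) (h : 0 < T0.trace)
    (x : ℕ → Ω → Fin d → ℝ) (n : ℕ) (ω : Ω) : 0 < bt T0 x n ω := by
  induction n with
  | zero => simpa [bt, Tm] using h
  | succ n ih => rw [bt_succ]; linarith [dot_self_nonneg' (x n ω)]

def Em {Ω : Type*} {d : ℕ} (T0 : Matrix (Fin d) (Fin d) ℝ) (x : ℕ → Ω → Fin d → ℝ) (n : ℕ) (ω : Ω) :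
    Matrix (Fin d) (Fin d) ℝ := (bt T0 x n ω)⁻¹ • Tm T0 x n ω - (1/(d:ℝ)) • (1 : Matrix (Fin d) (Fin d) ℝ)

lemma Em_quad {Ω : Type*} {d : ℕ} (T0 : Matrix (Fin d) (Fin d) ℝ) (x : ℕ → Ω → Fin d → ℝ) (n : ℕ) (ω : Ω)
    (u v : Fin d → ℝ) :
    u ⬝ᵥ (Em T0 x n ω *ᵥ v) = (bt T0 x n ω)⁻¹ * (u ⬝ᵥ (Tm T0 x n ω *ᵥ v)) - (1/(d:ℝ)) * (u ⬝ᵥ v) := by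
  simp [Em, sub_mulVec, smul_mulVec, dotProduct_sub, dotProduct_smul]

lemma Tm_quad {Ω : Type*} {d : ℕ} (T0 : Matrix (Fin d) (Fin d) ℝ) (x : ℕ → Ω → Fin d → ℝ) (n : ℕ) (ω : Ω)
    (u v : Fin d → ℝ) :
    u ⬝ᵥ (Tm T0 x (n+1) ω *ᵥ v) = u ⬝ᵥ (Tm T0 x n ω *ᵥ v) + (u ⬝ᵥ x n ω) * (x n ω ⬝ᵥ v) := by
  rw [Tm_succ, add_mulVec, dotProduct_add, vecMulVec_mulVec, dotProduct_smul]
  simp [mul_comm]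

section meas
variable {Ω : Type*} {mm : MeasurableSpace Ω} {d : ℕ}

lemma sm_dot {u v : Ω → Fin d → ℝ} (hu : StronglyMeasurable u) (hv : StronglyMeasurable v) :
    StronglyMeasurable (fun ω => u ω ⬝ᵥ v ω) := by
  have : Continuous (fun z : (Fin d → ℝ) × (Fin d → ℝ) => z.1 ⬝ᵥ z.2) := by fun_prop
  exact this.comp_stronglyMeasurable (hu.prodMk hv)

lemma sm_quad {u v : Ω → Fin d → ℝ} {E : Ω → Matrix (Fin d) (Fin d) ℝ}
    (hu : StronglyMeasurable u) (hE : StronglyMeasurable E) (hv : StronglyMeasurable v) :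
    StronglyMeasurable (fun ω => u ω ⬝ᵥ (E ω *ᵥ v ω)) := by
  have : Continuous (fun z : (Fin d → ℝ) × (Matrix (Fin d) (Fin d) ℝ) × (Fin d → ℝ) => z.1 ⬝ᵥ (z.2.1 *ᵥ z.2.2)) := by
    fun_prop
  exact this.comp_stronglyMeasurable (hu.prodMk (hE.prodMk hv))
end meas

lemma sm_Tm {Ω : Type*} {m0 : MeasurableSpace Ω} (F : Filtration ℕ m0) {d : ℕ}
    (T0 : Matrix (Fin d) (Fin d) ℝ) (x : ℕ → Ω → Fin d → ℝ)
    (hx : ∀ n, StronglyMeasurable[F n] (x n)) (n k : ℕ) (hk : k ≤ n + 1) :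
    StronglyMeasurable[F n] (Tm T0 x k) := by
  induction k with
  | zero => 
    have : (Tm T0 x 0) = fun _ => T0 := by ext; simp [Tm]
    rw [this]; exact stronglyMeasurable_const
  | succ k ih =>
    have h2 : StronglyMeasurable[F n] (fun ω => vecMulVec (x k ω) (x k ω)) := by
      have : Continuous (fun z : (Fin d → ℝ) => vecMulVec z z) := by fun_prop
      exact this.comp_stronglyMeasurable ((hx k).mono (F.mono (by omega)))
    have e : Tm T0 x (k+1) = Tm T0 x k + fun ω => vecMulVec (x k ω) (x k ω) := by
      ext1 ω; exact Tm_succ _ _ _ _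
    rw [e]
    exact (ih (by omega)).add h2

lemma sm_bt {Ω : Type*} {m0 : MeasurableSpace Ω} (F : Filtration ℕ m0) {d : ℕ}
    (T0 : Matrix (Fin d) (Fin d) ℝ) (x : ℕ → Ω → Fin d → ℝ)
    (hx : ∀ n, StronglyMeasurable[F n] (x n)) (n k : ℕ) (hk : k ≤ n + 1) :
    StronglyMeasurable[F n] (bt T0 x k) := by
  have : Continuous (fun z : Matrix (Fin d) (Fin d) ℝ => z.trace) := by fun_prop
  exact this.comp_stronglyMeasurable (sm_Tm F T0 x hx n k hk)

lemma sm_Em {Ω : Type*} {m0 : MeasurableSpace Ω} (F : Filtration ℕ m0) {d : ℕ}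
    (T0 : Matrix (Fin d) (Fin d) ℝ) (x : ℕ → Ω → Fin d → ℝ)
    (hx : ∀ n, StronglyMeasurable[F n] (x n)) (n k : ℕ) (hk : k ≤ n + 1) :
    StronglyMeasurable[F n] (Em T0 x k) := by
  have h1 : StronglyMeasurable[F n] (fun ω => (bt T0 x k ω)⁻¹) :=
    (sm_bt F T0 x hx n k hk).measurable.inv.stronglyMeasurable
  exact (h1.smul (sm_Tm F T0 x hx n k hk)).sub stronglyMeasurable_const

def Nv {Ω : Type*} {d : ℕ} (N0 : Ω → Fin d → ℝ) (x : ℕ → Ω → Fin d → ℝ)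
    (ε : ℕ → Ω → ℝ) (n : ℕ) (ω : Ω) : Fin d → ℝ :=
  N0 ω + ∑ k ∈ range n, ε (k + 1) ω • x k ω

lemma Nv_succ {Ω : Type*} {d : ℕ} (N0 : Ω → Fin d → ℝ) (x : ℕ → Ω → Fin d → ℝ)
    (ε : ℕ → Ω → ℝ) (n : ℕ) (ω : Ω) : Nv N0 x ε (n+1) ω = Nv N0 x ε n ω + ε (n+1) ω • x n ω := by
  simp [Nv, sum_range_succ, add_assoc]

lemma sm_Nv {Ω : Type*} {m0 : MeasurableSpace Ω} (F : Filtration ℕ m0) {d : ℕ}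
    (N0 : Ω → Fin d → ℝ) (x : ℕ → Ω → Fin d → ℝ) (ε : ℕ → Ω → ℝ)
    (hx : ∀ n, StronglyMeasurable[F n] (x n)) (hN : StronglyMeasurable[F 0] N0)
    (hε : ∀ n, StronglyMeasurable[F n] (ε n)) (n : ℕ) :
    StronglyMeasurable[F n] (Nv N0 x ε n) := by
  induction n with
  | zero =>
    have : Nv N0 x ε 0 = N0 := by ext; simp [Nv]
    rw [this]; exact hN
  | succ n ih =>
    have e : Nv N0 x ε (n+1) = Nv N0 x ε n + fun ω => ε (n+1) ω • x n ω := by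
      ext1 ω; exact Nv_succ _ _ _ _ _
    rw [e]
    exact (ih.mono (F.mono n.le_succ)).add ((hε (n+1)).smul ((hx n).mono (F.mono n.le_succ)))

lemma core_inst {Ω : Type*} {m0 : MeasurableSpace Ω} {μ : Measure Ω}
    (F : Filtration ℕ m0) {d : ℕ} (hd : 0 < d)
    (ε : ℕ → Ω → ℝ) (x : ℕ → Ω → Fin d → ℝ) (N0 : Ω → Fin d → ℝ)
    (T0 : Matrix (Fin d) (Fin d) ℝ) (hT0 : 0 < T0.trace) (σ a : ℝ)
    (hεadapt : ∀ n, StronglyMeasurable[F n] (ε n))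
    (hεint : ∀ n, Integrable (ε n) μ)
    (hx : ∀ n, StronglyMeasurable[F n] (x n))
    (hN0 : StronglyMeasurable[F 0] N0)
    (hmds : ∀ n, μ[ε (n + 1)|F n] =ᵐ[μ] 0)
    (hvar : ∀ n, μ[fun ω => ε (n + 1) ω ^ 2|F n] =ᵐ[μ] fun _ => σ ^ 2)
    (hmomint : ∀ n, Integrable (fun ω => |ε (n + 1) ω| ^ a) μ)
    (hmom : ∀ᵐ ω ∂μ, ∃ C : ℝ, ∀ n, (μ[fun ω => |ε (n + 1) ω| ^ a|F n]) ω ≤ C)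
    (hγt : ∀ᵐ ω ∂μ, Tendsto (fun n => (x n ω ⬝ᵥ x n ω) / bt T0 x (n+1) ω) atTop (𝓝 0))
    (hAt : ∀ᵐ ω ∂μ, Tendsto (fun n => Aseq (fun k => (x k ω ⬝ᵥ x k ω) / bt T0 x (k+1) ω) n) atTop atTop)
    (het : ∀ᵐ ω ∂μ, Tendsto (fun n => enorm1 (Em T0 x n ω)) atTop (𝓝 0)) :
    Core μ F ε σ a (d:ℝ)
      (fun n ω => (x n ω ⬝ᵥ x n ω) / bt T0 x (n+1) ω)
      (fun n ω => (Nv N0 x ε n ω ⬝ᵥ Nv N0 x ε n ω) / bt T0 x (n+1) ω)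
      (fun n ω => (Nv N0 x ε n ω ⬝ᵥ x n ω) / bt T0 x (n+1) ω)
      (fun n ω => (Nv N0 x ε n ω ⬝ᵥ Nv N0 x ε n ω) / bt T0 x n ω)
      (fun n ω => (Nv N0 x ε n ω ⬝ᵥ (Em T0 x n ω *ᵥ Nv N0 x ε n ω)) / bt T0 x n ω)
      (fun n ω => (Nv N0 x ε n ω ⬝ᵥ (Em T0 x (n+1) ω *ᵥ Nv N0 x ε n ω)) / bt T0 x (n+1) ω)
      (fun n ω => (Nv N0 x ε n ω ⬝ᵥ (Em T0 x (n+1) ω *ᵥ x n ω)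
        + x n ω ⬝ᵥ (Em T0 x (n+1) ω *ᵥ Nv N0 x ε n ω)) / bt T0 x (n+1) ω)
      (fun n ω => (x n ω ⬝ᵥ (Em T0 x (n+1) ω *ᵥ x n ω)) / bt T0 x (n+1) ω)
      (fun n ω => enorm1 (Em T0 x n ω)) := by
  have hNm := sm_Nv F N0 x ε hx hN0 hεadapt
  have hb1 := fun n => sm_bt F T0 x hx n (n+1) le_rfl
  have hb0 := fun n => sm_bt F T0 x hx n n n.le_succ
  have hE1 := fun n => sm_Em F T0 x hx n (n+1) le_rfl
  have hE0 := fun n => sm_Em F T0 x hx n n n.le_succ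
  have bp := bt_pos T0 hT0 x
  refine
  { hεm := hεadapt
    hεi := hεint
    hmds := hmds
    hvar := hvar
    hmomint := hmomint
    hmom := hmom
    hγm := fun n => sm_div (sm_dot (hx n) (hx n)) (hb1 n)
    hVm := fun n => sm_div (sm_dot (hNm n) (hNm n)) (hb1 n)
    hbm := fun n => sm_div (sm_dot (hNm n) (hx n)) (hb1 n)
    hmm := fun n => sm_div (sm_dot (hNm n) (hNm n)) (hb0 n)
    hqm := fun n => sm_div (sm_quad (hNm n) (hE0 n) (hNm n)) (hb0 n)
    hQ0m := fun n => sm_div (sm_quad (hNm n) (hE1 n) (hNm n)) (hb1 n)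
    hQ1m := fun n => sm_div ((sm_quad (hNm n) (hE1 n) (hx n)).add (sm_quad (hx n) (hE1 n) (hNm n))) (hb1 n)
    hem := fun n => ?_
    hγ0 := fun n ω => div_nonneg (dot_self_nonneg' _) (bp _ _).le
    hγ1 := fun n ω => ?_
    hm0 := fun n ω => div_nonneg (dot_self_nonneg' _) (bp _ _).le
    he0 := fun n ω => enorm1_nonneg _
    hV := fun n ω => ?_
    hb := fun n ω => ?_
    hrec := fun n ω => ?_
    hqrec := fun n ω => ?_
    hQ0 := fun n ω => ?_
    hQ1 := fun n ω => ?_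
    hQ2 := fun n ω => ?_
    hqb := fun n ω => ?_
    hb2 := fun n ω => ?_
    hγt := hγt
    hAt := hAt
    het := het }
  · have : Continuous (fun z : Matrix (Fin d) (Fin d) ℝ => enorm1 z) := by unfold enorm1; fun_prop
    exact this.comp_stronglyMeasurable (hE1 n)
  · rw [div_le_one (bp _ _), bt_succ]; linarith [bp n ω]
  · have h1 := (bp n ω).ne'
    have h2 := (bp (n+1) ω).ne'
    have h3 := bt_succ T0 x n ω
    have e : 1 - (x n ω ⬝ᵥ x n ω) / bt T0 x (n+1) ω = bt T0 x n ω / bt T0 x (n+1) ω := by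
      field_simp; linarith
    rw [e]; field_simp
  · rw [div_pow, div_mul_div_comm, pow_two (bt T0 x (n+1) ω)]
    exact div_le_div_of_nonneg_right (dot_cs _ _) (mul_self_nonneg _)
  · rw [Nv_succ]
    simp only [add_dotProduct, dotProduct_add, smul_dotProduct, dotProduct_smul, smul_eq_mul]
    rw [dotProduct_comm (x n ω) (Nv N0 x ε n ω)]
    ring
  · rw [Nv_succ]
    simp only [mulVec_add, mulVec_smul, add_dotProduct, dotProduct_add, smul_dotProduct, dotProduct_smul, smul_eq_mul]
    ring
  · rw [abs_div, abs_of_pos (bp _ _), ← mul_div_assoc]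
    refine div_le_div_of_nonneg_right ((quad_bd _ _ _).trans_eq ?_) (bp _ _).le
    rw [Real.mul_self_sqrt (dot_self_nonneg' _)]
  · have e1 : Real.sqrt ((Nv N0 x ε n ω ⬝ᵥ Nv N0 x ε n ω) / bt T0 x (n+1) ω) *
        Real.sqrt ((x n ω ⬝ᵥ x n ω) / bt T0 x (n+1) ω) =
        (Real.sqrt (Nv N0 x ε n ω ⬝ᵥ Nv N0 x ε n ω) * Real.sqrt (x n ω ⬝ᵥ x n ω)) / bt T0 x (n+1) ω := by
      rw [Real.sqrt_div (dot_self_nonneg' _), Real.sqrt_div (dot_self_nonneg' _), div_mul_div_comm,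
        Real.mul_self_sqrt (bp _ _).le]
    rw [e1, abs_div, abs_of_pos (bp _ _), ← mul_div_assoc]
    refine div_le_div_of_nonneg_right ((abs_add_le _ _).trans ?_) (bp _ _).le
    have h1 := quad_bd (Em T0 x (n+1) ω) (Nv N0 x ε n ω) (x n ω)
    have h2 := quad_bd (Em T0 x (n+1) ω) (x n ω) (Nv N0 x ε n ω)
    linarith
  · rw [abs_div, abs_of_pos (bp _ _), ← mul_div_assoc]
    refine div_le_div_of_nonneg_right ((quad_bd _ _ _).trans_eq ?_) (bp _ _).le
    rw [Real.mul_self_sqrt (dot_self_nonneg' _)]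
  · rw [abs_div, abs_of_pos (bp _ _), ← mul_div_assoc]
    refine div_le_div_of_nonneg_right ((quad_bd _ _ _).trans_eq ?_) (bp _ _).le
    rw [Real.mul_self_sqrt (dot_self_nonneg' _)]
  · have h1 := (bp n ω).ne'
    have h2 := (bp (n+1) ω).ne'
    have h3 := bt_succ T0 x n ω
    have hd' : (d:ℝ) ≠ 0 := by exact_mod_cast hd.ne'
    have e : 1 - (x n ω ⬝ᵥ x n ω) / bt T0 x (n+1) ω = bt T0 x n ω / bt T0 x (n+1) ω := by
      field_simp; linarith
    rw [e, Em_quad, Em_quad, Tm_quad, dotProduct_comm (x n ω) (Nv N0 x ε n ω)]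
    have h4 : x n ω ⬝ᵥ x n ω = bt T0 x (n+1) ω - bt T0 x n ω := by linarith
    rw [h4]
    field_simp
    ring

end

section

lemma ccf_eq (d : ℕ) (hd : 0 < d) (σ : ℝ) (n : ℕ) :
    ccf σ d (n+1) * (d:ℝ) ^ (n+1) = elllim d (n+1) σ := by
  have hd' : (d:ℝ) ≠ 0 := by exact_mod_cast hd.ne'
  induction n with
  | zero => simp [ccf, elllim]; ring
  | succ n ih =>
    have e : ccf σ d (n+1+1) * (d:ℝ) ^ (n+1+1) = σ ^ 2 * (d + 2 * ((n+1:ℕ):ℝ)) * (ccf σ d (n+1) * (d:ℝ) ^ (n+1)) := by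
      rw [ccf]; field_simp; ring
    rw [e, ih]
    simp only [elllim, Nat.add_sub_cancel]
    rw [prod_Icc_succ_top (by omega)]
    ring

lemma A_log (b : ℕ → ℝ) (hb : ∀ n, 0 < b n) (hmono : Monotone b) (ht : Tendsto b atTop atTop)
    (hγ : Tendsto (fun n => (b (n+1) - b n) / b (n+1)) atTop (𝓝 0)) :
    Tendsto (fun n => Aseq (fun k => (b (k+1) - b k) / b (k+1)) n / Real.log (b n)) atTop (𝓝 1) := by
  set γ : ℕ → ℝ := fun k => (b (k+1) - b k) / b (k+1) with hγd
  set lb : ℕ → ℝ := fun n => Real.log (b n) with hlb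
  have hlm : Monotone lb := fun i j h => Real.log_le_log (hb i) (hmono h)
  have hlt : Tendsto lb atTop atTop := Real.tendsto_log_atTop.comp ht
  have hO : (fun n => ∑ k ∈ range n, (lb (k+1) - lb k)) =O[atTop] lb := by
    simp_rw [sum_range_sub]
    exact (Asymptotics.isBigO_refl lb _).sub (const_isLittleO lb hlt _).isBigO
  have h1 := aux_inc lb hlm hlt γ (fun k => lb (k+1) - lb k) hγ
    (fun k => sub_nonneg.mpr (hlm k.le_succ)) hO
  have hpt : ∀ k, |γ k - (lb (k+1) - lb k)| ≤ γ k * (lb (k+1) - lb k) := by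
    intro k
    have p0 := hb k
    have p1 := hb (k+1)
    have e1 : lb (k+1) - lb k = Real.log (b (k+1) / b k) := by rw [Real.log_div p1.ne' p0.ne']
    have e2 : lb (k+1) - lb k = - Real.log (b k / b (k+1)) := by rw [Real.log_div p0.ne' p1.ne']; simp only [hlb]; ring
    have u1 := Real.log_le_sub_one_of_pos (div_pos p1 p0)
    have u2 := Real.log_le_sub_one_of_pos (div_pos p0 p1)
    rw [← e1] at u1
    have e3 : γ k = 1 - b k / b (k+1) := by simp only [hγd]; field_simp
    have u3 : γ k ≤ lb (k+1) - lb k := by linarith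
    rw [abs_of_nonpos (by linarith)]
    have u4 := mul_le_mul_of_nonneg_left u1 (div_pos p0 p1).le
    have e4 : b k / b (k+1) * (b (k+1) / b k - 1) = γ k := by simp only [hγd]; field_simp
    rw [e4] at u4
    have e5 : b k / b (k+1) = 1 - γ k := by linarith
    rw [e5] at u4
    linarith
  have h2 : (fun n => ∑ k ∈ range n, (γ k - (lb (k+1) - lb k))) =o[atTop] lb := by
    refine (Asymptotics.IsBigO.of_norm_le fun N => ?_).trans_isLittleO h1
    rw [Real.norm_eq_abs]
    exact (abs_sum_le_sum_abs _ _).trans (sum_le_sum fun k _ => hpt k)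
  have h3 : (fun n => Aseq γ n - lb n) =o[atTop] lb := by
    refine (h2.add (const_isLittleO lb hlt (1 - lb 0))).congr_left fun n => ?_
    rw [sum_sub_distrib, sum_range_sub]; simp only [Aseq]; ring
  have h4 := (h3.tendsto_div_nhds_zero).add_const 1
  rw [zero_add] at h4
  refine h4.congr' ?_
  filter_upwards [hlt.eventually_gt_atTop 0] with n hn
  have hn' : lb n ≠ 0 := hn.ne'
  change (Aseq γ n - lb n) / lb n + 1 = Aseq γ n / lb n
  rw [sub_div, div_self hn']; ring

lemma A_top (b : ℕ → ℝ) (ht : Tendsto b atTop atTop) (A : ℕ → ℝ)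
    (h : Tendsto (fun n => A n / Real.log (b n)) atTop (𝓝 1)) : Tendsto A atTop atTop := by
  have hlt : Tendsto (fun n => Real.log (b n)) atTop atTop := Real.tendsto_log_atTop.comp ht
  refine (h.pos_mul_atTop one_pos hlt).congr' ?_
  filter_upwards [hlt.eventually_gt_atTop 0] with n hn
  field_simp

lemma logdet (d : ℕ) (hd : 0 < d) (D β α : ℕ → ℝ) (hD : ∀ n, 0 < D n) (hβ : ∀ n, 0 < β n) (hα : ∀ n, 0 < α n)
    (hαt : Tendsto α atTop atTop) (l : ℝ) (hl : 0 < l)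
    (h1 : Tendsto (fun n => D n / α n ^ d) atTop (𝓝 l))
    (h2 : Tendsto (fun n => β n / α n) atTop (𝓝 d)) :
    Tendsto (fun n => Real.log (D n) / Real.log (β n)) atTop (𝓝 d) ∧ Tendsto β atTop atTop := by
  have hd' : (0:ℝ) < d := by exact_mod_cast hd
  have hβt : Tendsto β atTop atTop := by
    refine (h2.pos_mul_atTop hd' hαt).congr fun n => ?_
    have := (hα n).ne'; field_simp
  refine ⟨?_, hβt⟩
  have hlt : Tendsto (fun n => Real.log (β n)) atTop atTop := Real.tendsto_log_atTop.comp hβt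
  have h3 := (Real.continuousAt_log hl.ne').tendsto.comp h1
  have h4 := (Real.continuousAt_log hd'.ne').tendsto.comp h2
  have h5 := (h3.sub (h4.const_mul (d:ℝ))).div_atTop hlt
  have h6 := h5.add_const (d:ℝ)
  rw [zero_add] at h6
  refine h6.congr' ?_
  filter_upwards [hlt.eventually_gt_atTop 0] with n hn
  simp only [Function.comp]
  rw [Real.log_div (hD n).ne' (pow_pos (hα n) d).ne', Real.log_div (hβ n).ne' (hα n).ne', Real.log_pow]
  field_simp
  ring

open scoped MatrixOrder Matrix.Norms.L2Operator in
lemma psd_cs {d : ℕ} (T : Matrix (Fin d) (Fin d) ℝ) (hT : T.PosSemidef) (u v : Fin d → ℝ) :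
    (u ⬝ᵥ (T *ᵥ v)) ^ 2 ≤ (u ⬝ᵥ (T *ᵥ u)) * (v ⬝ᵥ (T *ᵥ v)) := by
  obtain ⟨A, hA⟩ := CStarAlgebra.nonneg_iff_eq_star_mul_self.mp hT.nonneg
  rw [star_eq_conjTranspose] at hA
  subst hA
  have e : ∀ u v : Fin d → ℝ, u ⬝ᵥ ((Aᴴ * A) *ᵥ v) = (A *ᵥ u) ⬝ᵥ (A *ᵥ v) := by
    intro u v
    rw [← mulVec_mulVec, dotProduct_mulVec, conjTranspose_eq_transpose_of_trivial, vecMul_transpose]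
  simp only [e]
  exact dot_cs _ _

lemma gam_le {d : ℕ} (T : Matrix (Fin d) (Fin d) ℝ) (hT : T.PosSemidef) (x z : Fin d → ℝ)
    (hz : T *ᵥ z = x) : x ⬝ᵥ x ≤ enorm1 T * (z ⬝ᵥ x) := by
  have h := psd_cs T hT x z
  rw [hz] at h
  have h2 := quad_bd T x x
  rw [Real.mul_self_sqrt (dot_self_nonneg' _)] at h2
  have h3 : 0 ≤ z ⬝ᵥ x := by rw [← hz]; simpa using hT.dotProduct_mulVec_nonneg z
  have h4 := mul_le_mul_of_nonneg_right ((le_abs_self _).trans h2) h3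
  have h0 := dot_self_nonneg' x
  rcases h0.eq_or_lt with h5 | h5
  · rw [← h5]; exact mul_nonneg (enorm1_nonneg _) h3
  · refine le_of_mul_le_mul_right ?_ h5
    nlinarith

end

lemma Smat_posDef {Ω : Type*} {d : ℕ} (S : Matrix (Fin d) (Fin d) ℝ) (hS : S.PosDef)
    (Φ : ℕ → Ω → Fin d → ℝ) (n : ℕ) (ω : Ω) : (Smat S Φ n ω).PosDef := by
  refine hS.add_posSemidef (posSemidef_sum _ fun k _ => ?_)
  simpa using posSemidef_vecMulVec_self_star (Φ k ω)

lemma Tm_eq {Ω : Type*} {d : ℕ} (S K : Matrix (Fin d) (Fin d) ℝ) (hK : Kᵀ = K)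
    (Φ : ℕ → Ω → Fin d → ℝ) (n : ℕ) (ω : Ω) :
    Tm (K * S * K) (fun k ω => K *ᵥ Φ k ω) (n+1) ω = K * Smat S Φ n ω * K := by
  simp only [Tm, Smat, mul_add, add_mul, mul_sum, sum_mul]
  congr 1
  refine sum_congr rfl fun k _ => ?_
  rw [mul_vecMulVec, vecMulVec_mul, ← mulVec_transpose, hK]

lemma Nv_eq {Ω : Type*} {d : ℕ} (K : Matrix (Fin d) (Fin d) ℝ) (M0 : Ω → Fin d → ℝ)
    (Φ : ℕ → Ω → Fin d → ℝ) (ε : ℕ → Ω → ℝ) (n : ℕ) (ω : Ω) :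
    Nv (fun ω => K *ᵥ M0 ω) (fun k ω => K *ᵥ Φ k ω) ε n ω = K *ᵥ Mart M0 Φ ε n ω := by
  simp only [Nv, Mart, mulVec_add, mulVec_sum, mulVec_smul]

/-- **Theorem 2, first part**: convergence of the even moments in the ASCLT for
vector martingale transforms. -/
theorem key_lemma_first_part
    {Ω : Type*} {m0 : MeasurableSpace Ω} {μ : Measure Ω} [IsProbabilityMeasure μ]
    (F : Filtration ℕ m0) {d : ℕ} (hd : 0 < d)
    (ε : ℕ → Ω → ℝ) (Φ : ℕ → Ω → Fin d → ℝ) (M0 : Ω → Fin d → ℝ)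
    (S L Lhalf : Matrix (Fin d) (Fin d) ℝ) (hS : S.PosDef) (hL : L.PosDef)
    (hLhalf : Lhalf.PosDef) (hLhalfsq : Lhalf * Lhalf = L)
    (σ : ℝ) (p : ℕ) (hp : 1 ≤ p) (a : ℝ) (ha : 2 * p < a)
    (α : ℕ → Ω → ℝ)
    (hεadapt : ∀ n, StronglyMeasurable[F n] (ε n))
    (hεint : ∀ n, Integrable (ε n) μ)
    (hΦadapt : ∀ n, StronglyMeasurable[F n] (Φ n))
    (hM0 : StronglyMeasurable[F 0] M0)
    (hmds : ∀ n, μ[ε (n + 1)|F n] =ᵐ[μ] 0)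
    (hvar : ∀ n, μ[fun ω => ε (n + 1) ω ^ 2|F n] =ᵐ[μ] fun _ => σ ^ 2)
    (hmomint : ∀ n, Integrable (fun ω => |ε (n + 1) ω| ^ a) μ)
    (hmom : ∀ᵐ ω ∂μ, ∃ C : ℝ, ∀ n, (μ[fun ω => |ε (n + 1) ω| ^ a|F n]) ω ≤ C)
    (hf0 : ∀ᵐ ω ∂μ, Tendsto (fun n => expl S Φ n ω) atTop (𝓝 0))
    (hαmeas : ∀ n, Measurable (α n))
    (hαpos : ∀ n ω, 0 < α n ω)
    (hαmono : ∀ᵐ ω ∂μ, Monotone fun n => α n ω)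
    (hαtop : ∀ᵐ ω ∂μ, Tendsto (fun n => α n ω) atTop atTop)
    (hconv : ∀ᵐ ω ∂μ, Tendsto (fun n => (α n ω)⁻¹ • Smat S Φ n ω) atTop (𝓝 L)) :
    let β : ℕ → Ω → ℝ := fun n ω => (Lhalf⁻¹ * Smat S Φ n ω * Lhalf⁻¹).trace
    let γ : ℕ → Ω → ℝ := fun n ω => (β n ω - β (n - 1) ω) / β n ω
    let mseq : ℕ → Ω → ℝ :=
      fun n ω => (β (n - 1) ω)⁻¹ * (Mart M0 Φ ε n ω ⬝ᵥ (L⁻¹ *ᵥ Mart M0 Φ ε n ω))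
    ∀ᵐ ω ∂μ, Tendsto (fun n =>
      (Real.log ((Smat S Φ n ω).det))⁻¹ * ∑ k ∈ Finset.Icc 1 n, γ k ω * mseq k ω ^ p)
      atTop (𝓝 (elllim d p σ / (d : ℝ) ^ (p + 1))) := by
  intro β γ mseq
  have : Nonempty (Fin d) := ⟨⟨0, hd⟩⟩
  have hd' : (0:ℝ) < d := by exact_mod_cast hd
  set K := Lhalf⁻¹ with hKdef
  have hKpd : K.PosDef := hLhalf.inv
  have hKt : Kᵀ = K := by
    have := hKpd.isHermitian.eq
    rwa [conjTranspose_eq_transpose_of_trivial] at this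
  have hLu : IsUnit Lhalf.det := (Matrix.isUnit_iff_isUnit_det _).mp hLhalf.isUnit
  have hKL : K * Lhalf = 1 := nonsing_inv_mul _ hLu
  have hLK : Lhalf * K = 1 := mul_nonsing_inv _ hLu
  have hKK : K * K = L⁻¹ := by rw [← hLhalfsq, Matrix.mul_inv_rev]
  have hKLK : K * L * K = 1 := by
    rw [← hLhalfsq, ← mul_assoc, hKL, one_mul, hLK]
  set x : ℕ → Ω → Fin d → ℝ := fun k ω => K *ᵥ Φ k ω with hxdef
  set N0 : Ω → Fin d → ℝ := fun ω => K *ᵥ M0 ω with hN0def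
  set T0 := K * S * K with hT0def
  have hpdc : ∀ A : Matrix (Fin d) (Fin d) ℝ, A.PosDef → (K * A * K).PosDef := by
    intro A hA
    have h := hA.mul_mul_conjTranspose_same (B := K) (Matrix.vecMul_injective_iff_isUnit.mpr hKpd.isUnit)
    rwa [conjTranspose_eq_transpose_of_trivial, hKt] at h
  have hT0 : 0 < T0.trace := (hpdc S hS).trace_pos
  have hTm : ∀ n ω, Tm T0 x (n+1) ω = K * Smat S Φ n ω * K := Tm_eq S K hKt Φ
  have hbt : ∀ n ω, bt T0 x (n+1) ω = β n ω := fun n ω => by rw [bt, hTm]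
  have bp := bt_pos T0 hT0 x
  have hNv : ∀ n ω, Nv N0 x ε n ω ⬝ᵥ Nv N0 x ε n ω = Mart M0 Φ ε n ω ⬝ᵥ (L⁻¹ *ᵥ Mart M0 Φ ε n ω) := by
    intro n ω
    have e : ∀ v : Fin d → ℝ, (K *ᵥ v) ⬝ᵥ (K *ᵥ v) = v ⬝ᵥ (L⁻¹ *ᵥ v) := by
      intro v
      rw [← hKK, ← mulVec_mulVec, dotProduct_mulVec v K (K *ᵥ v), ← mulVec_transpose, hKt]
    rw [show Nv N0 x ε n ω = K *ᵥ Mart M0 Φ ε n ω from Nv_eq K M0 Φ ε n ω, e]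
  have hSpd := Smat_posDef S hS Φ
  -- pathwise convergences
  have hTconv : ∀ᵐ ω ∂μ, Tendsto (fun n => (α n ω)⁻¹ • Tm T0 x (n+1) ω) atTop (𝓝 1) := by
    filter_upwards [hconv] with ω h
    have hc : Continuous (fun A : Matrix (Fin d) (Fin d) ℝ => K * A * K) := by fun_prop
    have h1 := (hc.tendsto L).comp h
    rw [hKLK] at h1
    refine h1.congr fun n => ?_
    simp only [Function.comp, hTm, mul_smul_comm, smul_mul_assoc]
  have hβα : ∀ᵐ ω ∂μ, Tendsto (fun n => bt T0 x (n+1) ω / α n ω) atTop (𝓝 (d:ℝ)) := by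
    filter_upwards [hTconv] with ω h
    have hc : Continuous (fun A : Matrix (Fin d) (Fin d) ℝ => A.trace) := by fun_prop
    have h1 := (hc.tendsto 1).comp h
    simp only [trace_one, Fintype.card_fin] at h1
    refine h1.congr fun n => ?_
    simp only [Function.comp, trace_smul, smul_eq_mul, bt]
    ring
  have hTb : ∀ᵐ ω ∂μ, Tendsto (fun n => (bt T0 x n ω)⁻¹ • Tm T0 x n ω) atTop
      (𝓝 ((1/(d:ℝ)) • (1 : Matrix (Fin d) (Fin d) ℝ))) := by
    filter_upwards [hTconv, hβα] with ω h1 h2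
    rw [← tendsto_add_atTop_iff_nat 1]
    have h3 := (h2.inv₀ hd'.ne').smul h1
    rw [one_div]
    refine h3.congr fun n => ?_
    have := (hαpos n ω).ne'
    rw [smul_smul, inv_div]
    congr 1
    have := (bp (n+1) ω).ne'
    field_simp
  have het : ∀ᵐ ω ∂μ, Tendsto (fun n => enorm1 (Em T0 x n ω)) atTop (𝓝 0) := by
    filter_upwards [hTb] with ω h
    have hc : Continuous (fun A : Matrix (Fin d) (Fin d) ℝ =>
        enorm1 (A - (1/(d:ℝ)) • (1 : Matrix (Fin d) (Fin d) ℝ))) := by unfold enorm1; fun_prop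
    have h1 := (hc.tendsto _).comp h
    have e : enorm1 ((1/(d:ℝ)) • (1 : Matrix (Fin d) (Fin d) ℝ) - (1/(d:ℝ)) • (1 : Matrix (Fin d) (Fin d) ℝ)) = 0 := by
      rw [sub_self]; simp [enorm1]
    rw [e] at h1
    exact h1
  have hγle : ∀ n ω, (x n ω ⬝ᵥ x n ω) / bt T0 x (n+1) ω ≤
      enorm1 ((bt T0 x (n+1) ω)⁻¹ • Tm T0 x (n+1) ω) * expl S Φ n ω := by
    intro n ω
    have hpd : (Tm T0 x (n+1) ω).PosDef := by rw [hTm]; exact hpdc _ (hSpd n ω)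
    have hSu : IsUnit (Smat S Φ n ω).det := (Matrix.isUnit_iff_isUnit_det _).mp (hSpd n ω).isUnit
    have hz : Tm T0 x (n+1) ω *ᵥ (Lhalf *ᵥ ((Smat S Φ n ω)⁻¹ *ᵥ Φ n ω)) = x n ω := by
      rw [hTm, mulVec_mulVec, mulVec_mulVec, mul_assoc (K * Smat S Φ n ω), hKL, mul_one,
        mul_assoc K, mul_nonsing_inv _ hSu, mul_one]
    have h1 := gam_le _ hpd.posSemidef _ _ hz
    have e1 : (Lhalf *ᵥ ((Smat S Φ n ω)⁻¹ *ᵥ Φ n ω)) ⬝ᵥ x n ω = expl S Φ n ω := by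
      simp only [hxdef, expl]
      have hLt : Lhalfᵀ = Lhalf := by
        have := hLhalf.isHermitian.eq
        rwa [conjTranspose_eq_transpose_of_trivial] at this
      rw [dotProduct_mulVec, ← mulVec_transpose, hKt, mulVec_mulVec, hKL, one_mulVec, dotProduct_comm]
    rw [e1] at h1
    have e2 : enorm1 ((bt T0 x (n+1) ω)⁻¹ • Tm T0 x (n+1) ω) = enorm1 (Tm T0 x (n+1) ω) / bt T0 x (n+1) ω := by
      simp only [enorm1, Matrix.smul_apply, smul_eq_mul, abs_mul, ← mul_sum,
        abs_of_pos (inv_pos.mpr (bp (n+1) ω))]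
      rw [div_eq_inv_mul]
    rw [e2, div_mul_eq_mul_div]
    exact div_le_div_of_nonneg_right h1 (bp _ _).le
  have hγt : ∀ᵐ ω ∂μ, Tendsto (fun n => (x n ω ⬝ᵥ x n ω) / bt T0 x (n+1) ω) atTop (𝓝 0) := by
    filter_upwards [hTb, hf0] with ω h1 h2
    have hc : Continuous (fun A : Matrix (Fin d) (Fin d) ℝ => enorm1 A) := by unfold enorm1; fun_prop
    have h3 := ((hc.tendsto _).comp ((tendsto_add_atTop_iff_nat 1).mpr h1)).mul h2
    rw [mul_zero] at h3
    exact squeeze_zero (fun n => div_nonneg (dot_self_nonneg' _) (bp _ _).le) (fun n => hγle n ω) h3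
  have hγe : ∀ n ω, (x n ω ⬝ᵥ x n ω) / bt T0 x (n+1) ω = (bt T0 x (n+1) ω - bt T0 x n ω) / bt T0 x (n+1) ω := by
    intro n ω
    congr 1
    have := bt_succ T0 x n ω
    linarith
  have hlog : ∀ᵐ ω ∂μ, Tendsto (fun n => Real.log (Smat S Φ n ω).det / Real.log (bt T0 x (n+1) ω)) atTop (𝓝 (d:ℝ))
      ∧ Tendsto (fun n => bt T0 x (n+1) ω) atTop atTop := by
    filter_upwards [hconv, hβα, hαtop] with ω h1 h2 h3
    refine logdet d hd _ _ (fun n => α n ω) (fun n => (hSpd n ω).det_pos) (fun n => bp (n+1) ω)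
      (fun n => hαpos n ω) h3 L.det hL.det_pos ?_ h2
    have hc : Continuous (fun A : Matrix (Fin d) (Fin d) ℝ => A.det) := by fun_prop
    have h4 := (hc.tendsto _).comp h1
    refine h4.congr fun n => ?_
    simp only [Function.comp, det_smul, Fintype.card_fin, inv_pow]
    rw [div_eq_inv_mul]
  have hAl : ∀ᵐ ω ∂μ, Tendsto (fun n => Aseq (fun k => (x k ω ⬝ᵥ x k ω) / bt T0 x (k+1) ω) n / Real.log (bt T0 x n ω))
      atTop (𝓝 1) ∧ Tendsto (fun n => bt T0 x n ω) atTop atTop := by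
    filter_upwards [hlog, hγt] with ω h1 h2
    have h3 : Tendsto (fun n => bt T0 x n ω) atTop atTop := (tendsto_add_atTop_iff_nat 1).mp h1.2
    refine ⟨?_, h3⟩
    simp only [hγe] at h2 ⊢
    refine A_log (fun n => bt T0 x n ω) (fun n => bp n ω) (monotone_nat_of_le_succ fun n => ?_) h3 h2
    rw [bt_succ]; linarith [dot_self_nonneg' (x n ω)]
  have hAt : ∀ᵐ ω ∂μ, Tendsto (fun n => Aseq (fun k => (x k ω ⬝ᵥ x k ω) / bt T0 x (k+1) ω) n) atTop atTop := by
    filter_upwards [hAl] with ω h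
    exact A_top _ h.2 _ h.1
  have hcK : Continuous (fun v : Fin d → ℝ => K *ᵥ v) := by fun_prop
  have C := core_inst F hd ε x N0 T0 hT0 σ a hεadapt hεint
    (fun n => hcK.comp_stronglyMeasurable (hΦadapt n)) (hcK.comp_stronglyMeasurable hM0)
    hmds hvar hmomint hmom hγt hAt het
  have hmain := C.main (by exact_mod_cast hd) p ha
  filter_upwards [hmain, hAl, hAt, hlog] with ω h1 h2 h3 h4
  set A := Aseq (fun k => (x k ω ⬝ᵥ x k ω) / bt T0 x (k+1) ω) with hA
  set t : ℕ → ℝ := fun k => (x k ω ⬝ᵥ x k ω) / bt T0 x (k+1) ω *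
    ((Nv N0 x ε k ω ⬝ᵥ Nv N0 x ε k ω) / bt T0 x k ω) ^ p with ht
  have hterm : ∀ k, γ (k+1) ω * mseq (k+1) ω ^ p = t (k+1) := by
    intro k
    simp only [ht, γ, mseq, Nat.add_sub_cancel]
    rw [hγe, hNv, hbt, hbt]
    congr 2
    rw [div_eq_inv_mul]
  have hsum : ∀ n, ∑ k ∈ Finset.Icc 1 n, γ k ω * mseq k ω ^ p = ∑ k ∈ range (n+1), t k - t 0 := by
    intro n
    induction n with
    | zero => simp
    | succ n ih => rw [sum_Icc_succ_top (by omega), ih, hterm, sum_range_succ t (n+1)]; ring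
  have hApos : ∀ n, 1 ≤ A n := Aseq_ge _ (fun k => C.hγ0 k ω)
  have g1 : Tendsto (fun n => (∑ k ∈ range n, t k - t 0) / A n) atTop (𝓝 (ccf σ d p)) := by
    have := ((h1.sub (const_isLittleO A h3 (t 0))).tendsto_div_nhds_zero).add_const (ccf σ d p)
    rw [zero_add] at this
    refine this.congr fun n => ?_
    have hn : A n ≠ 0 := by linarith [hApos n]
    field_simp
    ring
  have g2 := ((tendsto_add_atTop_iff_nat 1).mpr h2.1).div h4.1 hd'.ne'
  have g3 := g2.mul ((tendsto_add_atTop_iff_nat 1).mpr g1)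
  have elim : 1 / (d:ℝ) * ccf σ d p = elllim d p σ / (d:ℝ) ^ (p+1) := by
    obtain ⟨n, rfl⟩ : ∃ n, p = n + 1 := ⟨p - 1, by omega⟩
    rw [← ccf_eq d hd]
    field_simp
    try ring
  rw [elim] at g3
  refine g3.congr' ?_
  have hlt : Tendsto (fun n => Real.log (bt T0 x (n+1) ω)) atTop atTop := Real.tendsto_log_atTop.comp h4.2
  filter_upwards [hlt.eventually_gt_atTop 0] with n hn
  rw [hsum]
  have hn1 : A (n+1) ≠ 0 := by linarith [hApos (n+1)]
  simp only [Pi.div_apply]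
  generalize Real.log (bt T0 x (n+1) ω) = l at hn
  generalize Real.log (Smat S Φ n ω).det = D
  by_cases hD : D = 0
  · simp [hD]
  · field_simp
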